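/- arXiv:1107.2704 — 3 statements merged into one kernel-verified Lean document; each statement's English description precedes it below -/
import Mathlib

section
/- Let μ, λ, V₀, α ∈ ℝ and let φ ∈ H¹(ℝ) be a solution of −φ'' + ξ²φ + λ|φ|²φ − V₀cos²(αξ)φ = μφ. Then φ ∈ C²(ℝ) and for every δ ∈ (0,1) there exists C(δ) > 0 such that |φ(ξ)| ≤ C(δ) exp(−(1−δ)ξ²/2) for all ξ ∈ ℝ. Moreover, if λ > 0 and μ < 1 − |V₀|, the inequality holds with δ = 0. -/
open MeasureTheory Real

/-- `φ : ℝ → ℂ` is an `H¹` solution of the stationary Gross–Pitaevskii equation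
`-φ'' + ξ²φ + λ|φ|²φ - V₀cos²(αξ)φ = μφ`. -/
def IsGPSolutionC (μ lam V₀ α : ℝ) (φ : ℝ → ℂ) : Prop :=
  Differentiable ℝ φ ∧ Differentiable ℝ (deriv φ) ∧
  Integrable (fun ξ : ℝ => ‖φ ξ‖ ^ 2) ∧
  Integrable (fun ξ : ℝ => ‖deriv φ ξ‖ ^ 2) ∧
  ∀ ξ : ℝ, -deriv (deriv φ) ξ + (ξ ^ 2 : ℝ) * φ ξ + (lam : ℂ) * (‖φ ξ‖ ^ 2 : ℝ) * φ ξ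
      - (V₀ : ℂ) * (Real.cos (α * ξ) ^ 2 : ℝ) * φ ξ = (μ : ℂ) * φ ξ

/-- One-sided decay: comparison with a Gaussian on the half line. -/
lemma half_line_decay (c R : ℝ) (hc : 0 < c) (hR : 1 ≤ R) (a : ℝ → ℝ) (f f1 : ℝ → ℂ)
    (h1 : ∀ x, HasDerivAt f (f1 x) x) (h2 : ∀ x, HasDerivAt f1 (a x • f x) x)
    (ha : ∀ x, R ≤ x → c ^ 2 * x ^ 2 - c ≤ a x)
    (i0 : Integrable (fun x : ℝ => ‖f x‖ ^ 2)) (i1 : Integrable (fun x : ℝ => ‖f1 x‖ ^ 2)) :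
    ∃ K : ℝ, 0 < K ∧ ∀ x, 0 ≤ x → ‖f x‖ ^ 2 ≤ K * Real.exp (-(c * x ^ 2)) := by
  have hu : ∀ x, HasDerivAt (fun x => ‖f x‖ ^ 2) (2 * inner ℝ (f x) (f1 x)) x :=
    fun x => (h1 x).norm_sq
  set W : ℝ → ℝ := fun x => 2 * inner ℝ (f x) (f1 x) + 2 * c * x * ‖f x‖ ^ 2 with hW
  have hWd : ∀ x, HasDerivAt W (2 * ‖f1 x + (c * x) • f x‖ ^ 2
      + 2 * (a x - (c ^ 2 * x ^ 2 - c)) * ‖f x‖ ^ 2) x := by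
    intro x
    have e1 := (((h1 x).inner ℝ (h2 x)).const_mul 2).add
      (((hasDerivAt_id x).const_mul (2 * c)).mul (hu x))
    refine HasDerivAt.congr_deriv (f := W) e1 ?_
    rw [norm_add_sq_real, norm_smul, inner_smul_right, inner_smul_right, real_inner_self_eq_norm_sq,
      real_inner_self_eq_norm_sq, mul_pow, Real.norm_eq_abs, sq_abs, real_inner_comm (f x) (f1 x)]
    simp only [id]
    ring
  have hWm : MonotoneOn W (Set.Ici R) := by
    apply monotoneOn_of_deriv_nonneg (convex_Ici R)
    · exact fun x _ => (hWd x).continuousAt.continuousWithinAt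
    · exact fun x _ => (hWd x).differentiableAt.differentiableWithinAt
    · intro x hx
      rw [interior_Ici] at hx
      rw [(hWd x).deriv]
      have := ha x (le_of_lt hx)
      have h3 : 0 ≤ a x - (c ^ 2 * x ^ 2 - c) := by linarith
      positivity
  have hWneg : ∀ x, R ≤ x → W x ≤ 0 := by
    intro x hx
    by_contra! hpos
    have hx0 : 0 < x := by linarith
    have hint : IntegrableOn (fun y : ℝ => (W x)⁻¹ * ((1 + 2 * c) * ‖f y‖ ^ 2 + ‖f1 y‖ ^ 2))
        (Set.Ioi x) :=
      (((i0.const_mul (1 + 2 * c)).add i1).const_mul (W x)⁻¹).integrableOn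
    refine not_integrableOn_Ioi_inv (a := x) (hint.mono' ?_ ?_)
    · exact measurable_inv.aestronglyMeasurable
    · refine (ae_restrict_iff' measurableSet_Ioi).2 (Filter.Eventually.of_forall fun y hy => ?_)
      have hy' : x < y := hy
      have hy0 : 0 < y := by linarith
      have hm : W x ≤ W y := hWm hx (by simp; linarith) hy'.le
      rw [Real.norm_eq_abs, abs_of_pos (inv_pos.2 hy0), inv_mul_eq_div, le_div_iff₀ hpos,
        inv_mul_le_iff₀ hy0]
      refine hm.trans ?_
      have hi : inner ℝ (f y) (f1 y) ≤ ‖f y‖ * ‖f1 y‖ := real_inner_le_norm _ _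
      have hy1 : 1 ≤ y := by linarith
      have h5 : 2 * (‖f y‖ * ‖f1 y‖) ≤ ‖f y‖ ^ 2 + ‖f1 y‖ ^ 2 := by
        nlinarith [sq_nonneg (‖f y‖ - ‖f1 y‖)]
      have h6 : ‖f y‖ ^ 2 + ‖f1 y‖ ^ 2 ≤ y * (‖f y‖ ^ 2 + ‖f1 y‖ ^ 2) :=
        le_mul_of_one_le_left (by positivity) hy1
      simp only [hW]
      linarith
  set q : ℝ → ℝ := fun x => ‖f x‖ ^ 2 * Real.exp (c * x ^ 2) with hq
  have hqd : ∀ x, HasDerivAt q (Real.exp (c * x ^ 2) * W x) x := by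
    intro x
    have e1 := (hu x).mul (((hasDerivAt_pow 2 x).const_mul c).exp)
    refine HasDerivAt.congr_deriv (f := q) e1 ?_
    simp only [hW]
    push_cast
    ring
  have hqc : Continuous q := continuous_iff_continuousAt.2 fun x => (hqd x).continuousAt
  have hqa : AntitoneOn q (Set.Ici R) := by
    apply antitoneOn_of_deriv_nonpos (convex_Ici R) hqc.continuousOn
    · exact fun x _ => (hqd x).differentiableAt.differentiableWithinAt
    · intro x hx
      rw [interior_Ici] at hx
      rw [(hqd x).deriv]
      exact mul_nonpos_of_nonneg_of_nonpos (Real.exp_pos _).le (hWneg x (le_of_lt hx))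
  obtain ⟨K, hK⟩ := (isCompact_Icc (a := (0:ℝ)) (b := R)).bddAbove_image hqc.continuousOn
  have hK' : ∀ x, 0 ≤ x → x ≤ R → q x ≤ K := fun x hx hx' => hK ⟨x, ⟨hx, hx'⟩, rfl⟩
  refine ⟨max K 1, by positivity, fun x hx => ?_⟩
  have hqK : q x ≤ max K 1 := by
    refine le_trans ?_ (le_max_left _ _)
    rcases le_total x R with h | h
    · exact hK' x hx h
    · exact (hqa (Set.mem_Ici.2 le_rfl) h h).trans (hK' R (by linarith) le_rfl)
  rw [Real.exp_neg, ← div_eq_mul_inv, le_div_iff₀ (Real.exp_pos _)]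
  exact hqK

/-- `H¹` functions are bounded. -/
lemma bounded_of_h1 (f f1 : ℝ → ℂ) (h1 : ∀ x, HasDerivAt f (f1 x) x) (hc : Continuous f1)
    (i0 : Integrable (fun x : ℝ => ‖f x‖ ^ 2)) (i1 : Integrable (fun x : ℝ => ‖f1 x‖ ^ 2)) :
    ∃ M : ℝ, 0 ≤ M ∧ ∀ x, ‖f x‖ ^ 2 ≤ M := by
  have hu : ∀ x, HasDerivAt (fun x => ‖f x‖ ^ 2) (2 * inner ℝ (f x) (f1 x)) x :=
    fun x => (h1 x).norm_sq
  have hf : Continuous f := continuous_iff_continuousAt.2 fun x => (h1 x).continuousAt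
  have hcont : Continuous fun x => 2 * inner ℝ (f x) (f1 x) := by fun_prop
  have hb : ∀ x, ‖2 * inner ℝ (f x) (f1 x)‖ ≤ ‖f x‖ ^ 2 + ‖f1 x‖ ^ 2 := by
    intro x
    rw [Real.norm_eq_abs, abs_mul, abs_two]
    have hi := abs_real_inner_le_norm (f x) (f1 x)
    nlinarith [sq_nonneg (‖f x‖ - ‖f1 x‖)]
  have hg := i0.add i1
  have hint : Integrable (fun x => 2 * inner ℝ (f x) (f1 x)) :=
    hg.mono' hcont.aestronglyMeasurable (Filter.Eventually.of_forall hb)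
  refine ⟨‖f 0‖ ^ 2 + ∫ x, ‖2 * inner ℝ (f x) (f1 x)‖, by positivity, fun x => ?_⟩
  have e := intervalIntegral.integral_eq_sub_of_hasDerivAt (a := 0) (b := x) (fun y _ => hu y)
    (hcont.intervalIntegrable _ _)
  have e2 := intervalIntegral.norm_integral_le_integral_norm_uIoc
    (f := fun x => 2 * inner ℝ (f x) (f1 x)) (a := 0) (b := x) (μ := volume)
  have e3 := setIntegral_le_integral (s := Set.uIoc 0 x) hint.norm
    (Filter.Eventually.of_forall fun y => norm_nonneg _)
  rw [e, Real.norm_eq_abs] at e2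
  have := le_abs_self (‖f x‖ ^ 2 - ‖f 0‖ ^ 2)
  linarith

/-- Two-sided decay. -/
lemma full_line_decay (c R : ℝ) (hc : 0 < c) (hR : 1 ≤ R) (a : ℝ → ℝ) (f f1 : ℝ → ℂ)
    (h1 : ∀ x, HasDerivAt f (f1 x) x) (h2 : ∀ x, HasDerivAt f1 (a x • f x) x)
    (ha : ∀ x, R ≤ |x| → c ^ 2 * x ^ 2 - c ≤ a x)
    (i0 : Integrable (fun x : ℝ => ‖f x‖ ^ 2)) (i1 : Integrable (fun x : ℝ => ‖f1 x‖ ^ 2)) :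
    ∃ C : ℝ, 0 < C ∧ ∀ x, ‖f x‖ ≤ C * Real.exp (-c * x ^ 2 / 2) := by
  obtain ⟨K, hK, H⟩ := half_line_decay c R hc hR a f f1 h1 h2
    (fun x hx => ha x (hx.trans (le_abs_self x))) i0 i1
  have hn : ∀ x : ℝ, HasDerivAt (fun y : ℝ => -y) (-1) x := fun x => hasDerivAt_neg x
  obtain ⟨L, hL, H'⟩ := half_line_decay c R hc hR (fun x => a (-x)) (fun x => f (-x))
    (fun x => -f1 (-x))
    (fun x => by
      have := (h1 (-x)).scomp x (hn x)
      simpa [Function.comp_def] using this)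
    (fun x => by
      have := ((h2 (-x)).scomp x (hn x)).neg
      refine HasDerivAt.congr_deriv (f := fun x => -f1 (-x)) this ?_
      simp)
    (fun x hx => by
      have := ha (-x) (by rw [abs_neg]; exact hx.trans (le_abs_self x))
      simpa using this)
    i0.comp_neg (by simpa using i1.comp_neg)
  have key : ∀ x, ‖f x‖ ^ 2 ≤ max K L * Real.exp (-(c * x ^ 2)) := by
    intro x
    rcases le_total 0 x with h | h
    · exact (H x h).trans (by gcongr; exact le_max_left _ _)
    · have := H' (-x) (by linarith)
      simp only [neg_neg, neg_sq] at this
      exact this.trans (by gcongr; exact le_max_right _ _)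
  have hm : 0 < max K L := lt_max_of_lt_left hK
  refine ⟨√(max K L), Real.sqrt_pos.2 hm, fun x => ?_⟩
  refine (sq_le_sq₀ (norm_nonneg _) (by positivity)).1 ?_
  rw [mul_pow, Real.sq_sqrt hm.le, ← Real.exp_nat_mul]
  have e : ((2 : ℕ) : ℝ) * (-c * x ^ 2 / 2) = -(c * x ^ 2) := by
    push_cast
    ring
  rw [e]
  exact key x

theorem gaussian_decay_of_solutions (μ lam V₀ α : ℝ) (φ : ℝ → ℂ)
    (hφ : IsGPSolutionC μ lam V₀ α φ) :
    ContDiff ℝ 2 φ ∧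
    (∀ δ : ℝ, δ ∈ Set.Ioo (0 : ℝ) 1 → ∃ C : ℝ, 0 < C ∧
      ∀ ξ : ℝ, ‖φ ξ‖ ≤ C * Real.exp (-(1 - δ) * ξ ^ 2 / 2)) ∧
    (0 < lam → μ < 1 - |V₀| → ∃ C : ℝ, 0 < C ∧
      ∀ ξ : ℝ, ‖φ ξ‖ ≤ C * Real.exp (-ξ ^ 2 / 2)) := by
  obtain ⟨d0, d1, i0, i1, heq⟩ := hφ
  set a : ℝ → ℝ := fun x => x ^ 2 + lam * ‖φ x‖ ^ 2 - V₀ * Real.cos (α * x) ^ 2 - μ with ha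
  have hdd : ∀ x, deriv (deriv φ) x = a x • φ x := by
    intro x
    rw [Complex.real_smul]
    simp only [ha]
    have := heq x
    push_cast at this ⊢
    linear_combination -this
  have h1 : ∀ x, HasDerivAt φ (deriv φ x) x := fun x => (d0 x).hasDerivAt
  have h2 : ∀ x, HasDerivAt (deriv φ) (a x • φ x) x := fun x => by
    rw [← hdd]; exact (d1 x).hasDerivAt
  have hcos : ∀ x, V₀ * Real.cos (α * x) ^ 2 ≤ |V₀| := fun x => by
    have h3 := Real.cos_sq_le_one (α * x)
    calc V₀ * Real.cos (α * x) ^ 2 ≤ |V₀| * Real.cos (α * x) ^ 2 := by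
          gcongr; exact le_abs_self _
      _ ≤ |V₀| * 1 := by gcongr
      _ = |V₀| := mul_one _
  refine ⟨?_, ?_, ?_⟩
  · have hcd : Continuous (deriv (deriv φ)) := by
      have : deriv (deriv φ) = fun x => a x • φ x := funext hdd
      rw [this]
      have := d0.continuous
      simp only [ha]
      fun_prop
    have : ContDiff ℝ 1 (deriv φ) := contDiff_one_iff_deriv.2 ⟨d1, hcd⟩
    rw [show (2 : WithTop ℕ∞) = 1 + 1 by norm_num, contDiff_succ_iff_deriv]
    exact ⟨d0, by simp, this⟩
  · rintro δ ⟨hδ0, hδ1⟩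
    obtain ⟨M, hM0, hM⟩ := bounded_of_h1 φ (deriv φ) h1 d1.continuous i0 i1
    have hden : 0 < 1 - (1 - δ) ^ 2 := by nlinarith
    set B := |lam| * M + |V₀| + |μ| with hB
    refine full_line_decay (1 - δ) (max 1 (B / (1 - (1 - δ) ^ 2))) (by linarith)
      (le_max_left _ _) a φ (deriv φ) h1 h2 (fun x hx => ?_) i0 i1
    have hx1 : 1 ≤ |x| := (le_max_left _ _).trans hx
    have hx2 := (le_max_right _ _).trans hx
    rw [div_le_iff₀ hden] at hx2
    have hx3 : |x| ≤ x ^ 2 := by rw [← sq_abs]; nlinarith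
    have hx4 : |x| * (1 - (1 - δ) ^ 2) ≤ x ^ 2 * (1 - (1 - δ) ^ 2) := by gcongr
    have hl : -(|lam| * M) ≤ lam * ‖φ x‖ ^ 2 := by
      have := hM x
      have h5 : |lam| * ‖φ x‖ ^ 2 ≤ |lam| * M := by gcongr
      have h6 : -|lam| * ‖φ x‖ ^ 2 ≤ lam * ‖φ x‖ ^ 2 := by
        gcongr; exact neg_abs_le _
      linarith
    have := hcos x
    have := le_abs_self μ
    simp only [ha]
    linarith
  · intro hl hμ
    have := full_line_decay 1 1 one_pos le_rfl a φ (deriv φ) h1 h2 (fun x _ => by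
      have := hcos x
      have : 0 ≤ lam * ‖φ x‖ ^ 2 := by positivity
      simp only [ha]
      linarith) i0 i1
    simpa using this
end

section
/- For any λ, V₀, α ∈ ℝ, there exists ψ_min ∈ Σ₁ minimizing the energy E over Σ₁: E(ψ_min) = inf{E(ψ) : ψ ∈ Σ₁}, where E(ψ) = ∫|ψ'|² + ∫ξ²|ψ|² + (λ/2)∫|ψ|⁴ − V₀∫cos²(αξ)|ψ|². -/
open MeasureTheory Real

/-- Membership in the energy space `X`. -/
def InX (ψ : ℝ → ℂ) : Prop :=
  Differentiable ℝ ψ ∧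
  Integrable (fun ξ : ℝ => ‖ψ ξ‖ ^ 2) ∧
  Integrable (fun ξ : ℝ => ‖deriv ψ ξ‖ ^ 2) ∧
  Integrable (fun ξ : ℝ => ξ ^ 2 * ‖ψ ξ‖ ^ 2) ∧
  Integrable (fun ξ : ℝ => ‖ψ ξ‖ ^ 4)

/-- Membership in the unit-charge constraint manifold `Σ₁`. -/
def InSigma1 (ψ : ℝ → ℂ) : Prop := InX ψ ∧ (∫ ξ : ℝ, ‖ψ ξ‖ ^ 2) = 1

/-- The Gross–Pitaevskii energy functional. -/
noncomputable def energy (lam V₀ α : ℝ) (ψ : ℝ → ℂ) : ℝ :=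
  (∫ ξ : ℝ, ‖deriv ψ ξ‖ ^ 2) + (∫ ξ : ℝ, ξ ^ 2 * ‖ψ ξ‖ ^ 2)
    + lam / 2 * (∫ ξ : ℝ, ‖ψ ξ‖ ^ 4)
    - V₀ * (∫ ξ : ℝ, Real.cos (α * ξ) ^ 2 * ‖ψ ξ‖ ^ 2)

open Filter Topology Set

/-- squared L2 norm -/
noncomputable def I2 (f : ℝ → ℂ) : ℝ := ∫ x, ‖f x‖ ^ 2

lemma I2_nonneg (f : ℝ → ℂ) : 0 ≤ I2 f := integral_nonneg fun _ => by positivity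

lemma memLp_of_int {f : ℝ → ℂ} (hm : AEStronglyMeasurable f volume)
    (h : Integrable (fun x => ‖f x‖ ^ 2)) : MemLp f 2 volume :=
  (memLp_two_iff_integrable_sq_norm hm).2 h

lemma int_of_memLp {f : ℝ → ℂ} (h : MemLp f 2 volume) : Integrable (fun x => ‖f x‖ ^ 2) :=
  (memLp_two_iff_integrable_sq_norm h.1).1 h

lemma I2_congr {f g : ℝ → ℂ} (h : f =ᵐ[volume] g) : I2 f = I2 g :=
  integral_congr_ae (by filter_upwards [h] with x hx; simp [hx])

lemma cs_int {f g : ℝ → ℂ} (hf : MemLp f 2 volume) (hg : MemLp g 2 volume) :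
    Integrable (fun x => ‖f x‖ * ‖g x‖) :=
  hf.norm.integrable_mul hg.norm

lemma cs {f g : ℝ → ℂ} (hf : MemLp f 2 volume) (hg : MemLp g 2 volume) :
    ∫ x, ‖f x‖ * ‖g x‖ ≤ √(I2 f) * √(I2 g) := by
  have h := integral_mul_le_Lp_mul_Lq_of_nonneg (μ := (volume : Measure ℝ))
    (f := fun x => ‖f x‖) (g := fun x => ‖g x‖) (Real.HolderConjugate.two_two)
    (Eventually.of_forall fun _ => norm_nonneg _) (Eventually.of_forall fun _ => norm_nonneg _)
    (by simpa using hf.norm) (by simpa using hg.norm)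
  simpa [I2, Real.sqrt_eq_rpow] using h

lemma I2_toLp {f : ℝ → ℂ} (hf : MemLp f 2 volume) : √(I2 f) = ‖hf.toLp f‖ := by
  have h : I2 f = ‖hf.toLp f‖ ^ 2 := by
    have := L2.integral_inner_eq_sq_eLpNorm (𝕜 := ℂ) (hf.toLp f)
    rw [← @inner_self_eq_norm_sq ℂ, L2.inner_def]
    have h2 : ∫ a, (inner ℂ (hf.toLp f a) (hf.toLp f a)) = ∫ a, ((‖f a‖ ^ 2 : ℝ) : ℂ) := by
      apply integral_congr_ae
      filter_upwards [hf.coeFn_toLp] with x hx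
      rw [hx, inner_self_eq_norm_sq_to_K]; simp
    rw [h2, integral_complex_ofReal]; rfl
  rw [h, Real.sqrt_sq (norm_nonneg _)]

lemma I2_complete {f : ℕ → ℝ → ℂ} (hf : ∀ n, MemLp (f n) 2 volume)
    (hc : Tendsto (fun p : ℕ × ℕ => I2 (f p.1 - f p.2)) (atTop ×ˢ atTop) (𝓝 0)) :
    ∃ g, MemLp g 2 volume ∧ Tendsto (fun n => I2 (f n - g)) atTop (𝓝 0) := by
  have hC : CauchySeq (fun n => (hf n).toLp (f n)) := by
    rw [cauchySeq_iff_tendsto_dist_atTop_0, ← prod_atTop_atTop_eq]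
    have := (Real.continuous_sqrt.tendsto 0).comp hc
    rw [Real.sqrt_zero] at this
    refine this.congr fun p => ?_
    simp only [Function.comp]
    rw [I2_toLp ((hf _).sub (hf _)), dist_eq_norm, MemLp.toLp_sub]
  obtain ⟨g, hg⟩ := cauchySeq_tendsto_of_complete hC
  refine ⟨g, Lp.memLp g, ?_⟩
  have h1 : Tendsto (fun n => ‖(hf n).toLp (f n) - g‖ ^ 2) atTop (𝓝 0) := by
    have := ((tendsto_iff_norm_sub_tendsto_zero.1 hg).pow 2)
    simpa using this
  refine h1.congr fun n => ?_
  have : (hf n).toLp (f n) - g = ((hf n).sub (Lp.memLp g)).toLp := by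
    rw [MemLp.toLp_sub (hf n) (Lp.memLp g), Lp.toLp_coeFn]
  rw [this, ← I2_toLp, Real.sq_sqrt (I2_nonneg _)]

lemma I2_unique {f : ℕ → ℝ → ℂ} (hf : ∀ n, MemLp (f n) 2 volume) {g h : ℝ → ℂ}
    (hg : MemLp g 2 volume) (ht : Tendsto (fun n => I2 (f n - g)) atTop (𝓝 0))
    (hp : ∀ x, Tendsto (fun n => f n x) atTop (𝓝 (h x))) : g =ᵐ[volume] h := by
  have h1 : Tendsto (fun n => (hf n).toLp (f n)) atTop (𝓝 (hg.toLp g)) := by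
    rw [tendsto_iff_norm_sub_tendsto_zero]
    have := (Real.continuous_sqrt.tendsto 0).comp ht
    rw [Real.sqrt_zero] at this
    refine this.congr fun n => ?_
    simp only [Function.comp]
    rw [I2_toLp ((hf _).sub hg), MemLp.toLp_sub]
  obtain ⟨ns, hns, hns2⟩ := (tendstoInMeasure_of_tendsto_Lp h1).exists_seq_tendsto_ae
  have h2 : ∀ᵐ x, ∀ n, (hf n).toLp (f n) x = f n x :=
    ae_all_iff.2 fun n => (hf n).coeFn_toLp
  filter_upwards [hns2, h2, hg.coeFn_toLp] with x a b c
  rw [c] at a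
  have a' : Tendsto (fun i => f (ns i) x) atTop (𝓝 (g x)) := by
    refine a.congr fun i => b _
  exact tendsto_nhds_unique a' ((hp x).comp hns.tendsto_atTop)

lemma I2_tri {f g : ℝ → ℂ} (hf : MemLp f 2 volume) (hg : MemLp g 2 volume) :
    √(I2 (f + g)) ≤ √(I2 f) + √(I2 g) := by
  rw [I2_toLp hf, I2_toLp hg, I2_toLp (hf.add hg), MemLp.toLp_add]
  exact norm_add_le _ _

lemma I2_smul (c : ℂ) (f : ℝ → ℂ) : I2 (c • f) = ‖c‖ ^ 2 * I2 f := by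
  simp [I2, mul_pow, integral_const_mul]

lemma I2_para {f g : ℝ → ℂ} (hf : MemLp f 2 volume) (hg : MemLp g 2 volume) :
    I2 (f + g) + I2 (f - g) = 2 * I2 f + 2 * I2 g := by
  have h1 := int_of_memLp (hf.add hg)
  have h2 := int_of_memLp (hf.sub hg)
  have h3 := int_of_memLp hf
  have h4 := int_of_memLp hg
  unfold I2
  rw [← integral_add h1 h2, ← integral_const_mul, ← integral_const_mul,
    ← integral_add (h3.const_mul _) (h4.const_mul _)]
  congr 1; ext x
  have := parallelogram_law_with_norm ℝ (f x) (g x)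
  simp only [Pi.add_apply, Pi.sub_apply]
  nlinarith

/-- difference of squares in L1 -/
lemma sq_diff {f g : ℝ → ℂ} (hf : MemLp f 2 volume) (hg : MemLp g 2 volume)
    (w : ℝ → ℝ) (hw : Measurable w) (B : ℝ) (hB : ∀ x, |w x| ≤ B) :
    Integrable (fun x => w x * ‖f x‖ ^ 2) ∧
    |(∫ x, w x * ‖f x‖ ^ 2) - ∫ x, w x * ‖g x‖ ^ 2| ≤
      B * (√(I2 (f - g)) * (√(I2 (f - g)) + 2 * √(I2 g))) := by
  have hB0 : 0 ≤ B := (abs_nonneg _).trans (hB 0)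
  have hi : ∀ {f : ℝ → ℂ}, MemLp f 2 volume → Integrable (fun x => w x * ‖f x‖ ^ 2) := by
    intro f hf
    exact (int_of_memLp hf).bdd_mul hw.aestronglyMeasurable (Eventually.of_forall hB)
  refine ⟨hi hf, ?_⟩
  have hd := hf.sub hg
  rw [← integral_sub (hi hf) (hi hg), ← Real.norm_eq_abs]
  have key : ∀ x, ‖w x * ‖f x‖ ^ 2 - w x * ‖g x‖ ^ 2‖ ≤
      B * (‖(f - g) x‖ * ‖(f - g) x‖ + 2 * (‖(f - g) x‖ * ‖g x‖)) := by
    intro x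
    rw [← mul_sub, norm_mul, Real.norm_eq_abs, Real.norm_eq_abs]
    apply mul_le_mul (hB x) _ (abs_nonneg _) hB0
    rw [sq_sub_sq, abs_mul]
    have h1 : |‖f x‖ - ‖g x‖| ≤ ‖(f - g) x‖ := abs_norm_sub_norm_le _ _
    have h2 : |‖f x‖ + ‖g x‖| ≤ ‖(f - g) x‖ + 2 * ‖g x‖ := by
      rw [abs_of_nonneg (by positivity)]
      have : |‖f x‖ - ‖g x‖| ≤ ‖(f - g) x‖ := h1
      have := abs_le.1 this
      linarith
    calc _ ≤ (‖(f - g) x‖ + 2 * ‖g x‖) * ‖(f - g) x‖ :=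
          mul_le_mul h2 h1 (abs_nonneg _) (by positivity)
      _ = _ := by ring
  refine (norm_integral_le_of_norm_le (((cs_int hd hd).add ((cs_int hd hg).const_mul 2)).const_mul B)
    (Eventually.of_forall key)).trans ?_
  simp only [Pi.add_apply]
  rw [integral_const_mul, integral_add (cs_int hd hd) ((cs_int hd hg).const_mul 2),
    integral_const_mul]
  have := cs hd hd
  have := cs hd hg
  apply mul_le_mul_of_nonneg_left _ hB0
  linarith

lemma tend_W {ι : Type*} {l : Filter ι} {f : ι → ℝ → ℂ} {g : ℝ → ℂ}
    (hf : ∀ n, MemLp (f n) 2 volume) (hg : MemLp g 2 volume)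
    (ht : Tendsto (fun n => I2 (f n - g)) l (𝓝 0))
    (w : ι → ℝ → ℝ) (v : ℝ → ℝ) (hw : ∀ n, Measurable (w n)) (B : ℝ) (hB : ∀ n x, |w n x| ≤ B)
    (hv : Tendsto (fun n => ∫ x, w n x * ‖g x‖ ^ 2) l (𝓝 (∫ x, v x * ‖g x‖ ^ 2))) :
    Tendsto (fun n => ∫ x, w n x * ‖f n x‖ ^ 2) l (𝓝 (∫ x, v x * ‖g x‖ ^ 2)) := by
  have h1 : Tendsto (fun n => (∫ x, w n x * ‖f n x‖ ^ 2) - ∫ x, w n x * ‖g x‖ ^ 2) l (𝓝 0) := by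
    have hs := (Real.continuous_sqrt.tendsto 0).comp ht
    rw [Real.sqrt_zero] at hs
    have h2 := (hs.mul (hs.add_const (2 * √(I2 g)))).const_mul B
    simp only [zero_mul, mul_zero] at h2
    exact squeeze_zero_norm (fun n => (sq_diff (hf n) hg (w n) (hw n) B (hB n)).2) h2
  simpa using h1.add hv

lemma tend_I2 {ι : Type*} {l : Filter ι} {f : ι → ℝ → ℂ} {g : ℝ → ℂ}
    (hf : ∀ n, MemLp (f n) 2 volume) (hg : MemLp g 2 volume)
    (ht : Tendsto (fun n => I2 (f n - g)) l (𝓝 0)) :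
    Tendsto (fun n => I2 (f n)) l (𝓝 (I2 g)) := by
  simpa [I2] using tend_W hf hg ht (fun _ _ => 1) (fun _ => 1) (fun _ => measurable_const) 1
    (by simp) tendsto_const_nhds

lemma tend_P {ι : Type*} {l : Filter ι} {f : ι → ℝ → ℂ} {g : ℝ → ℂ}
    (hf : ∀ n, MemLp (f n) 2 volume) (hg : MemLp g 2 volume)
    (hfm : ∀ n, Measurable (f n)) (hgm : Measurable g)
    (M : ℝ) (hM : ∀ n x, ‖f n x‖ ^ 2 ≤ M) (hMg : ∀ x, ‖g x‖ ^ 2 ≤ M)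
    (ht : Tendsto (fun n => I2 (f n - g)) l (𝓝 0)) :
    Tendsto (fun n => ∫ x, ‖f n x‖ ^ 4) l (𝓝 (∫ x, ‖g x‖ ^ 4)) := by
  have e : ∀ f : ℝ → ℂ, (∫ x, ‖f x‖ ^ 4) = ∫ x, ‖f x‖ ^ 2 * ‖f x‖ ^ 2 := fun f => by
    congr 1; ext x; ring
  simp only [e]
  apply tend_W hf hg ht (fun n x => ‖f n x‖ ^ 2) (fun x => ‖g x‖ ^ 2)
    (fun n => (hfm n).norm.pow_const 2) M (fun n x => by rw [abs_of_nonneg (by positivity)]; exact hM n x)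
  have := tend_W hf hg ht (fun n x => ‖g x‖ ^ 2) (fun x => ‖g x‖ ^ 2)
    (fun n => hgm.norm.pow_const 2) M (fun n x => by rw [abs_of_nonneg (by positivity)]; exact hMg x)
    tendsto_const_nhds
  refine this.congr fun n => ?_
  congr 1; ext x; ring

/-- multiplication by the coordinate -/
noncomputable def xm (u : ℝ → ℂ) : ℝ → ℂ := fun x => (x : ℂ) * u x

lemma xm_add (u v : ℝ → ℂ) : xm (u + v) = xm u + xm v := by
  ext x; simp [xm, mul_add]

lemma xm_sub (u v : ℝ → ℂ) : xm (u - v) = xm u - xm v := by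
  ext x; simp [xm, mul_sub]

lemma xm_smul (c : ℂ) (u : ℝ → ℂ) : xm (c • u) = c • xm u := by
  ext x; simp [xm]; ring

lemma I2_xm (u : ℝ → ℂ) : I2 (xm u) = ∫ x, x ^ 2 * ‖u x‖ ^ 2 := by
  unfold I2 xm; congr 1; ext x; simp [mul_pow]

/-- weak energy space: `u` has weak derivative `g` -/
structure HX (u g : ℝ → ℂ) : Prop where
  cont : Continuous u
  mu : MemLp u 2 volume
  mg : MemLp g 2 volume
  mx : MemLp (xm u) 2 volume
  ftc : ∀ x y, u y - u x = ∫ t in x..y, g t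

lemma ii_of_memLp {g : ℝ → ℂ} (hg : MemLp g 2 volume) (a b : ℝ) :
    IntervalIntegrable g volume a b :=
  ((hg.locallyIntegrable (by norm_num)).integrableOn_isCompact isCompact_uIcc).intervalIntegrable

lemma HX.add {u g v h : ℝ → ℂ} (a : HX u g) (b : HX v h) : HX (u + v) (g + h) where
  cont := a.cont.add b.cont
  mu := a.mu.add b.mu
  mg := a.mg.add b.mg
  mx := by rw [xm_add]; exact a.mx.add b.mx
  ftc x y := by
    have := intervalIntegral.integral_add (ii_of_memLp a.mg x y) (ii_of_memLp b.mg x y)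
    simp only [Pi.add_apply]
    rw [this, ← a.ftc, ← b.ftc]; ring

lemma HX.smul {u g : ℝ → ℂ} (c : ℂ) (a : HX u g) : HX (c • u) (c • g) where
  cont := a.cont.const_smul c
  mu := a.mu.const_smul c
  mg := a.mg.const_smul c
  mx := by rw [xm_smul]; exact a.mx.const_smul c
  ftc x y := by
    simp only [Pi.smul_apply]
    rw [intervalIntegral.integral_smul, ← a.ftc, smul_sub]

lemma HX.sub {u g v h : ℝ → ℂ} (a : HX u g) (b : HX v h) : HX (u - v) (g - h) := by
  have := a.add (b.smul (-1))
  simpa [sub_eq_add_neg] using this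

lemma hol {g : ℝ → ℂ} (hg : MemLp g 2 volume) (x y : ℝ) :
    ‖∫ t in x..y, g t‖ ≤ √|y - x| * √(I2 g) := by
  have h1 : MemLp ((uIoc x y).indicator (fun _ => (1 : ℂ))) 2 volume :=
    memLp_indicator_const _ measurableSet_uIoc _ (Or.inr (by simp [uIoc]))
  have h2 := cs h1 hg
  have e1 : I2 ((uIoc x y).indicator (fun _ => (1 : ℂ))) = |y - x| := by
    have : ∀ t, ‖(uIoc x y).indicator (fun _ => (1 : ℂ)) t‖ ^ 2
        = (uIoc x y).indicator (fun _ => (1 : ℝ)) t := by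
      intro t; by_cases ht : t ∈ uIoc x y <;> simp [ht]
    unfold I2
    simp only [this]
    rw [integral_indicator measurableSet_uIoc]
    simp [Measure.real, uIoc, max_sub_min_eq_abs]
  have e2 : ∫ t, ‖(uIoc x y).indicator (fun _ => (1 : ℂ)) t‖ * ‖g t‖ = ∫ t in uIoc x y, ‖g t‖ := by
    rw [← integral_indicator measurableSet_uIoc]
    congr 1; ext t; by_cases ht : t ∈ uIoc x y <;> simp [ht]
  rw [e1, e2] at h2
  exact intervalIntegral.norm_integral_le_integral_norm_uIoc.trans h2

lemma HX.holder {u g : ℝ → ℂ} (a : HX u g) (x y : ℝ) :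
    ‖u y - u x‖ ^ 2 ≤ |y - x| * I2 g := by
  have := hol a.mg x y
  rw [← a.ftc] at this
  calc _ ≤ (√|y - x| * √(I2 g)) ^ 2 := by gcongr
    _ = _ := by rw [mul_pow, Real.sq_sqrt (abs_nonneg _), Real.sq_sqrt (I2_nonneg _)]

lemma HX.sup {u g : ℝ → ℂ} (a : HX u g) {δ : ℝ} (hδ : 0 < δ) (x : ℝ) :
    ‖u x‖ ^ 2 ≤ 2 / δ * I2 u + 2 * δ * I2 g := by
  have hi := int_of_memLp a.mu
  have h0 := I2_nonneg g
  have h1 : ∫ y in Ioc x (x + δ), ‖u x‖ ^ 2 ≤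
      ∫ y in Ioc x (x + δ), (2 * ‖u y‖ ^ 2 + 2 * (δ * I2 g)) := by
    apply setIntegral_mono_on (by simp) _ measurableSet_Ioc
    · intro y hy
      have h2 := a.holder x y
      have h3 : |y - x| ≤ δ := by rw [abs_le]; constructor <;> linarith [hy.1, hy.2]
      have h4 : ‖u x‖ ≤ ‖u y‖ + ‖u y - u x‖ := by
        have := norm_sub_le (u y) (u y - u x)
        simpa using this
      have h5 : |y - x| * I2 g ≤ δ * I2 g := by gcongr
      have h6 : ‖u x‖ ^ 2 ≤ (‖u y‖ + ‖u y - u x‖) ^ 2 := by gcongr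
      nlinarith [sq_nonneg (‖u y‖ - ‖u y - u x‖)]
    · exact (hi.integrableOn.const_mul 2).add (integrable_const _)
  have h2 : ∫ y in Ioc x (x + δ), ‖u y‖ ^ 2 ≤ I2 u :=
    setIntegral_le_integral hi (Eventually.of_forall fun _ => by positivity)
  rw [integral_add (hi.integrableOn.const_mul 2) (integrable_const _), integral_const_mul] at h1
  simp [Measure.real, hδ.le] at h1
  have h3 : δ * ‖u x‖ ^ 2 ≤ 2 * I2 u + δ * (2 * (δ * I2 g)) := by linarith
  rw [← mul_le_mul_iff_right₀ hδ]
  calc _ ≤ _ := h3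
    _ = _ := by field_simp

lemma HX.P_int {u g : ℝ → ℂ} (a : HX u g) : Integrable (fun x => ‖u x‖ ^ 4) := by
  have := (sq_diff a.mu a.mu (fun x => ‖u x‖ ^ 2) (by have := a.cont.measurable; fun_prop)
    (2 / 1 * I2 u + 2 * 1 * I2 g)
    (fun x => by rw [abs_of_nonneg (by positivity)]; exact a.sup one_pos x)).1
  refine this.congr (Eventually.of_forall fun x => ?_)
  simp only; ring

lemma HX.P_le {u g : ℝ → ℂ} (a : HX u g) {δ : ℝ} (hδ : 0 < δ) :
    ∫ x, ‖u x‖ ^ 4 ≤ (2 / δ * I2 u + 2 * δ * I2 g) * I2 u := by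
  unfold I2
  rw [← integral_const_mul]
  apply integral_mono a.P_int ((int_of_memLp a.mu).const_mul _)
  intro x
  have := a.sup hδ x
  simp only
  calc ‖u x‖ ^ 4 = ‖u x‖ ^ 2 * ‖u x‖ ^ 2 := by ring
    _ ≤ _ := by gcongr; exact this

lemma InX.hx {u : ℝ → ℂ} (h : InX u) : HX u (deriv u) where
  cont := h.1.continuous
  mu := memLp_of_int h.1.continuous.aestronglyMeasurable h.2.1
  mg := memLp_of_int (measurable_deriv u).aestronglyMeasurable h.2.2.1
  mx := memLp_of_int (by have := h.1.continuous; unfold xm; fun_prop) (by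
    refine h.2.2.2.1.congr (Eventually.of_forall fun x => ?_)
    simp [xm, mul_pow])
  ftc x y := by
    rw [intervalIntegral.integral_eq_sub_of_hasDerivAt (fun t _ => (h.1 t).hasDerivAt)]
    exact ii_of_memLp (memLp_of_int (measurable_deriv u).aestronglyMeasurable h.2.2.1) _ _

lemma HX.inX {u g : ℝ → ℂ} (a : HX u g) (hd : Differentiable ℝ u)
    (hg : g =ᵐ[volume] deriv u) : InX u := by
  refine ⟨hd, int_of_memLp a.mu, int_of_memLp (a.mg.ae_eq hg), ?_, a.P_int⟩
  refine (int_of_memLp a.mx).congr (Eventually.of_forall fun x => ?_)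
  simp [xm, mul_pow]

lemma InX.add {u v : ℝ → ℂ} (h : InX u) (k : InX v) : InX (u + v) :=
  (h.hx.add k.hx).inX (h.1.add k.1) (Eventually.of_forall fun x => by
    rw [deriv_add (h.1 x) (k.1 x)]; rfl)

lemma InX.smul {u : ℝ → ℂ} (c : ℂ) (h : InX u) : InX (c • u) :=
  (h.hx.smul c).inX (h.1.const_smul c) (Eventually.of_forall fun x => by
    rw [deriv_const_smul c (h.1 x)]; rfl)

lemma inX_of_compact {u : ℝ → ℂ} (h : ContDiff ℝ 1 u) (hc : HasCompactSupport u) : InX u := by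
  have hd := h.continuous_deriv le_rfl
  have hdc := hc.deriv
  have e : ∀ v : ℝ → ℂ, Continuous v → HasCompactSupport v → ∀ w : ℝ → ℝ, Continuous w →
      ∀ n : ℕ, n ≠ 0 → Integrable (fun x => w x * ‖v x‖ ^ n) := by
    intro v hv hvc w hw n hn
    apply Continuous.integrable_of_hasCompactSupport (by fun_prop)
    have : HasCompactSupport (fun x => ‖v x‖ ^ n) :=
      hvc.comp_left (g := fun z => ‖z‖ ^ n) (by simp [hn])
    exact this.mul_left
  refine ⟨h.differentiable (by norm_num), ?_, ?_, ?_, ?_⟩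
  · simpa using e u h.continuous hc (fun _ => 1) continuous_const 2 (by norm_num)
  · simpa using e _ hd hdc (fun _ => 1) continuous_const 2 (by norm_num)
  · simpa using e u h.continuous hc (fun x => x ^ 2) (by fun_prop) 2 (by norm_num)
  · simpa using e u h.continuous hc (fun _ => 1) continuous_const 4 (by norm_num)

/-- the lattice potential term -/
noncomputable def W (α : ℝ) (u : ℝ → ℂ) : ℝ := ∫ x, Real.cos (α * x) ^ 2 * ‖u x‖ ^ 2

/-- the quartic term -/
noncomputable def P (u : ℝ → ℂ) : ℝ := ∫ x, ‖u x‖ ^ 4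

lemma energy_eq (lam V₀ α : ℝ) (u : ℝ → ℂ) :
    energy lam V₀ α u = I2 (deriv u) + I2 (xm u) + lam / 2 * P u - V₀ * W α u := by
  rw [I2_xm]; rfl

lemma cos_bd (α x : ℝ) : |Real.cos (α * x) ^ 2| ≤ 1 := by
  rw [abs_of_nonneg (by positivity)]; exact Real.cos_sq_le_one _

lemma W_bd (α : ℝ) {u : ℝ → ℂ} (hu : MemLp u 2 volume) : |W α u| ≤ I2 u := by
  rw [← Real.norm_eq_abs]
  refine norm_integral_le_of_norm_le (int_of_memLp hu) (Eventually.of_forall fun x => ?_)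
  rw [norm_mul, Real.norm_eq_abs, Real.norm_of_nonneg (by positivity)]
  exact mul_le_of_le_one_left (by positivity) (cos_bd α x)

lemma W_smul (α : ℝ) (c : ℂ) (u : ℝ → ℂ) : W α (c • u) = ‖c‖ ^ 2 * W α u := by
  unfold W; rw [← integral_const_mul]; congr 1; ext x; simp [mul_pow]; ring

lemma P_smul (c : ℂ) (u : ℝ → ℂ) : P (c • u) = ‖c‖ ^ 4 * P u := by
  unfold P; rw [← integral_const_mul]; congr 1; ext x; simp [mul_pow]

lemma P_nonneg (u : ℝ → ℂ) : 0 ≤ P u := integral_nonneg fun _ => by positivity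

lemma coercive (lam V₀ α : ℝ) : ∃ C : ℝ, ∀ u, InSigma1 u →
    I2 (deriv u) + I2 (xm u) ≤ 2 * energy lam V₀ α u + C := by
  refine ⟨2 * |lam| * (2 * (|lam| + 1)) + 2 * |V₀|, fun u hu => ?_⟩
  have hN : I2 u = 1 := hu.2
  have hx := hu.1.hx
  have hδ : 0 < 1 / (2 * (|lam| + 1)) := by positivity
  have h1 := hx.P_le hδ
  rw [hN] at h1
  change P u ≤ _ at h1
  have h2 := W_bd α hx.mu
  rw [hN] at h2
  have h3 : V₀ * W α u ≤ |V₀| := by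
    calc _ ≤ |V₀ * W α u| := le_abs_self _
      _ = |V₀| * |W α u| := abs_mul _ _
      _ ≤ |V₀| * 1 := by gcongr
      _ = _ := mul_one _
  have h4 : -(lam / 2 * P u) ≤ |lam| / 2 * P u := by
    have := neg_abs_le lam
    nlinarith [P_nonneg u]
  have h5 : |lam| / 2 * P u ≤ |lam| / 2 * (2 / (1 / (2 * (|lam| + 1))) + 2 * (1 / (2 * (|lam| + 1))) * I2 (deriv u)) := by
    gcongr; linarith
  have h6 : |lam| / 2 * (2 / (1 / (2 * (|lam| + 1))) + 2 * (1 / (2 * (|lam| + 1))) * I2 (deriv u))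
     = |lam| * (2 * (|lam| + 1)) + (|lam| / (|lam| + 1)) / 2 * I2 (deriv u) := by
    field_simp
  have h7 : |lam| / (|lam| + 1) ≤ 1 := by
    rw [div_le_one (by positivity)]; linarith
  have h8 := I2_nonneg (deriv u)
  have h9 := I2_nonneg (xm u)
  have h10 : (|lam| / (|lam| + 1)) / 2 * I2 (deriv u) ≤ 1 / 2 * I2 (deriv u) := by gcongr
  rw [energy_eq]
  linarith

lemma sigma_nonempty : ∃ u, InSigma1 u := by
  let b : ContDiffBump (0 : ℝ) := ⟨1, 2, by norm_num, by norm_num⟩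
  let v : ℝ → ℂ := fun x => (b x : ℂ)
  have hv : InX v := by
    apply inX_of_compact
    · exact Complex.ofRealCLM.contDiff.comp b.contDiff
    · exact b.hasCompactSupport.comp_left (g := fun x : ℝ => (x : ℂ)) (by simp)
  have hpos : 0 < I2 v := by
    unfold I2
    rw [integral_pos_iff_support_of_nonneg (fun _ => by positivity) (int_of_memLp hv.hx.mu)]
    refine lt_of_lt_of_le ?_ (measure_mono (s := Metric.ball (0:ℝ) 2) ?_)
    · simp
    · intro x hx
      have : x ∈ Function.support b := by rw [b.support_eq]; exact hx
      simp only [Function.mem_support, v] at this ⊢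
      simpa using this
  refine ⟨((1 / √(I2 v) : ℝ) : ℂ) • v, hv.smul _, ?_⟩
  change I2 _ = 1
  rw [I2_smul, Complex.norm_real, Real.norm_eq_abs, sq_abs, div_pow, Real.sq_sqrt hpos.le]
  field_simp

/-- homogenized functional -/
noncomputable def FF (lam V₀ α m : ℝ) (u g : ℝ → ℂ) : ℝ :=
  (I2 g + I2 (xm u) - V₀ * W α u) * I2 u + lam / 2 * P u - m * I2 u ^ 2

lemma FF_nonneg {lam V₀ α m : ℝ} (hm : ∀ u, InSigma1 u → m ≤ energy lam V₀ α u) {u : ℝ → ℂ}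
    (hu : InX u) : 0 ≤ FF lam V₀ α m u (deriv u) := by
  rcases (I2_nonneg u).eq_or_lt with h | h
  · have : P u ≤ 0 := by
      have := hu.hx.P_le one_pos
      rw [← h, mul_zero] at this; exact this
    have : P u = 0 := le_antisymm this (P_nonneg u)
    simp [FF, ← h, this]
  · set c : ℝ := 1 / √(I2 u) with hc
    have hc2 : c ^ 2 = 1 / I2 u := by rw [hc, div_pow, Real.sq_sqrt h.le, one_pow]
    have hn : ‖(c : ℂ)‖ ^ 2 = 1 / I2 u := by
      rw [Complex.norm_real, Real.norm_eq_abs, sq_abs, hc2]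
    have hn4 : ‖(c : ℂ)‖ ^ 4 = (1 / I2 u) ^ 2 := by rw [← hn]; ring
    have hd : deriv ((c : ℂ) • u) = (c : ℂ) • deriv u := by
      ext x; rw [deriv_const_smul _ (hu.1 x)]; rfl
    have h1 := hm ((c : ℂ) • u) ⟨hu.smul _, by
      change I2 _ = 1
      rw [I2_smul, hn]; field_simp⟩
    rw [energy_eq, hd, xm_smul, I2_smul, I2_smul, P_smul, W_smul, hn, hn4] at h1
    have h2 : 0 ≤ I2 u ^ 2 * (1 / I2 u * I2 (deriv u) + 1 / I2 u * I2 (xm u) + lam / 2 * ((1 / I2 u) ^ 2 * P u) - V₀ * (1 / I2 u * W α u) - m) := by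
      apply mul_nonneg (by positivity); linarith
    convert h2 using 1
    unfold FF
    field_simp
    ring

lemma I2_complete' {f : ℕ → ℝ → ℂ} (hf : ∀ n, MemLp (f n) 2 volume) {h : ℝ → ℂ}
    (hc : Tendsto (fun p : ℕ × ℕ => I2 (f p.1 - f p.2)) (atTop ×ˢ atTop) (𝓝 0))
    (hp : ∀ x, Tendsto (fun n => f n x) atTop (𝓝 (h x))) :
    MemLp h 2 volume ∧ Tendsto (fun n => I2 (f n - h)) atTop (𝓝 0) := by
  obtain ⟨g, hg, ht⟩ := I2_complete hf hc
  have e := I2_unique hf hg ht hp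
  refine ⟨hg.ae_eq e, ht.congr fun n => I2_congr ?_⟩
  filter_upwards [e] with x hx
  simp [hx]

lemma I2_add_le {f g : ℝ → ℂ} (hf : MemLp f 2 volume) (hg : MemLp g 2 volume) :
    I2 (f + g) ≤ 2 * I2 f + 2 * I2 g := by
  have := I2_para hf hg
  linarith [I2_nonneg (f - g)]

lemma I2_sub_le {f g : ℝ → ℂ} (hf : MemLp f 2 volume) (hg : MemLp g 2 volume) :
    I2 (f - g) ≤ 2 * I2 f + 2 * I2 g := by
  have := I2_para hf hg
  linarith [I2_nonneg (f + g)]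

lemma pointwise_subseq {u g : ℕ → ℝ → ℂ} (hx : ∀ n, HX (u n) (g n)) {C : ℝ}
    (hu : ∀ n, I2 (u n) ≤ C) (hg : ∀ n, I2 (g n) ≤ C) :
    ∃ (φ : ℕ → ℕ) (ψ : ℝ → ℂ), StrictMono φ ∧
      ∀ x, Tendsto (fun n => u (φ n) x) atTop (𝓝 (ψ x)) := by
  have hC : 0 ≤ C := (I2_nonneg _).trans (hu 0)
  have hb : ∀ n x, ‖u n x‖ ≤ √(4 * C) := by
    intro n x
    apply Real.le_sqrt_of_sq_le
    have := (hx n).sup one_pos x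
    linarith [hu n, hg n]
  have hK : IsCompact (Set.pi univ (fun _ : ℚ => Metric.closedBall (0 : ℂ) (√(4 * C)))) :=
    isCompact_univ_pi fun _ => isCompact_closedBall _ _
  obtain ⟨a, -, φ, hφ, ht⟩ := hK.tendsto_subseq (x := fun n (q : ℚ) => u n q)
    (fun n q _ => by simpa using hb n q)
  rw [tendsto_pi_nhds] at ht
  have hcau : ∀ x, ∃ l, Tendsto (fun n => u (φ n) x) atTop (𝓝 l) := by
    intro x
    apply cauchySeq_tendsto_of_complete
    rw [Metric.cauchySeq_iff]
    intro ε hε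
    have hδ : 0 < (ε / 3) ^ 2 / (C + 1) := by positivity
    obtain ⟨q, hq⟩ := exists_rat_near x hδ
    have hh : ∀ n, ‖u n x - u n q‖ < ε / 3 := by
      intro n
      have h1 := (hx n).holder q x
      have h2 : |x - q| * I2 (g n) < (ε / 3) ^ 2 := by
        calc |x - q| * I2 (g n) ≤ |x - q| * (C + 1) := by
              gcongr; linarith [hg n]
          _ < (ε / 3) ^ 2 / (C + 1) * (C + 1) := by gcongr
          _ = _ := by field_simp
      exact lt_of_pow_lt_pow_left₀ 2 (by positivity) (h1.trans_lt h2)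
    obtain ⟨N, hN⟩ := Metric.cauchySeq_iff.1 (ht q).cauchySeq (ε / 3) (by positivity)
    refine ⟨N, fun n hn k hk => ?_⟩
    have h1 := hN n hn k hk
    simp only [Function.comp] at h1
    rw [dist_eq_norm] at h1 ⊢
    have h2 := hh (φ n)
    have h3 := hh (φ k)
    have : u (φ n) x - u (φ k) x = (u (φ n) x - u (φ n) q) + (u (φ n) q - u (φ k) q)
      - (u (φ k) x - u (φ k) q) := by ring
    rw [this]
    calc _ ≤ ‖(u (φ n) x - u (φ n) q) + (u (φ n) q - u (φ k) q)‖ + ‖u (φ k) x - u (φ k) q‖ :=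
          norm_sub_le _ _
      _ ≤ _ + _ + _ := by gcongr; exact norm_add_le _ _
      _ < ε := by linarith
  choose ψ hψ using hcau
  exact ⟨φ, ψ, hφ, hψ⟩

lemma tail_bd {f : ℝ → ℂ} (hf : MemLp f 2 volume) (hx : MemLp (xm f) 2 volume) {R : ℝ}
    (hR : 0 < R) : I2 f ≤ (∫ x, (Icc (-R) R).indicator (fun x => ‖f x‖ ^ 2) x) + 1 / R ^ 2 * I2 (xm f) := by
  have h1 := (int_of_memLp hf).indicator (measurableSet_Icc (a := -R) (b := R))
  have h2 := int_of_memLp hx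
  unfold I2
  rw [← integral_const_mul, ← integral_add h1 (h2.const_mul _)]
  apply integral_mono (int_of_memLp hf) (h1.add (h2.const_mul _))
  intro x
  simp only [Pi.add_apply]
  by_cases h : x ∈ Icc (-R) R
  · simp only [h, indicator_of_mem]
    have : 0 ≤ 1 / R ^ 2 * ‖xm f x‖ ^ 2 := by positivity
    linarith
  · simp only [h, not_false_eq_true, indicator_of_notMem, zero_add]
    have h3 : R ^ 2 ≤ x ^ 2 := by
      rw [sq_le_sq, abs_of_pos hR]
      by_contra! h4
      exact h ⟨(abs_lt.1 h4).1.le, (abs_lt.1 h4).2.le⟩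
    simp only [xm, norm_mul, Complex.norm_real, Real.norm_eq_abs, mul_pow, sq_abs]
    have h4 : 1 ≤ 1 / R ^ 2 * x ^ 2 := by
      rw [div_mul_eq_mul_div, one_mul, le_div_iff₀ (by positivity)]; linarith
    calc ‖f x‖ ^ 2 = 1 * ‖f x‖ ^ 2 := by ring
      _ ≤ (1 / R ^ 2 * x ^ 2) * ‖f x‖ ^ 2 := by gcongr
      _ = _ := by ring

lemma L2_cauchy {u g : ℕ → ℝ → ℂ} (hx : ∀ n, HX (u n) (g n)) {C : ℝ}
    (hu : ∀ n, I2 (u n) ≤ C) (hg : ∀ n, I2 (g n) ≤ C) (hxu : ∀ n, I2 (xm (u n)) ≤ C)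
    {ψ : ℝ → ℂ} (hψ : ∀ x, Tendsto (fun n => u n x) atTop (𝓝 (ψ x))) :
    Tendsto (fun p : ℕ × ℕ => I2 (u p.1 - u p.2)) (atTop ×ˢ atTop) (𝓝 0) := by
  have hC : 0 ≤ C := (I2_nonneg _).trans (hu 0)
  rw [Metric.tendsto_nhds]
  intro ε hε
  set R : ℝ := √(8 * C / ε + 1) with hR
  have hRpos : 0 < R := Real.sqrt_pos.2 (by positivity)
  have hR2 : R ^ 2 = 8 * C / ε + 1 := Real.sq_sqrt (by positivity)
  have h1 : Tendsto (fun p : ℕ × ℕ => ∫ x, (Icc (-R) R).indicator (fun x => ‖(u p.1 - u p.2) x‖ ^ 2) x)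
      (atTop ×ˢ atTop) (𝓝 (∫ x : ℝ, (0 : ℝ))) := by
    apply tendsto_integral_filter_of_dominated_convergence
      ((Icc (-R) R).indicator (fun _ => 16 * C))
    · refine Eventually.of_forall fun p => ?_
      exact ((int_of_memLp ((hx p.1).mu.sub (hx p.2).mu)).indicator measurableSet_Icc).1
    · refine Eventually.of_forall fun p => Eventually.of_forall fun x => ?_
      by_cases h : x ∈ Icc (-R) R
      · simp only [h, indicator_of_mem]
        rw [Real.norm_of_nonneg (by positivity)]
        have := ((hx p.1).sub (hx p.2)).sup one_pos x
        have h2 := I2_sub_le (hx p.1).mu (hx p.2).mu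
        have h3 := I2_sub_le (hx p.1).mg (hx p.2).mg
        linarith [hu p.1, hu p.2, hg p.1, hg p.2]
      · simp [h]
    · exact (integrable_indicator_iff measurableSet_Icc).2 (integrable_const _)
    · refine Eventually.of_forall fun x => ?_
      by_cases h : x ∈ Icc (-R) R
      · simp only [h, indicator_of_mem]
        have := (((hψ x).comp tendsto_fst).sub ((hψ x).comp tendsto_snd)).norm.pow 2
          (l := (atTop ×ˢ atTop : Filter (ℕ × ℕ)))
        simpa using this
      · simp [h]
  rw [integral_zero, Metric.tendsto_nhds] at h1
  filter_upwards [h1 (ε / 2) (by positivity)] with p hp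
  rw [dist_zero_right, Real.norm_of_nonneg (I2_nonneg _)]
  have h2 := tail_bd ((hx p.1).mu.sub (hx p.2).mu) ((hx p.1).sub (hx p.2)).mx hRpos
  have h3 : I2 (xm (u p.1 - u p.2)) ≤ 4 * C := by
    rw [xm_sub]
    have := I2_sub_le (hx p.1).mx (hx p.2).mx
    linarith [hxu p.1, hxu p.2]
  have h4 : 1 / R ^ 2 * I2 (xm (u p.1 - u p.2)) ≤ 1 / R ^ 2 * (4 * C) := by gcongr
  have h5 : 1 / R ^ 2 * (4 * C) ≤ ε / 2 := by
    rw [hR2, div_mul_eq_mul_div, div_le_iff₀ (by positivity)]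
    have : ε / 2 * (8 * C / ε + 1) = 4 * C + ε / 2 := by field_simp; ring
    rw [this]; linarith
  rw [dist_zero_right, Real.norm_eq_abs] at hp
  have := (abs_lt.1 hp).2
  linarith

lemma W_tend {ι : Type*} {l : Filter ι} (α : ℝ) {f : ι → ℝ → ℂ} {g : ℝ → ℂ}
    (hf : ∀ n, MemLp (f n) 2 volume) (hg : MemLp g 2 volume)
    (ht : Tendsto (fun n => I2 (f n - g)) l (𝓝 0)) :
    Tendsto (fun n => W α (f n)) l (𝓝 (W α g)) :=
  tend_W hf hg ht (fun _ x => Real.cos (α * x) ^ 2) (fun x => Real.cos (α * x) ^ 2)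
    (fun _ => by fun_prop) 1 (fun _ x => cos_bd α x) tendsto_const_nhds

lemma P_tend {ι : Type*} {l : Filter ι} {f h : ι → ℝ → ℂ} {u : ℝ → ℂ}
    (hf : ∀ i, HX (f i) (h i)) {C : ℝ} (hC1 : ∀ i, I2 (f i) ≤ C) (hC2 : ∀ i, I2 (h i) ≤ C)
    (hu : MemLp u 2 volume) (hum : Measurable u) {M : ℝ} (hM : ∀ x, ‖u x‖ ^ 2 ≤ M)
    (ht : Tendsto (fun n => I2 (f n - u)) l (𝓝 0)) :
    Tendsto (fun n => P (f n)) l (𝓝 (P u)) := by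
  apply tend_P (fun i => (hf i).mu) hu (fun i => (hf i).cont.measurable) hum (max (4 * C) M)
    (fun i x => le_trans ?_ (le_max_left _ _)) (fun x => (hM x).trans (le_max_right _ _)) ht
  have := (hf i).sup one_pos x
  linarith [hC1 i, hC2 i]

lemma FF_tend {ι : Type*} {l : Filter ι} (lam V₀ α m : ℝ) {f h : ι → ℝ → ℂ} {u g : ℝ → ℂ}
    (hf : ∀ i, HX (f i) (h i)) {C : ℝ} (hC1 : ∀ i, I2 (f i) ≤ C) (hC2 : ∀ i, I2 (h i) ≤ C)
    (hu : HX u g)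
    (ht : Tendsto (fun n => I2 (f n - u)) l (𝓝 0))
    (htg : Tendsto (fun n => I2 (h n - g)) l (𝓝 0))
    (htx : Tendsto (fun n => I2 (xm (f n) - xm u)) l (𝓝 0)) :
    Tendsto (fun n => FF lam V₀ α m (f n) (h n)) l (𝓝 (FF lam V₀ α m u g)) := by
  have h1 := tend_I2 (fun i => (hf i).mu) hu.mu ht
  have h2 := tend_I2 (fun i => (hf i).mg) hu.mg htg
  have h3 := tend_I2 (fun i => (hf i).mx) hu.mx htx
  have h4 := W_tend α (fun i => (hf i).mu) hu.mu ht
  have h5 := P_tend hf hC1 hC2 hu.mu hu.cont.measurable (fun x => hu.sup one_pos x) ht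
  exact ((((h2.add h3).sub (h4.const_mul V₀)).mul h1).add (h5.const_mul _)).sub
    ((h1.pow 2).const_mul m)

lemma exists_weak_min (lam V₀ α : ℝ) : ∃ (m : ℝ) (ψ g : ℝ → ℂ) (u : ℕ → ℝ → ℂ) (C : ℝ),
    (∀ v, InSigma1 v → m ≤ energy lam V₀ α v) ∧ HX ψ g ∧ I2 ψ = 1 ∧ (∀ n, InX (u n)) ∧
    (∀ n, I2 (u n) ≤ C) ∧ (∀ n, I2 (deriv (u n)) ≤ C) ∧
    Tendsto (fun n => I2 (u n - ψ)) atTop (𝓝 0) ∧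
    Tendsto (fun n => I2 (deriv (u n) - g)) atTop (𝓝 0) ∧
    Tendsto (fun n => I2 (xm (u n) - xm ψ)) atTop (𝓝 0) ∧
    FF lam V₀ α m ψ g = 0 := by
  obtain ⟨C₀, hC₀⟩ := coercive lam V₀ α
  set S : Set ℝ := energy lam V₀ α '' {v | InSigma1 v} with hS
  have hne : S.Nonempty := by
    obtain ⟨v, hv⟩ := sigma_nonempty
    exact ⟨_, v, hv, rfl⟩
  have hbdd : BddBelow S := by
    refine ⟨-C₀ / 2, ?_⟩
    rintro _ ⟨v, hv, rfl⟩
    have := hC₀ v hv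
    linarith [I2_nonneg (deriv v), I2_nonneg (xm v)]
  set m := sInf S with hm
  have hmin : ∀ v, InSigma1 v → m ≤ energy lam V₀ α v := fun v hv => csInf_le hbdd ⟨v, hv, rfl⟩
  have hseq : ∀ n : ℕ, ∃ v, InSigma1 v ∧ energy lam V₀ α v < m + 1 / ((n : ℝ) + 1) := by
    intro n
    obtain ⟨_, ⟨v, hv, rfl⟩, h⟩ := exists_lt_of_csInf_lt hne
      (show sInf S < m + 1 / ((n : ℝ) + 1) by
        have : (0:ℝ) < 1 / ((n : ℝ) + 1) := by positivity
        linarith)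
    exact ⟨v, hv, h⟩
  choose v hv hvE using hseq
  have hE1 : ∀ n, energy lam V₀ α (v n) ≤ m + 1 := by
    intro n
    refine (hvE n).le.trans ?_
    have : 1 / ((n : ℝ) + 1) ≤ 1 := by
      rw [div_le_one (by positivity)]; linarith [n.cast_nonneg (α := ℝ)]
    linarith
  have hvt : Tendsto (fun n => energy lam V₀ α (v n)) atTop (𝓝 m) := by
    refine tendsto_of_tendsto_of_tendsto_of_le_of_le tendsto_const_nhds ?_
      (fun n => hmin _ (hv n)) (fun n => (hvE n).le)
    simpa using (tendsto_one_div_add_atTop_nhds_zero_nat (𝕜 := ℝ)).const_add m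
  set C : ℝ := max 1 (2 * (m + 1) + C₀) with hC
  have hvN : ∀ n, I2 (v n) = 1 := fun n => (hv n).2
  have bnd : ∀ n, I2 (deriv (v n)) + I2 (xm (v n)) ≤ C := fun n =>
    (hC₀ _ (hv n)).trans (le_trans (by linarith [hE1 n]) (le_max_right _ _))
  obtain ⟨φ, ψ, hφ, hψ⟩ := pointwise_subseq (fun n => (hv n).1.hx) (C := C)
    (fun n => by rw [hvN]; exact le_max_left _ _)
    (fun n => by linarith [bnd n, I2_nonneg (xm (v n))])
  set u := fun n => v (φ n) with hu
  have hX : ∀ n, InX (u n) := fun n => (hv _).1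
  have hx : ∀ n, HX (u n) (deriv (u n)) := fun n => (hX n).hx
  have hN : ∀ n, I2 (u n) = 1 := fun n => hvN _
  have hC1 : ∀ n, I2 (u n) ≤ C := fun n => by rw [hN]; exact le_max_left _ _
  have hC2 : ∀ n, I2 (deriv (u n)) ≤ C := fun n => by linarith [bnd (φ n), I2_nonneg (xm (u n))]
  have hC3 : ∀ n, I2 (xm (u n)) ≤ C := fun n => by linarith [bnd (φ n), I2_nonneg (deriv (u n))]
  have hEt : Tendsto (fun n => energy lam V₀ α (u n)) atTop (𝓝 m) := hvt.comp hφ.tendsto_atTop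
  have hcau := L2_cauchy hx hC1 hC2 hC3 hψ
  obtain ⟨hψ2, hψt⟩ := I2_complete' (fun n => (hx n).mu) hcau hψ
  have hψm : Measurable ψ := measurable_of_tendsto_metrizable (fun n => (hx n).cont.measurable)
    (tendsto_pi_nhds.2 hψ)
  have hψb : ∀ x, ‖ψ x‖ ^ 2 ≤ 4 * C := by
    intro x
    refine le_of_tendsto ((hψ x).norm.pow 2) (Eventually.of_forall fun n => ?_)
    have := (hx n).sup one_pos x
    linarith [hC1 n, hC2 n]
  have hψN : I2 ψ = 1 := by
    have := tend_I2 (fun n => (hx n).mu) hψ2 hψt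
    simp only [hN] at this
    exact tendsto_nhds_unique this tendsto_const_nhds
  -- limit of the quadratic part
  set k : ℝ := m - lam / 2 * P ψ + V₀ * W α ψ with hk
  have hKt : Tendsto (fun n => I2 (deriv (u n)) + I2 (xm (u n))) atTop (𝓝 k) := by
    have h1 := W_tend α (fun n => (hx n).mu) hψ2 hψt
    have h2 := P_tend hx hC1 hC2 hψ2 hψm hψb hψt
    refine ((hEt.sub (h2.const_mul (lam / 2))).add (h1.const_mul V₀)).congr fun n => ?_
    rw [energy_eq]; ring
  -- midpoints
  set w : ℕ × ℕ → ℝ → ℂ := fun p => (1 / 2 : ℂ) • (u p.1 + u p.2) with hw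
  set w' : ℕ × ℕ → ℝ → ℂ := fun p => (1 / 2 : ℂ) • (deriv (u p.1) + deriv (u p.2)) with hw'
  have hwX : ∀ p, InX (w p) := fun p => ((hX _).add (hX _)).smul _
  have hwd : ∀ p, deriv (w p) = w' p := by
    intro p; ext x
    simp only [hw, hw']
    rw [deriv_const_smul _ (((hX p.1).1 x).add ((hX p.2).1 x)),
      deriv_add ((hX p.1).1 x) ((hX p.2).1 x)]
    rfl
  have hwx : ∀ p, HX (w p) (w' p) := fun p => by
    have := (hwX p).hx; rwa [hwd] at this
  have half : ∀ f : ℝ → ℂ, I2 ((1 / 2 : ℂ) • f) = 1 / 4 * I2 f := fun f => by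
    rw [I2_smul]; norm_num
  have hwC1 : ∀ p, I2 (w p) ≤ C := fun p => by
    simp only [hw]; rw [half]
    linarith [I2_add_le (hx p.1).mu (hx p.2).mu, hC1 p.1, hC1 p.2]
  have hwC2 : ∀ p, I2 (w' p) ≤ C := fun p => by
    simp only [hw']; rw [half]
    linarith [I2_add_le (hx p.1).mg (hx p.2).mg, hC2 p.1, hC2 p.2]
  have hwt : Tendsto (fun p => I2 (w p - ψ)) (atTop ×ˢ atTop) (𝓝 0) := by
    have h1 : Tendsto (fun p : ℕ × ℕ => 1 / 2 * (I2 (u p.1 - ψ) + I2 (u p.2 - ψ)))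
        (atTop ×ˢ atTop) (𝓝 0) := by
      have h := ((hψt.comp (tendsto_fst (f := atTop) (g := (atTop : Filter ℕ)))).add
        (hψt.comp (tendsto_snd (f := (atTop : Filter ℕ))))).const_mul (1 / 2 : ℝ)
      rw [add_zero, mul_zero] at h
      exact h
    refine squeeze_zero (fun _ => I2_nonneg _) (fun p => ?_) h1
    have : w p - ψ = (1 / 2 : ℂ) • ((u p.1 - ψ) + (u p.2 - ψ)) := by
      ext x; simp [hw]; ring
    rw [this, half]
    linarith [I2_add_le ((hx p.1).mu.sub hψ2) ((hx p.2).mu.sub hψ2)]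
  have hNt := tend_I2 (fun p => (hwx p).mu) hψ2 hwt
  have hWt := W_tend α (fun p => (hwx p).mu) hψ2 hwt
  have hPt := P_tend hwx hwC1 hwC2 hψ2 hψm hψb hwt
  rw [hψN] at hNt
  have hRt : Tendsto (fun p => (m * I2 (w p) ^ 2 - lam / 2 * P (w p)) / I2 (w p) + V₀ * W α (w p))
      (atTop ×ˢ atTop) (𝓝 k) := by
    have := ((((hNt.pow 2).const_mul m).sub (hPt.const_mul (lam / 2))).div hNt one_ne_zero).add
      (hWt.const_mul V₀)
    simpa [hk] using this
  have hpos : ∀ᶠ p in (atTop ×ˢ atTop : Filter (ℕ × ℕ)), 0 < I2 (w p) :=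
    hNt.eventually (lt_mem_nhds one_pos)
  have hsum : Tendsto (fun p : ℕ × ℕ => I2 (deriv (u p.1) - deriv (u p.2)) +
      I2 (xm (u p.1) - xm (u p.2))) (atTop ×ˢ atTop) (𝓝 0) := by
    have h1 := (((hKt.comp tendsto_fst).const_mul 2).add
      ((hKt.comp tendsto_snd).const_mul 2)).sub (hRt.const_mul 4)
    have h2 : 2 * k + 2 * k - 4 * k = 0 := by ring
    rw [h2] at h1
    refine squeeze_zero' (Eventually.of_forall fun p => add_nonneg (I2_nonneg _) (I2_nonneg _)) ?_ h1
    filter_upwards [hpos] with p hp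
    have h3 := FF_nonneg hmin (hwX p)
    rw [hwd] at h3
    have h4 : (m * I2 (w p) ^ 2 - lam / 2 * P (w p)) / I2 (w p) + V₀ * W α (w p)
        ≤ I2 (w' p) + I2 (xm (w p)) := by
      rw [← le_sub_iff_add_le, div_le_iff₀ hp]
      unfold FF at h3
      linarith
    have h5 := I2_para (hx p.1).mg (hx p.2).mg
    have h6 := I2_para (hx p.1).mx (hx p.2).mx
    have h7 : I2 (w' p) = 1 / 4 * I2 (deriv (u p.1) + deriv (u p.2)) := half _
    have h8 : I2 (xm (w p)) = 1 / 4 * I2 (xm (u p.1) + xm (u p.2)) := by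
      simp only [hw]; rw [xm_smul, half, xm_add]
    simp only [Function.comp]
    linarith
  have hcd : Tendsto (fun p : ℕ × ℕ => I2 (deriv (u p.1) - deriv (u p.2))) (atTop ×ˢ atTop) (𝓝 0) :=
    squeeze_zero (fun _ => I2_nonneg _) (fun p => by
      linarith [I2_nonneg (xm (u p.1) - xm (u p.2))]) hsum
  have hcx : Tendsto (fun p : ℕ × ℕ => I2 (xm (u p.1) - xm (u p.2))) (atTop ×ˢ atTop) (𝓝 0) :=
    squeeze_zero (fun _ => I2_nonneg _) (fun p => by
      linarith [I2_nonneg (deriv (u p.1) - deriv (u p.2))]) hsum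
  obtain ⟨g, hg, hgt⟩ := I2_complete (fun n => (hx n).mg) hcd
  obtain ⟨hxψ, hxt⟩ := I2_complete' (h := xm ψ) (fun n => (hx n).mx) hcx
    (fun x => (hψ x).const_mul (x : ℂ))
  have hftc : ∀ x y, ψ y - ψ x = ∫ t in x..y, g t := by
    intro x y
    refine tendsto_nhds_unique ((hψ y).sub (hψ x)) ?_
    rw [tendsto_iff_norm_sub_tendsto_zero]
    have h1 := ((Real.continuous_sqrt.tendsto 0).comp hgt).const_mul (√|y - x|)
    rw [Real.sqrt_zero, mul_zero] at h1
    refine squeeze_zero (fun _ => norm_nonneg _) (fun n => ?_) h1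
    have h2 := hol ((hx n).mg.sub hg) x y
    rw [(hx n).ftc x y, ← intervalIntegral.integral_sub (ii_of_memLp (hx n).mg _ _)
      (ii_of_memLp hg _ _)]
    exact h2
  have hcont : Continuous ψ := by
    have : ψ = fun y => ψ 0 + ∫ t in (0:ℝ)..y, g t := by
      ext y; rw [← hftc]; ring
    rw [this]
    exact continuous_const.add (intervalIntegral.continuous_primitive (ii_of_memLp hg) 0)
  have hHX : HX ψ g := ⟨hcont, hψ2, hg, hxψ, hftc⟩
  refine ⟨m, ψ, g, u, C, hmin, hHX, hψN, hX, hC1, hC2, hψt, hgt, hxt, ?_⟩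
  have h1 := FF_tend lam V₀ α m hx hC1 hC2 hHX hψt hgt hxt
  refine tendsto_nhds_unique h1 ?_
  have h2 := hEt.sub_const m
  rw [sub_self] at h2
  refine h2.congr fun n => ?_
  rw [energy_eq, FF, hN]; ring

lemma inner_int {f h : ℝ → ℂ} (hf : MemLp f 2 volume) (hh : MemLp h 2 volume) :
    Integrable (fun x => inner ℝ (f x) (h x)) := by
  refine (cs_int hf hh).mono (hf.1.inner hh.1) (Eventually.of_forall fun x => ?_)
  rw [Real.norm_of_nonneg (r := ‖f x‖ * ‖h x‖) (by positivity)]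
  exact norm_inner_le_norm (𝕜 := ℝ) _ _

lemma norm_exp (a b : ℂ) (t : ℝ) :
    ‖a + (t : ℂ) * b‖ ^ 2 = ‖a‖ ^ 2 + 2 * t * inner ℝ a b + t ^ 2 * ‖b‖ ^ 2 := by
  rw [← Complex.real_smul, norm_add_sq_real, inner_smul_right, norm_smul, mul_pow,
    Real.norm_eq_abs, sq_abs]
  ring

lemma I2_exp {f h : ℝ → ℂ} (hf : MemLp f 2 volume) (hh : MemLp h 2 volume) (t : ℝ) :
    I2 (f + (t : ℂ) • h) = I2 f + 2 * t * (∫ x, inner ℝ (f x) (h x)) + t ^ 2 * I2 h := by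
  have h1 := int_of_memLp hf
  have h2 := int_of_memLp hh
  have h3 := inner_int hf hh
  have h4 : Integrable (fun x => ‖f x‖ ^ 2 + 2 * t * inner ℝ (f x) (h x)) := h1.add (h3.const_mul _)
  unfold I2
  rw [← integral_const_mul, ← integral_const_mul, ← integral_add h1 (h3.const_mul _),
    ← integral_add h4 (h2.const_mul _)]
  congr 1; ext x
  simp only [Pi.add_apply, Pi.smul_apply, smul_eq_mul]
  exact norm_exp _ _ _

/-- multiplication by cosine -/
noncomputable def cm (α : ℝ) (u : ℝ → ℂ) : ℝ → ℂ := fun x => (Real.cos (α * x) : ℂ) * u x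

lemma W_eq (α : ℝ) (u : ℝ → ℂ) : W α u = I2 (cm α u) := by
  unfold W I2 cm; congr 1; ext x
  rw [norm_mul, Complex.norm_real, Real.norm_eq_abs, mul_pow, sq_abs]

lemma cm_mem (α : ℝ) {u : ℝ → ℂ} (hu : MemLp u 2 volume) : MemLp (cm α u) 2 volume := by
  have hm : AEStronglyMeasurable (cm α u) volume := by
    refine AEStronglyMeasurable.mul ?_ hu.1
    exact Continuous.aestronglyMeasurable (by fun_prop)
  refine hu.mono hm (Eventually.of_forall fun x => ?_)
  unfold cm
  rw [norm_mul, Complex.norm_real, Real.norm_eq_abs]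
  exact mul_le_of_le_one_left (norm_nonneg _) (Real.abs_cos_le_one _)

lemma P_exp {u g φ : ℝ → ℂ} (hu : HX u g) (hφ : Continuous φ) (hc : HasCompactSupport φ) :
    ∃ a b c : ℝ, ∀ t : ℝ, P (u + (t : ℂ) • φ) =
      P u + 4 * t * (∫ x, ‖u x‖ ^ 2 * inner ℝ (u x) (φ x)) + a * t ^ 2 + b * t ^ 3 + c * t ^ 4 := by
  have hcu := hu.cont
  have key : ∀ F : ℂ → ℂ → ℝ, Continuous (fun x => F (u x) (φ x)) → (∀ z, F z 0 = 0) →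
      Integrable (fun x => F (u x) (φ x)) := by
    intro F hF h0
    apply hF.integrable_of_hasCompactSupport
    refine hc.mono fun x hx => ?_
    simp only [Function.mem_support] at hx ⊢
    intro h; rw [h] at hx; exact hx (h0 _)
  have i0 := hu.P_int
  have i1 := key (fun z w => ‖z‖ ^ 2 * inner ℝ z w) (by fun_prop) (by simp)
  have i2 := key (fun z w => 4 * (inner ℝ z w) ^ 2 + 2 * ‖z‖ ^ 2 * ‖w‖ ^ 2) (by fun_prop) (by simp)
  have i3 := key (fun z w => 4 * inner ℝ z w * ‖w‖ ^ 2) (by fun_prop) (by simp)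
  have i4 := key (fun z w => ‖w‖ ^ 4) (by fun_prop) (by simp)
  refine ⟨∫ x, (4 * (inner ℝ (u x) (φ x)) ^ 2 + 2 * ‖u x‖ ^ 2 * ‖φ x‖ ^ 2),
    ∫ x, 4 * inner ℝ (u x) (φ x) * ‖φ x‖ ^ 2, ∫ x, ‖φ x‖ ^ 4, fun t => ?_⟩
  · unfold P
    have : ∀ x, ‖(u + (t : ℂ) • φ) x‖ ^ 4 = ‖u x‖ ^ 4 + 4 * t * (‖u x‖ ^ 2 * inner ℝ (u x) (φ x))
        + t ^ 2 * (4 * (inner ℝ (u x) (φ x)) ^ 2 + 2 * ‖u x‖ ^ 2 * ‖φ x‖ ^ 2)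
        + t ^ 3 * (4 * inner ℝ (u x) (φ x) * ‖φ x‖ ^ 2) + t ^ 4 * ‖φ x‖ ^ 4 := by
      intro x
      have h := norm_exp (u x) (φ x) t
      calc ‖(u + (t : ℂ) • φ) x‖ ^ 4 = (‖u x + (t : ℂ) * φ x‖ ^ 2) ^ 2 := by
            simp only [Pi.add_apply, Pi.smul_apply, smul_eq_mul]; ring
        _ = _ := by rw [h]; ring
    simp only [this]
    have j1 : Integrable (fun x => ‖u x‖ ^ 4 + 4 * t * (‖u x‖ ^ 2 * inner ℝ (u x) (φ x))) :=
      i0.add (i1.const_mul _)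
    have j2 : Integrable (fun x => ‖u x‖ ^ 4 + 4 * t * (‖u x‖ ^ 2 * inner ℝ (u x) (φ x))
        + t ^ 2 * (4 * (inner ℝ (u x) (φ x)) ^ 2 + 2 * ‖u x‖ ^ 2 * ‖φ x‖ ^ 2)) :=
      j1.add (i2.const_mul _)
    have j3 : Integrable (fun x => ‖u x‖ ^ 4 + 4 * t * (‖u x‖ ^ 2 * inner ℝ (u x) (φ x))
        + t ^ 2 * (4 * (inner ℝ (u x) (φ x)) ^ 2 + 2 * ‖u x‖ ^ 2 * ‖φ x‖ ^ 2)
        + t ^ 3 * (4 * inner ℝ (u x) (φ x) * ‖φ x‖ ^ 2)) :=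
      j2.add (i3.const_mul _)
    rw [integral_add j3 (i4.const_mul _),
      integral_add j2 (i3.const_mul _),
      integral_add j1 (i2.const_mul _),
      integral_add i0 (i1.const_mul _), integral_const_mul, integral_const_mul,
      integral_const_mul, integral_const_mul, mul_comm (t ^ 2), mul_comm (t ^ 3), mul_comm (t ^ 4)]

lemma EL {lam V₀ α m : ℝ} {ψ g : ℝ → ℂ} (hψ : HX ψ g) (hN : I2 ψ = 1)
    (hF0 : FF lam V₀ α m ψ g = 0)
    (hF : ∀ φ : ℝ → ℂ, ContDiff ℝ 1 φ → HasCompactSupport φ → ∀ t : ℝ,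
      0 ≤ FF lam V₀ α m (ψ + (t : ℂ) • φ) (g + (t : ℂ) • deriv φ)) :
    ∃ h : ℝ → ℂ, Continuous h ∧ ∀ φ : ℝ → ℂ, ContDiff ℝ 1 φ → HasCompactSupport φ →
      (∫ x, inner ℝ (g x) (deriv φ x)) + ∫ x, inner ℝ (h x) (φ x) = 0 := by
  set q : ℝ := I2 g + I2 (xm ψ) - V₀ * W α ψ with hq
  have hcψ := hψ.cont
  refine ⟨fun x => (x ^ 2 - V₀ * Real.cos (α * x) ^ 2 + (q - 2 * m) + lam * ‖ψ x‖ ^ 2) • ψ x,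
    by fun_prop, fun φ hφ hc => ?_⟩
  have hφx := (inX_of_compact hφ hc).hx
  have hcφ := hφ.continuous
  obtain ⟨a, b, c, hP⟩ := P_exp hψ hcφ hc
  set A := ∫ x, inner ℝ (g x) (deriv φ x) with hA
  set B := ∫ x, inner ℝ (xm ψ x) (xm φ x) with hB
  set D := ∫ x, inner ℝ (cm α ψ x) (cm α φ x) with hD
  set N1 := ∫ x, inner ℝ (ψ x) (φ x) with hN1
  set P1 := ∫ x, ‖ψ x‖ ^ 2 * inner ℝ (ψ x) (φ x) with hP1
  have hW : ∀ t : ℝ, W α (ψ + (t : ℂ) • φ) = W α ψ + 2 * t * D + t ^ 2 * W α φ := by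
    intro t
    rw [W_eq, W_eq, W_eq, ← I2_exp (cm_mem α hψ.mu) (cm_mem α hφx.mu)]
    congr 1; ext x; simp [cm]; ring
  have hexp : ∀ t : ℝ, FF lam V₀ α m (ψ + (t : ℂ) • φ) (g + (t : ℂ) • deriv φ) =
      ((I2 g + 2 * t * A + t ^ 2 * I2 (deriv φ)) + (I2 (xm ψ) + 2 * t * B + t ^ 2 * I2 (xm φ))
        - V₀ * (W α ψ + 2 * t * D + t ^ 2 * W α φ)) * (1 + 2 * t * N1 + t ^ 2 * I2 φ)
      + lam / 2 * (P ψ + 4 * t * P1 + a * t ^ 2 + b * t ^ 3 + c * t ^ 4)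
      - m * (1 + 2 * t * N1 + t ^ 2 * I2 φ) ^ 2 := by
    intro t
    unfold FF
    rw [hP, hW, I2_exp hψ.mg hφx.mg, xm_add, xm_smul, I2_exp hψ.mx hφx.mx, I2_exp hψ.mu hφx.mu, hN]
  have hFF0 : q + lam / 2 * P ψ - m = 0 := by
    have := hF0
    unfold FF at this
    rw [hN] at this
    linarith
  -- first-order coefficient vanishes
  obtain ⟨a2, a3, a4, hpoly⟩ : ∃ a2 a3 a4 : ℝ, ∀ t : ℝ,
      FF lam V₀ α m (ψ + (t : ℂ) • φ) (g + (t : ℂ) • deriv φ) =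
      (2 * A + 2 * B - 2 * V₀ * D + 2 * q * N1 + 2 * lam * P1 - 4 * m * N1) * t
        + a2 * t ^ 2 + a3 * t ^ 3 + a4 * t ^ 4 := by
    refine ⟨q * I2 φ + (2 * A + 2 * B - 2 * V₀ * D) * (2 * N1) + (I2 (deriv φ) + I2 (xm φ) - V₀ * W α φ)
       + lam / 2 * a - m * (4 * N1 ^ 2 + 2 * I2 φ),
      (2 * A + 2 * B - 2 * V₀ * D) * I2 φ + (I2 (deriv φ) + I2 (xm φ) - V₀ * W α φ) * (2 * N1)
        + lam / 2 * b - m * (4 * N1 * I2 φ),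
      (I2 (deriv φ) + I2 (xm φ) - V₀ * W α φ) * I2 φ + lam / 2 * c - m * I2 φ ^ 2, fun t => ?_⟩
    rw [hexp]
    linear_combination hFF0 - (1 + 2 * t * N1 + t ^ 2 * I2 φ) * hq
  have hderiv : HasDerivAt (fun t : ℝ => (2 * A + 2 * B - 2 * V₀ * D + 2 * q * N1 + 2 * lam * P1 - 4 * m * N1) * t
        + a2 * t ^ 2 + a3 * t ^ 3 + a4 * t ^ 4)
      (2 * A + 2 * B - 2 * V₀ * D + 2 * q * N1 + 2 * lam * P1 - 4 * m * N1) 0 := by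
    have h1 := ((((hasDerivAt_id (0:ℝ)).const_mul
      (2 * A + 2 * B - 2 * V₀ * D + 2 * q * N1 + 2 * lam * P1 - 4 * m * N1)).add
      ((hasDerivAt_pow 2 (0:ℝ)).const_mul a2)).add ((hasDerivAt_pow 3 (0:ℝ)).const_mul a3)).add
      ((hasDerivAt_pow 4 (0:ℝ)).const_mul a4)
    refine (h1.congr_deriv (by simp)).congr_of_eventuallyEq (Eventually.of_forall fun t => ?_)
    simp
  have hmin : IsLocalMin (fun t : ℝ => (2 * A + 2 * B - 2 * V₀ * D + 2 * q * N1 + 2 * lam * P1 - 4 * m * N1) * t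
        + a2 * t ^ 2 + a3 * t ^ 3 + a4 * t ^ 4) 0 := by
    refine Eventually.of_forall fun t => ?_
    have := hF φ hφ hc t
    rw [hpoly] at this
    simpa using this
  have hzero := hmin.hasDerivAt_eq_zero hderiv
  -- identify integral
  have key : ∀ w : ℝ → ℝ, Continuous w → Integrable (fun x => w x * inner ℝ (ψ x) (φ x)) := by
    intro w hw
    apply Continuous.integrable_of_hasCompactSupport (by fun_prop)
    refine hc.mono fun x hx => ?_
    simp only [Function.mem_support] at hx ⊢
    intro h; simp [h] at hx
  have hB' : B = ∫ x, x ^ 2 * inner ℝ (ψ x) (φ x) := by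
    rw [hB]; congr 1; ext x
    simp only [xm]
    rw [← Complex.real_smul, ← Complex.real_smul, inner_smul_left, inner_smul_right]
    simp; ring
  have hD' : D = ∫ x, Real.cos (α * x) ^ 2 * inner ℝ (ψ x) (φ x) := by
    rw [hD]; congr 1; ext x
    simp only [cm]
    rw [← Complex.real_smul, ← Complex.real_smul, inner_smul_left, inner_smul_right]
    simp; ring
  have hfin : ∫ x, inner ℝ ((x ^ 2 - V₀ * Real.cos (α * x) ^ 2 + (q - 2 * m) + lam * ‖ψ x‖ ^ 2) • ψ x) (φ x)
      = B - V₀ * D + (q - 2 * m) * N1 + lam * P1 := by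
    have k1 := key (fun x => x ^ 2) (by fun_prop)
    have k2 := (key (fun x => Real.cos (α * x) ^ 2) (by fun_prop)).const_mul V₀
    have k3 : Integrable (fun x => (q - 2 * m) * inner ℝ (ψ x) (φ x)) :=
      key (fun x => q - 2 * m) (by fun_prop)
    have k4 := (key (fun x => ‖ψ x‖ ^ 2) (by fun_prop)).const_mul lam
    have k12 : Integrable (fun x => x ^ 2 * inner ℝ (ψ x) (φ x)
        - V₀ * (Real.cos (α * x) ^ 2 * inner ℝ (ψ x) (φ x))) := k1.sub k2
    have k123 : Integrable (fun x => x ^ 2 * inner ℝ (ψ x) (φ x)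
        - V₀ * (Real.cos (α * x) ^ 2 * inner ℝ (ψ x) (φ x)) + (q - 2 * m) * inner ℝ (ψ x) (φ x)) :=
      k12.add k3
    rw [hB', hD', hN1, hP1, ← integral_const_mul, ← integral_const_mul, ← integral_const_mul,
      ← integral_sub k1 k2, ← integral_add k12 k3, ← integral_add k123 k4]
    congr 1; ext x
    rw [inner_smul_left]
    simp; ring
  rw [hfin]
  linarith

lemma dbr {G : ℝ → ℝ} (hG : LocallyIntegrable G volume)
    (h : ∀ ζ φ : ℝ → ℝ, ContDiff ℝ 1 φ → HasCompactSupport φ → (∀ x, HasDerivAt φ (ζ x) x) →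
      ∫ x, ζ x * G x = 0) : ∃ c : ℝ, ∀ᵐ x, G x = c := by
  let b : ContDiffBump (0 : ℝ) := ⟨1, 2, by norm_num, by norm_num⟩
  set ρ : ℝ → ℝ := b.normed volume with hρ
  have hρc : Continuous ρ := b.continuous_normed
  have hρs : HasCompactSupport ρ := b.hasCompactSupport_normed
  have hρ1 : ∫ x, ρ x = 1 := b.integral_normed
  have hint : ∀ η : ℝ → ℝ, Continuous η → HasCompactSupport η → Integrable (fun x => η x * G x) := by
    intro η hη hηc
    simpa using hG.integrable_smul_left_of_hasCompactSupport hη hηc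
  set c := ∫ x, ρ x * G x with hc
  refine ⟨c, ?_⟩
  have main : ∀ᵐ x, G x - c = 0 := by
    apply ae_eq_zero_of_integral_contDiff_smul_eq_zero
      (hG.sub (locallyIntegrable_const c))
    intro η hη hηc
    have hηcont := hη.continuous
    set s := ∫ x, η x with hs
    set ζ : ℝ → ℝ := fun x => η x - s * ρ x with hζ
    have hζc : Continuous ζ := by fun_prop
    have hζs : HasCompactSupport ζ := hηc.sub hρs.mul_left
    have hηi : Integrable η := hηcont.integrable_of_hasCompactSupport hηc
    have hρi : Integrable ρ := hρc.integrable_of_hasCompactSupport hρs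
    have hζ0 : ∫ x, ζ x = 0 := by
      rw [hζ, integral_sub hηi (hρi.const_mul _), integral_const_mul, hρ1, hs]; ring
    obtain ⟨R', hR'⟩ := hζs.isCompact.isBounded.subset_closedBall 0
    set R := max R' 0 + 1 with hR
    have hsupp : ∀ x, ζ x ≠ 0 → -R < x ∧ x < R := by
      intro x hx
      have h1 := hR' (subset_tsupport _ hx)
      rw [mem_closedBall_zero_iff, Real.norm_eq_abs] at h1
      apply abs_lt.1
      linarith [le_max_left R' 0]
    set φ : ℝ → ℝ := fun x => ∫ t in (-R)..x, ζ t with hφ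
    have hder : ∀ x, HasDerivAt φ (ζ x) x := fun x =>
      intervalIntegral.integral_hasDerivAt_right (hζc.intervalIntegrable _ _)
        (hζc.stronglyMeasurableAtFilter _ _) hζc.continuousAt
    have hφ1 : ContDiff ℝ 1 φ := by
      rw [contDiff_one_iff_deriv]
      refine ⟨fun x => (hder x).differentiableAt, ?_⟩
      have : deriv φ = ζ := funext fun x => (hder x).deriv
      rw [this]; exact hζc
    have hφs : HasCompactSupport φ := by
      apply HasCompactSupport.intro (isCompact_Icc (a := -R) (b := R))
      intro x hx
      by_cases hxl : x < -R
      · simp only [hφ]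
        rw [intervalIntegral.integral_congr (g := fun _ => 0), intervalIntegral.integral_zero]
        intro t ht
        by_contra h0
        have h1 := hsupp t h0
        rw [uIcc_of_ge hxl.le] at ht
        linarith [ht.2, h1.1]
      · have hxr : R < x := by
          by_contra! h1; exact hx ⟨not_lt.1 hxl, h1⟩
        simp only [hφ]
        rw [intervalIntegral.integral_eq_integral_of_support_subset, hζ0]
        intro t ht
        have h1 := hsupp t ht
        exact ⟨h1.1, (h1.2.trans hxr).le⟩
    have h2 := h ζ φ hφ1 hφs hder
    have h3 : ∫ x, ζ x * G x = (∫ x, η x * G x) - s * c := by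
      rw [hc, ← integral_const_mul, ← integral_sub (hint η hηcont hηc) ((hint ρ hρc hρs).const_mul _)]
      congr 1; ext x; simp only [hζ]; ring
    have h4 : ∫ x, η x • (G x - c) = (∫ x, η x * G x) - s * c := by
      rw [hs, ← integral_mul_const, ← integral_sub (hint η hηcont hηc) (hηi.mul_const _)]
      congr 1; ext x; simp; ring
    exact h4.trans (h3.symm.trans h2)
  filter_upwards [main] with x hx
  linarith

lemma regularity {ψ g h : ℝ → ℂ} (hψ : HX ψ g) (hh : Continuous h)
    (hE : ∀ φ : ℝ → ℂ, ContDiff ℝ 1 φ → HasCompactSupport φ →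
      (∫ x, inner ℝ (g x) (deriv φ x)) + ∫ x, inner ℝ (h x) (φ x) = 0) :
    Differentiable ℝ ψ ∧ g =ᵐ[volume] deriv ψ := by
  set H : ℝ → ℂ := fun x => ∫ t in (0:ℝ)..x, h t with hH
  have hHd : ∀ x, HasDerivAt H (h x) x := fun x =>
    intervalIntegral.integral_hasDerivAt_right (hh.intervalIntegrable _ _)
        (hh.stronglyMeasurableAtFilter _ _) hh.continuousAt
  have hHc : Continuous H := continuous_iff_continuousAt.2 fun x => (hHd x).continuousAt
  have hgl : LocallyIntegrable (g - H) volume :=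
    (hψ.mg.locallyIntegrable (by norm_num)).sub hHc.locallyIntegrable
  have step : ∀ w : ℂ, ∃ c : ℝ, ∀ᵐ x, inner ℝ ((g - H) x) w = c := by
    intro w
    apply dbr
    · intro x
      obtain ⟨s, hs, hi⟩ := hgl x
      exact ⟨s, hs, hi.inner_const w⟩
    intro ζ φ hφ hφs hder
    have hd : deriv φ = ζ := funext fun x => (hder x).deriv
    have hζc : Continuous ζ := hd ▸ hφ.continuous_deriv le_rfl
    have hζs : HasCompactSupport ζ := hd ▸ hφs.deriv
    have hφc := hφ.continuous
    set Φ : ℝ → ℂ := fun x => φ x • w with hΦ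
    have hΦd : ∀ x, HasDerivAt Φ (ζ x • w) x := fun x => (hder x).smul_const w
    have hΦ1 : ContDiff ℝ 1 Φ := hφ.smul contDiff_const
    have hΦs : HasCompactSupport Φ := hφs.smul_right
    have hΦ' : deriv Φ = fun x => ζ x • w := funext fun x => (hΦd x).deriv
    have h1 := hE Φ hΦ1 hΦs
    rw [hΦ'] at h1
    have hprod : ∀ x, HasDerivAt (fun x => inner ℝ (H x) (Φ x))
        (inner ℝ (H x) (ζ x • w) + inner ℝ (h x) (Φ x)) x := fun x => (hHd x).inner ℝ (hΦd x)
    have hi1 : Integrable (fun x => inner ℝ (H x) (ζ x • w)) := by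
      apply Continuous.integrable_of_hasCompactSupport (by fun_prop)
      refine hζs.mono fun x hx => ?_
      simp only [Function.mem_support] at hx ⊢
      intro h; simp [h] at hx
    have hi2 : Integrable (fun x => inner ℝ (h x) (Φ x)) := by
      apply Continuous.integrable_of_hasCompactSupport (by fun_prop)
      refine hΦs.mono fun x hx => ?_
      simp only [Function.mem_support] at hx ⊢
      intro h; simp [h] at hx
    have hi3 : Integrable (fun x => inner ℝ (H x) (Φ x)) := by
      apply Continuous.integrable_of_hasCompactSupport (by fun_prop)
      refine hΦs.mono fun x hx => ?_
      simp only [Function.mem_support] at hx ⊢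
      intro h; simp [h] at hx
    have h2 := integral_eq_zero_of_hasDerivAt_of_integrable hprod (hi1.add hi2) hi3
    rw [integral_add hi1 hi2] at h2
    have hi4 : Integrable (fun x => inner ℝ (g x) (ζ x • w)) := by
      refine inner_int hψ.mg ?_
      have := (inX_of_compact hΦ1 hΦs).hx.mg
      rwa [hΦ'] at this
    have h3 : ∫ x, ζ x * inner ℝ ((g - H) x) w =
        (∫ x, inner ℝ (g x) (ζ x • w)) - ∫ x, inner ℝ (H x) (ζ x • w) := by
      rw [← integral_sub hi4 hi1]
      congr 1; ext x
      rw [← inner_sub_left, inner_smul_right]; rfl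
    rw [h3]; linarith
  obtain ⟨c1, hc1⟩ := step 1
  obtain ⟨c2, hc2⟩ := step Complex.I
  set c : ℂ := ⟨c1, c2⟩ with hc
  have hgc : ∀ᵐ x, g x = H x + c := by
    filter_upwards [hc1, hc2] with x h1 h2
    have e : g x - H x = c := by
      apply Complex.ext
      · simpa [Complex.inner] using h1
      · have h3 : -(H x).im + (g x).im = c2 := by simpa [Complex.inner] using h2
        simp only [Complex.sub_im, hc]
        linarith
    rw [← e]; ring
  have hd : ∀ x, HasDerivAt ψ (H x + c) x := by
    intro x
    have hcont : Continuous (fun x => H x + c) := by fun_prop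
    have e : ψ = fun y => ψ 0 + ∫ t in (0:ℝ)..y, (H t + c) := by
      ext y
      rw [← intervalIntegral.integral_congr_ae (f := g), ← hψ.ftc]
      · ring
      · filter_upwards [hgc] with t ht _ using ht
    rw [e]
    exact (intervalIntegral.integral_hasDerivAt_right (hcont.intervalIntegrable _ _)
        (hcont.stronglyMeasurableAtFilter _ _) hcont.continuousAt).const_add _
  refine ⟨fun x => (hd x).differentiableAt, ?_⟩
  filter_upwards [hgc] with x hx
  rw [hx, (hd x).deriv]

theorem exists_ground_state (lam V₀ α : ℝ) :
    ∃ ψmin : ℝ → ℂ, InSigma1 ψmin ∧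
      ∀ ψ : ℝ → ℂ, InSigma1 ψ → energy lam V₀ α ψmin ≤ energy lam V₀ α ψ := by
  obtain ⟨m, ψ, g, u, C, hmin, hψ, hN, hX, hC1, hC2, ht, htg, htx, hF0⟩ :=
    exists_weak_min lam V₀ α
  have hF : ∀ φ : ℝ → ℂ, ContDiff ℝ 1 φ → HasCompactSupport φ → ∀ t : ℝ,
      0 ≤ FF lam V₀ α m (ψ + (t : ℂ) • φ) (g + (t : ℂ) • deriv φ) := by
    intro φ hφ hc t
    have hφX := (inX_of_compact hφ hc).smul (t : ℂ)
    have hd : deriv ((t : ℂ) • φ) = (t : ℂ) • deriv φ := by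
      ext x
      rw [deriv_const_smul _ ((inX_of_compact hφ hc).1 x)]; rfl
    have hφx := hφX.hx
    rw [hd] at hφx
    have hlim := FF_tend lam V₀ α m (l := atTop) (f := fun n => u n + (t : ℂ) • φ)
      (h := fun n => deriv (u n) + (t : ℂ) • deriv φ)
      (C := 2 * C + 2 * (I2 ((t : ℂ) • φ) + I2 ((t : ℂ) • deriv φ)))
      (fun n => (hX n).hx.add hφx)
      (fun n => by
        have := I2_add_le (hX n).hx.mu hφx.mu
        linarith [hC1 n, I2_nonneg ((t : ℂ) • deriv φ)])
      (fun n => by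
        have := I2_add_le (hX n).hx.mg hφx.mg
        linarith [hC2 n, I2_nonneg ((t : ℂ) • φ)])
      (hψ.add hφx) (by simpa using ht) (by simpa using htg) (by simpa [xm_add] using htx)
    refine ge_of_tendsto' hlim fun n => ?_
    have := FF_nonneg hmin ((hX n).add hφX)
    have hd2 : deriv (u n + (t : ℂ) • φ) = deriv (u n) + (t : ℂ) • deriv φ := by
      rw [← hd]; ext x
      rw [deriv_add ((hX n).1 x) (hφX.1 x)]; rfl
    rwa [hd2] at this
  obtain ⟨h, hh, hE⟩ := EL hψ hN hF0 hF
  obtain ⟨hdiff, hae⟩ := regularity hψ hh hE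
  refine ⟨ψ, ⟨hψ.inX hdiff hae, hN⟩, fun v hv => ?_⟩
  refine le_trans (le_of_eq ?_) (hmin v hv)
  rw [energy_eq, ← I2_congr hae]
  unfold FF at hF0
  rw [hN] at hF0
  linarith
end

section
/- If λ ≥ 0, the set of ground states G = {ψ ∈ Σ₁ : E(ψ) = E_min} consists exactly of {e^{iθ}ψ_min : θ ∈ ℝ} for a unique positive, even function ψ_min ∈ Σ₁. -/
open MeasureTheory Real

/-- The set of ground states. -/
def groundStates (lam V₀ α : ℝ) : Set (ℝ → ℂ) :=
  {ψ | InSigma1 ψ ∧ ∀ φ : ℝ → ℂ, InSigma1 φ → energy lam V₀ α ψ ≤ energy lam V₀ α φ}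

open Filter Topology

/-! ### L² tools -/

/-- A function together with a weak derivative, in the energy space. -/
structure HP (f g : ℝ → ℝ) : Prop where
  m : MemLp f 2
  d : MemLp g 2
  x : MemLp (fun x => x * f x) 2
  q : MemLp (fun x => f x ^ 2) 2

lemma memLp_cos_mul (α : ℝ) {f : ℝ → ℝ} (hf : MemLp f 2) :
    MemLp (fun x => Real.cos (α * x) * f x) 2 := by
  refine hf.of_le ?_ ?_
  · exact (by fun_prop : Continuous fun x : ℝ => Real.cos (α * x)).aestronglyMeasurable.mul hf.1
  · refine ae_of_all _ fun x => ?_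
    rw [norm_mul]
    have := Real.abs_cos_le_one (α * x)
    exact mul_le_of_le_one_left (norm_nonneg _) this

lemma l2_expand {f h : ℝ → ℝ} (hf : MemLp f 2) (hh : MemLp h 2) (s : ℝ) :
    ∫ x, (f x + s * h x) ^ 2 = (∫ x, f x ^ 2) + 2 * s * (∫ x, f x * h x) + s ^ 2 * ∫ x, h x ^ 2 := by
  have h1 := hf.integrable_sq
  have h2 := hh.integrable_sq
  have h3 : Integrable (fun x => f x * h x) := hf.integrable_mul hh
  have : (fun x => (f x + s * h x) ^ 2) =
      fun x => f x ^ 2 + (2 * s) * (f x * h x) + s ^ 2 * h x ^ 2 := by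
    funext x; ring
  have h4 : Integrable (fun x => f x ^ 2 + (2 * s) * (f x * h x)) := h1.add (h3.const_mul _)
  rw [this, integral_add h4 (h2.const_mul _),
    integral_add h1 (h3.const_mul _), integral_const_mul, integral_const_mul]

lemma l2_parallelogram {f h : ℝ → ℝ} (hf : MemLp f 2) (hh : MemLp h 2) :
    ∫ x, (f x + h x) ^ 2 = 2 * (∫ x, f x ^ 2) + 2 * (∫ x, h x ^ 2) - ∫ x, (f x - h x) ^ 2 := by
  have h1 := l2_expand hf hh 1
  have h2 := l2_expand hf hh (-1)
  simp only [one_mul, neg_one_mul, ← sub_eq_add_neg] at h1 h2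
  rw [h1, h2]; ring

lemma l2_cs {f h : ℝ → ℝ} (hf : MemLp f 2) (hh : MemLp h 2) :
    (∫ x, f x * h x) ^ 2 ≤ (∫ x, f x ^ 2) * ∫ x, h x ^ 2 := by
  have key : ∀ s : ℝ, 0 ≤ (∫ x, h x ^ 2) * (s * s) + (2 * (∫ x, f x * h x)) * s + ∫ x, f x ^ 2 := by
    intro s
    have := l2_expand hf hh s
    have h0 : 0 ≤ ∫ x, (f x + s * h x) ^ 2 := integral_nonneg fun x => sq_nonneg _
    nlinarith
  have := discrim_le_zero key
  unfold discrim at this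
  nlinarith

lemma l2_tendsto {f : ℕ → ℝ → ℝ} {u : ℝ → ℝ} (hf : ∀ n, MemLp (f n) 2) (hu : MemLp u 2)
    (h : Tendsto (fun n => ∫ x, (f n x - u x) ^ 2) atTop (𝓝 0)) :
    Tendsto (fun n => ∫ x, f n x ^ 2) atTop (𝓝 (∫ x, u x ^ 2)) := by
  have e : ∀ n, ∫ x, f n x ^ 2 = (∫ x, u x ^ 2) + 2 * (∫ x, u x * (f n x - u x))
      + ∫ x, (f n x - u x) ^ 2 := by
    intro n
    have := l2_expand hu ((hf n).sub hu) 1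
    simp only [Pi.sub_apply, one_mul, one_pow, mul_one] at this
    rw [← this]
    congr 1; funext x; ring
  have c : Tendsto (fun n => ∫ x, u x * (f n x - u x)) atTop (𝓝 0) := by
    have b : ∀ n, |∫ x, u x * (f n x - u x)| ≤ √((∫ x, u x ^ 2) * ∫ x, (f n x - u x) ^ 2) := by
      intro n
      exact Real.abs_le_sqrt (l2_cs hu ((hf n).sub hu))
    refine squeeze_zero_norm b ?_
    have := (h.const_mul (∫ x, u x ^ 2)).sqrt
    simpa using this
  simp_rw [e]
  simpa using ((c.const_mul 2).const_add (∫ x, u x ^ 2)).add h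

lemma l2_complete {f : ℕ → ℝ → ℝ} (hf : ∀ n, MemLp (f n) 2)
    (hc : ∀ ε > 0, ∃ N, ∀ n ≥ N, ∀ m ≥ N, ∫ x, (f n x - f m x) ^ 2 < ε) :
    ∃ g, MemLp g 2 ∧ Tendsto (fun n => ∫ x, (f n x - g x) ^ 2) atTop (𝓝 0) ∧
      ∃ ns : ℕ → ℕ, StrictMono ns ∧
        ∀ᵐ x, Tendsto (fun i => f (ns i) x) atTop (𝓝 (g x)) := by
  have dist_sq : ∀ {a b : ℝ → ℝ} (ha : MemLp a 2) (hb : MemLp b 2),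
      dist (ha.toLp a) (hb.toLp b) ^ 2 = ∫ x, (a x - b x) ^ 2 := by
    intro a b ha hb
    rw [dist_eq_norm, ← MemLp.toLp_sub, ← real_inner_self_eq_norm_sq, L2.inner_def]
    refine integral_congr_ae ?_
    filter_upwards [(ha.sub hb).coeFn_toLp] with x hx
    simp only [hx, Pi.sub_apply, real_inner_self_eq_norm_sq, Real.norm_eq_abs, sq_abs]
  have hcs : CauchySeq (fun n => (hf n).toLp (f n)) := by
    rw [Metric.cauchySeq_iff]
    intro ε hε
    obtain ⟨N, hN⟩ := hc (ε ^ 2) (by positivity)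
    refine ⟨N, fun n hn m hm => ?_⟩
    have := hN n hn m hm
    rw [← dist_sq (hf n) (hf m)] at this
    exact lt_of_pow_lt_pow_left₀ 2 hε.le this
  obtain ⟨G, hG⟩ := cauchySeq_tendsto_of_complete hcs
  have hGm := Lp.memLp G
  have hGe : hGm.toLp G = G := Lp.toLp_coeFn G hGm
  refine ⟨G, hGm, ?_, ?_⟩
  · have h1 : Tendsto (fun n => dist ((hf n).toLp (f n)) (hGm.toLp G) ^ 2) atTop (𝓝 0) := by
      rw [hGe]
      have := (tendsto_iff_dist_tendsto_zero.1 hG).pow 2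
      simpa using this
    simpa only [dist_sq] using h1
  · obtain ⟨ns, h1, h2⟩ := (tendstoInMeasure_of_tendsto_Lp hG).exists_seq_tendsto_ae
    refine ⟨ns, h1, ?_⟩
    have h3 : ∀ᵐ x, ∀ n, ((hf n).toLp (f n) : ℝ → ℝ) x = f n x :=
      ae_all_iff.2 fun n => (hf n).coeFn_toLp
    filter_upwards [h2, h3] with x hx hx3
    simpa only [hx3] using hx

lemma l2_complete_ptwise {f : ℕ → ℝ → ℝ} {u : ℝ → ℝ} (hf : ∀ n, MemLp (f n) 2)
    (hc : ∀ ε > 0, ∃ N, ∀ n ≥ N, ∀ m ≥ N, ∫ x, (f n x - f m x) ^ 2 < ε)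
    (hp : ∀ x, Tendsto (fun n => f n x) atTop (𝓝 (u x))) :
    MemLp u 2 ∧ Tendsto (fun n => ∫ x, (f n x - u x) ^ 2) atTop (𝓝 0) := by
  obtain ⟨g, hg, ht, ns, hns, hae⟩ := l2_complete hf hc
  have e : g =ᵐ[volume] u := by
    filter_upwards [hae] with x hx
    exact tendsto_nhds_unique hx ((hp x).comp hns.tendsto_atTop)
  refine ⟨hg.ae_eq e, ?_⟩
  convert ht using 2 with n
  refine integral_congr_ae ?_
  filter_upwards [e] with x hx
  rw [hx]

/-! ### Real energy functional -/

lemma HP.add_smul {f g h k : ℝ → ℝ} (H : HP f g) (H' : HP h k) (s : ℝ) :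
    HP (fun x => f x + s * h x) (fun x => g x + s * k x) := by
  refine ⟨H.m.add (H'.m.const_mul s), H.d.add (H'.d.const_mul s), ?_, ?_⟩
  · convert H.x.add (H'.x.const_mul s) using 1
    funext x; simp; ring
  · have := (H.q.add (H'.q.const_mul (s ^ 2)))
    refine this.of_le_mul (c := 2) ?_ ?_
    · exact (H.m.add (H'.m.const_mul s)).1.pow 2
    · refine ae_of_all _ fun x => ?_
      simp only [Pi.add_apply, Real.norm_eq_abs]
      rw [abs_of_nonneg (sq_nonneg _), abs_of_nonneg (by positivity)]
      nlinarith [sq_nonneg (f x - s * h x)]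

lemma HP.smul {f g : ℝ → ℝ} (H : HP f g) (s : ℝ) :
    HP (fun x => s * f x) (fun x => s * g x) := by
  refine ⟨H.m.const_mul s, H.d.const_mul s, ?_, ?_⟩
  · convert H.x.const_mul s using 1
    funext x; ring
  · convert H.q.const_mul (s ^ 2) using 1
    funext x; ring

/-- quadratic part of the energy -/
noncomputable def QQ (V α : ℝ) (f g : ℝ → ℝ) : ℝ :=
  (∫ x, g x ^ 2) + (∫ x, (x * f x) ^ 2) - V * ∫ x, (Real.cos (α * x) * f x) ^ 2

noncomputable def BB (V α : ℝ) (f g h k : ℝ → ℝ) : ℝ :=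
  (∫ x, g x * k x) + (∫ x, (x * f x) * (x * h x))
    - V * ∫ x, (Real.cos (α * x) * f x) * (Real.cos (α * x) * h x)

noncomputable def MM (f : ℝ → ℝ) : ℝ := ∫ x, f x ^ 2

noncomputable def NN (f : ℝ → ℝ) : ℝ := ∫ x, (f x ^ 2) ^ 2

lemma QQ_expand (V α : ℝ) {f g h k : ℝ → ℝ} (H : HP f g) (H' : HP h k) (s : ℝ) :
    QQ V α (fun x => f x + s * h x) (fun x => g x + s * k x) =
      QQ V α f g + 2 * s * BB V α f g h k + s ^ 2 * QQ V α h k := by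
  unfold QQ BB
  have h1 := l2_expand H.d H'.d s
  have h2 := l2_expand H.x H'.x s
  have h3 := l2_expand (memLp_cos_mul α H.m) (memLp_cos_mul α H'.m) s
  have e2 : (fun x => (x * (f x + s * h x)) ^ 2) = fun x => (x * f x + s * (x * h x)) ^ 2 := by
    funext x; ring
  have e3 : (fun x => (Real.cos (α * x) * (f x + s * h x)) ^ 2) =
    fun x => (Real.cos (α * x) * f x + s * (Real.cos (α * x) * h x)) ^ 2 := by
    funext x; ring
  rw [e2, e3, h1, h2, h3]; ring

lemma MM_nonneg (f : ℝ → ℝ) : 0 ≤ MM f := integral_nonneg fun _ => sq_nonneg _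
lemma NN_nonneg (f : ℝ → ℝ) : 0 ≤ NN f := integral_nonneg fun _ => sq_nonneg _

lemma cos_le_MM (α : ℝ) {f : ℝ → ℝ} (hf : MemLp f 2) :
    ∫ x, (Real.cos (α * x) * f x) ^ 2 ≤ MM f := by
  refine integral_mono (memLp_cos_mul α hf).integrable_sq hf.integrable_sq fun x => ?_
  simp only [mul_pow]
  exact mul_le_of_le_one_left (sq_nonneg _) (Real.cos_sq_le_one _)

lemma AB_le (V α : ℝ) {f g : ℝ → ℝ} (hf : MemLp f 2) :
    (∫ x, g x ^ 2) + (∫ x, (x * f x) ^ 2) ≤ QQ V α f g + |V| * MM f := by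
  have h1 := cos_le_MM α hf
  have h0 : 0 ≤ ∫ x, (Real.cos (α * x) * f x) ^ 2 := integral_nonneg fun _ => sq_nonneg _
  unfold QQ
  have : V * ∫ x, (Real.cos (α * x) * f x) ^ 2 ≤ |V| * MM f :=
    (mul_le_mul_of_nonneg_right (le_abs_self V) h0).trans
      (mul_le_mul_of_nonneg_left h1 (abs_nonneg V))
  linarith

lemma QQ_ge (V α : ℝ) {f g : ℝ → ℝ} (hf : MemLp f 2) : -(|V| * MM f) ≤ QQ V α f g := by
  have := AB_le V α (g := g) hf
  have h1 : 0 ≤ ∫ x, g x ^ 2 := integral_nonneg fun _ => sq_nonneg _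
  have h2 : 0 ≤ ∫ x, (x * f x) ^ 2 := integral_nonneg fun _ => sq_nonneg _
  linarith

/-- bridge to complex functions -/
lemma deriv_ofReal {f : ℝ → ℝ} (hf : Differentiable ℝ f) (x : ℝ) :
    deriv (fun ξ => (f ξ : ℂ)) x = ((deriv f x : ℝ) : ℂ) :=
  ((hf x).hasDerivAt.ofReal_comp).deriv

lemma inX_ofReal {f : ℝ → ℝ} (hf : Differentiable ℝ f) :
    InX (fun ξ => (f ξ : ℂ)) ↔ HP f (deriv f) := by
  have hm : AEStronglyMeasurable f volume := hf.continuous.aestronglyMeasurable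
  have hd : Differentiable ℝ (fun ξ => (f ξ : ℂ)) :=
    fun x => ((hf x).hasDerivAt.ofReal_comp).differentiableAt
  unfold InX
  simp only [deriv_ofReal hf, Complex.norm_real, Real.norm_eq_abs, sq_abs]
  have e4 : ∀ x, |f x| ^ 4 = (f x ^ 2) ^ 2 := fun x => by
    rw [← sq_abs (f x)]; ring
  have ex : ∀ x, x ^ 2 * f x ^ 2 = (x * f x) ^ 2 := fun x => by ring
  simp only [e4, ex]
  rw [← memLp_two_iff_integrable_sq hm,
    ← memLp_two_iff_integrable_sq (measurable_deriv f).aestronglyMeasurable,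
    ← memLp_two_iff_integrable_sq (f := fun x => x * f x)
      ((continuous_id.mul hf.continuous).aestronglyMeasurable),
    ← memLp_two_iff_integrable_sq (f := fun x => f x ^ 2)
      ((hf.continuous.pow 2).aestronglyMeasurable)]
  exact ⟨fun ⟨_, a, b, c, d⟩ => ⟨a, b, c, d⟩, fun ⟨a, b, c, d⟩ => ⟨hd, a, b, c, d⟩⟩

lemma mass_ofReal (f : ℝ → ℝ) : (∫ ξ, ‖(f ξ : ℂ)‖ ^ 2) = MM f := by
  simp only [Complex.norm_real, Real.norm_eq_abs, sq_abs, MM]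

lemma energy_ofReal (lam V α : ℝ) {f : ℝ → ℝ} (hf : Differentiable ℝ f) :
    energy lam V α (fun ξ => (f ξ : ℂ)) = QQ V α f (deriv f) + lam / 2 * NN f := by
  have e4 : ∀ x, |f x| ^ 4 = (f x ^ 2) ^ 2 := fun x => by
    rw [← sq_abs (f x)]; ring
  simp only [energy, QQ, NN, deriv_ofReal hf, Complex.norm_real, Real.norm_eq_abs, sq_abs, e4,
    mul_pow]
  ring

/-- homogeneous form of minimality -/
lemma homog {lam V α m : ℝ} (hlam : 0 ≤ lam)
    (hm : ∀ φ : ℝ → ℂ, InSigma1 φ → m ≤ energy lam V α φ)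
    {f : ℝ → ℝ} (hf : Differentiable ℝ f) (H : HP f (deriv f)) :
    m * MM f ^ 2 ≤ QQ V α f (deriv f) * MM f + lam / 2 * NN f := by
  rcases (MM_nonneg f).eq_or_lt with h0 | h0
  · rw [← h0]
    have := NN_nonneg f
    simp; positivity
  · set c := (√(MM f))⁻¹ with hc
    have hc2 : c ^ 2 * MM f = 1 := by
      rw [hc, inv_pow, Real.sq_sqrt h0.le, inv_mul_cancel₀ h0.ne']
    have hd : Differentiable ℝ (fun x => c * f x) := hf.const_mul c
    have hdd : deriv (fun x => c * f x) = fun x => c * deriv f x := by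
      funext x; exact deriv_const_mul c (hf x)
    have hS : InSigma1 (fun ξ => ((c * f ξ : ℝ) : ℂ)) := by
      refine ⟨(inX_ofReal hd).2 (by rw [hdd]; exact H.smul c), ?_⟩
      rw [mass_ofReal (fun x => c * f x)]
      simp only [MM, mul_pow] at hc2 ⊢
      rw [integral_const_mul, hc2]
    have := hm _ hS
    rw [energy_ofReal lam V α hd, hdd] at this
    have e1 : QQ V α (fun x => c * f x) (fun x => c * deriv f x) = c ^ 2 * QQ V α f (deriv f) := by
      simp only [QQ, mul_pow, mul_left_comm _ (c ^ 2), integral_const_mul]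
      ring
    have e2 : NN (fun x => c * f x) = c ^ 4 * NN f := by
      simp only [NN, mul_pow, integral_const_mul]
      ring
    rw [e1, e2] at this
    have h2 := mul_le_mul_of_nonneg_right this (sq_nonneg (MM f))
    calc m * MM f ^ 2 ≤ _ := h2
      _ = (c ^ 2 * MM f) * (QQ V α f (deriv f) * MM f) + lam / 2 * ((c ^ 2 * MM f) ^ 2 * NN f) := by
        ring
      _ = _ := by rw [hc2]; ring

/-! ### Convexity in the density -/

lemma cos_integrable (α : ℝ) {f : ℝ → ℝ} (hf : Integrable f) :
    Integrable (fun x => Real.cos (α * x) ^ 2 * f x) := by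
  refine hf.norm.mono' ?_ ?_
  · exact (by fun_prop : Continuous fun x : ℝ => Real.cos (α * x) ^ 2).aestronglyMeasurable.mul hf.1
  · refine ae_of_all _ fun x => ?_
    rw [norm_mul, Real.norm_eq_abs, abs_of_nonneg (sq_nonneg _)]
    exact mul_le_of_le_one_left (norm_nonneg _) (Real.cos_sq_le_one _)

lemma integral_mix {f g : ℝ → ℝ} (hf : Integrable f) (hg : Integrable g) (t : ℝ) :
    ∫ x, ((1 - t) * f x + t * g x) = (1 - t) * (∫ x, f x) + t * ∫ x, g x := by
  rw [integral_add (hf.const_mul _) (hg.const_mul _), integral_const_mul, integral_const_mul]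

lemma convex_mix {lam V α t : ℝ} (hlam : 0 ≤ lam) (ht0 : 0 < t) (ht1 : t < 1)
    {ψ : ℝ → ℂ} (hψ : InSigma1 ψ) {w : ℝ → ℝ} (hw : Differentiable ℝ w)
    (hwS : InSigma1 (fun ξ => (w ξ : ℂ))) (hpos : ∀ x, 0 < w x) :
    ∃ φ : ℝ → ℝ, Differentiable ℝ φ ∧ (∀ x, 0 < φ x) ∧ InSigma1 (fun ξ => (φ ξ : ℂ)) ∧
      ∃ D : ℝ → ℝ, Integrable D ∧ (∀ x, 0 ≤ D x) ∧
        (∀ x, D x = 0 → (w x : ℂ) * deriv ψ x = ((deriv w x : ℝ) : ℂ) * ψ x) ∧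
        energy lam V α (fun ξ => (φ ξ : ℂ)) + ∫ x, D x
          ≤ (1 - t) * energy lam V α ψ + t * energy lam V α (fun ξ => (w ξ : ℂ)) := by
  obtain ⟨⟨hψd, hψ2, hψ', hψx, hψ4⟩, hψ1⟩ := hψ
  obtain ⟨⟨-, hw2, hw', hwx, hw4⟩, hw1⟩ := hwS
  simp only [deriv_ofReal hw, Complex.norm_real, Real.norm_eq_abs, sq_abs] at hw2 hw' hwx hw1
  have e4 : ∀ x, |w x| ^ 4 = (w x ^ 2) ^ 2 := fun x => by
    rw [← sq_abs (w x)]; ring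
  simp only [Complex.norm_real, Real.norm_eq_abs, e4] at hw4
  have ht1' : 0 < 1 - t := by linarith
  set ρ : ℝ → ℝ := fun x => (1 - t) * ‖ψ x‖ ^ 2 + t * w x ^ 2 with hρ
  have hρpos : ∀ x, 0 < ρ x := fun x => by
    have := hpos x
    simp only [hρ]; positivity
  set N : ℝ → ℝ := fun x => (1 - t) * inner ℝ (ψ x) (deriv ψ x) + t * (w x * deriv w x) with hN
  have hρd : ∀ x, HasDerivAt ρ (2 * N x) x := by
    intro x
    have h1 := ((hψd x).hasDerivAt.norm_sq).const_mul (1 - t)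
    have h2 := ((hw x).hasDerivAt.fun_pow 2).const_mul t
    refine HasDerivAt.congr_deriv (f := ρ) (h1.add h2) ?_
    simp only [hN]; push_cast; ring
  set φ : ℝ → ℝ := fun x => √(ρ x) with hφ
  have hφpos : ∀ x, 0 < φ x := fun x => Real.sqrt_pos.2 (hρpos x)
  have hφsq : ∀ x, φ x ^ 2 = ρ x := fun x => Real.sq_sqrt (hρpos x).le
  have hφD : ∀ x, HasDerivAt φ (N x / φ x) x := by
    intro x
    convert (hρd x).sqrt (hρpos x).ne' using 1
    have := (hφpos x).ne'
    simp only [hφ] at this ⊢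
    field_simp
  have hφd : Differentiable ℝ φ := fun x => (hφD x).differentiableAt
  have hφderiv : ∀ x, deriv φ x = N x / φ x := fun x => (hφD x).deriv
  -- the defect
  set R : ℝ → ℝ := fun x => (1 - t) * ‖deriv ψ x‖ ^ 2 + t * (deriv w x) ^ 2 with hR
  set D : ℝ → ℝ := fun x => R x - deriv φ x ^ 2 with hD
  have hdef : ∀ x, t * (1 - t) * ‖(w x : ℂ) * deriv ψ x - ((deriv w x : ℝ) : ℂ) * ψ x‖ ^ 2
      ≤ ρ x * D x := by
    intro x
    have e1 : ρ x * D x = ρ x * R x - N x ^ 2 := by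
      have h0 := (hρpos x).ne'
      simp only [hD, hφderiv, div_pow, hφsq]
      field_simp
    rw [e1]
    simp only [hρ, hR, hN]
    have hin : inner ℝ (ψ x) (deriv ψ x) = (ψ x).re * (deriv ψ x).re + (ψ x).im * (deriv ψ x).im := by
      rw [Complex.inner]; simp [Complex.mul_re]; ring
    rw [hin]
    simp only [← Complex.normSq_eq_norm_sq, Complex.normSq_apply, Complex.sub_re, Complex.sub_im,
      Complex.mul_re, Complex.mul_im, Complex.ofReal_re, Complex.ofReal_im]
    nlinarith [mul_nonneg (sq_nonneg (1 - t))
      (sq_nonneg ((ψ x).re * (deriv ψ x).im - (ψ x).im * (deriv ψ x).re))]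
  have hD0 : ∀ x, 0 ≤ D x := by
    intro x
    have h1 : 0 ≤ ρ x * D x := le_trans (by positivity) (hdef x)
    exact nonneg_of_mul_nonneg_right h1 (hρpos x)
  have hRi : Integrable R := (hψ'.const_mul _).add (hw'.const_mul _)
  have hφ'i : Integrable (fun x => deriv φ x ^ 2) := by
    refine hRi.mono' ((measurable_deriv φ).pow_const 2).aestronglyMeasurable ?_
    refine ae_of_all _ fun x => ?_
    rw [Real.norm_eq_abs, abs_of_nonneg (sq_nonneg _)]
    have := hD0 x
    simp only [hD] at this
    linarith
  have hDi : Integrable D := hRi.sub hφ'i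
  have hq : ∀ x, ρ x ^ 2 ≤ (1 - t) * ‖ψ x‖ ^ 4 + t * (w x ^ 2) ^ 2 := by
    intro x
    simp only [hρ]
    have e : ‖ψ x‖ ^ 4 = (‖ψ x‖ ^ 2) ^ 2 := by ring
    rw [e]
    nlinarith [mul_nonneg (mul_nonneg ht0.le ht1'.le) (sq_nonneg (‖ψ x‖ ^ 2 - w x ^ 2))]
  have hqi : Integrable (fun x => (1 - t) * ‖ψ x‖ ^ 4 + t * (w x ^ 2) ^ 2) :=
    (hψ4.const_mul _).add (hw4.const_mul _)
  have hρc : Continuous ρ := continuous_iff_continuousAt.2 fun x => (hρd x).continuousAt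
  have hρ2i : Integrable (fun x => ρ x ^ 2) := by
    refine hqi.mono' (hρc.pow 2).aestronglyMeasurable ?_
    refine ae_of_all _ fun x => ?_
    rw [Real.norm_eq_abs, abs_of_nonneg (sq_nonneg _)]
    exact hq x
  have hρi : Integrable ρ := (hψ2.const_mul _).add (hw2.const_mul _)
  have ex : ∀ x, x ^ 2 * ρ x = (1 - t) * (x ^ 2 * ‖ψ x‖ ^ 2) + t * (x ^ 2 * w x ^ 2) := by
    intro x; simp only [hρ]; ring
  have ec : ∀ x, Real.cos (α * x) ^ 2 * ρ x = (1 - t) * (Real.cos (α * x) ^ 2 * ‖ψ x‖ ^ 2)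
      + t * (Real.cos (α * x) ^ 2 * w x ^ 2) := by
    intro x; simp only [hρ]; ring
  have e4' : ∀ x, |φ x| ^ 4 = ρ x ^ 2 := fun x => by
    rw [← hφsq, ← sq_abs (φ x)]; ring
  refine ⟨φ, hφd, hφpos, ⟨?_, ?_⟩, D, hDi, hD0, ?_, ?_⟩
  · refine ⟨fun x => ((hφd x).hasDerivAt.ofReal_comp).differentiableAt, ?_⟩
    simp only [deriv_ofReal hφd, Complex.norm_real, Real.norm_eq_abs, sq_abs, hφsq, e4']
    refine ⟨hρi, hφ'i, ?_, hρ2i⟩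
    simp only [ex]
    exact (hψx.const_mul _).add (hwx.const_mul _)
  · simp only [Complex.norm_real, Real.norm_eq_abs, sq_abs, hφsq]
    rw [integral_mix hψ2 hw2 t, hψ1, hw1]; ring
  · intro x hx
    have := hdef x
    rw [hx, mul_zero] at this
    have h0 : 0 < t * (1 - t) := by positivity
    have h2 : ‖(w x : ℂ) * deriv ψ x - ((deriv w x : ℝ) : ℂ) * ψ x‖ ^ 2 ≤ 0 := by
      by_contra hcon
      push Not at hcon
      nlinarith [mul_pos h0 hcon]
    have h3 : ‖(w x : ℂ) * deriv ψ x - ((deriv w x : ℝ) : ℂ) * ψ x‖ = 0 :=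
      pow_eq_zero_iff (two_ne_zero) |>.1 (le_antisymm h2 (sq_nonneg _))
    exact sub_eq_zero.1 (norm_eq_zero.1 h3)
  · unfold energy
    simp only [deriv_ofReal hφd, deriv_ofReal hw, Complex.norm_real, Real.norm_eq_abs, sq_abs,
      hφsq, e4', e4]
    simp only [ex, ec]
    rw [integral_mix hψx hwx, integral_mix (cos_integrable α hψ2) (cos_integrable α hw2)]
    have i1 : ∫ x, D x = (1 - t) * (∫ x, ‖deriv ψ x‖ ^ 2) + t * (∫ x, deriv w x ^ 2)
        - ∫ x, deriv φ x ^ 2 := by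
      rw [← integral_mix hψ' hw']
      exact integral_sub hRi hφ'i
    have i2 : ∫ x, ρ x ^ 2 ≤ (1 - t) * (∫ x, ‖ψ x‖ ^ 4) + t * ∫ x, (w x ^ 2) ^ 2 := by
      rw [← integral_mix hψ4 hw4]
      exact integral_mono hρ2i hqi hq
    rw [i1]
    nlinarith [mul_le_mul_of_nonneg_left i2 (by linarith : 0 ≤ lam / 2)]

/-! ### Uniqueness given a positive minimizer -/

lemma unique_phase {lam V α : ℝ} (hlam : 0 ≤ lam) {w : ℝ → ℝ} (hw : Differentiable ℝ w)
    (hwS : InSigma1 (fun ξ => (w ξ : ℂ))) (hpos : ∀ x, 0 < w x)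
    (hmin : ∀ φ : ℝ → ℂ, InSigma1 φ → energy lam V α (fun ξ => (w ξ : ℂ)) ≤ energy lam V α φ)
    {ψ : ℝ → ℂ} (hψ : InSigma1 ψ)
    (hE : energy lam V α ψ ≤ energy lam V α (fun ξ => (w ξ : ℂ))) :
    ∃ c : ℂ, ‖c‖ = 1 ∧ ψ = fun x => c * (w x : ℂ) := by
  obtain ⟨φ, -, -, hφS, D, hDi, hD0, hDz, hen⟩ :=
    convex_mix (V := V) (α := α) hlam (by norm_num : (0 : ℝ) < 1 / 2) (by norm_num) hψ hw hwS hpos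
  have h1 := hmin _ hφS
  have h2 : ∫ x, D x = 0 := le_antisymm (by linarith) (integral_nonneg hD0)
  have h3 : D =ᵐ[volume] 0 := (integral_eq_zero_iff_of_nonneg hD0 hDi).1 h2
  have hψd := hψ.1.1
  have hwc : ∀ x, (w x : ℂ) ≠ 0 := fun x => by exact_mod_cast (hpos x).ne'
  set f : ℝ → ℂ := fun x => ψ x / (w x : ℂ) with hf
  set f' : ℝ → ℂ := fun x => (deriv ψ x * (w x : ℂ) - ψ x * ((deriv w x : ℝ) : ℂ)) / (w x : ℂ) ^ 2 with hf'
  have hfd : ∀ x, HasDerivAt f (f' x) x := fun x =>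
    (hψd x).hasDerivAt.div ((hw x).hasDerivAt.ofReal_comp) (hwc x)
  have hf0 : f' =ᵐ[volume] fun _ => (0 : ℂ) := by
    filter_upwards [h3] with x hx
    have := hDz x hx
    simp only [hf']
    rw [mul_comm (deriv ψ x), this, mul_comm (ψ x), sub_self, zero_div]
  have hconst : ∀ x, f x = f 0 := by
    intro x
    have hi : IntervalIntegrable f' volume 0 x :=
      ((integrable_zero ℝ ℂ volume).congr hf0.symm).intervalIntegrable
    have := intervalIntegral.integral_eq_sub_of_hasDerivAt (a := 0) (b := x) (fun y _ => hfd y) hi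
    rw [intervalIntegral.integral_congr_ae (g := fun _ => (0 : ℂ))
      (by filter_upwards [hf0] with y hy _ using hy)] at this
    simp at this
    exact (sub_eq_zero.1 this.symm)
  have hψe : ψ = fun x => f 0 * (w x : ℂ) := by
    funext x
    rw [← hconst x]; simp only [hf]
    field_simp [hwc x]
  refine ⟨f 0, ?_, hψe⟩
  have m1 := hψ.2
  have m2 := hwS.2
  rw [hψe] at m1
  simp only [norm_mul, mul_pow] at m1
  rw [integral_const_mul, m2, mul_one] at m1
  nlinarith [norm_nonneg (f 0)]

/-! ### A Gaussian trial state -/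

lemma exists_trial : ∃ w : ℝ → ℝ, Differentiable ℝ w ∧ (∀ x, 0 < w x) ∧
    InSigma1 (fun ξ => (w ξ : ℂ)) := by
  have g0 : Integrable (fun x : ℝ => rexp (-1 * x ^ 2)) := integrable_exp_neg_mul_sq one_pos
  have g2 : Integrable (fun x : ℝ => x ^ 2 * rexp (-1 * x ^ 2)) := by
    simpa using integrable_rpow_mul_exp_neg_mul_sq (b := 1) one_pos (s := 2) (by norm_num)
  have g4 : Integrable (fun x : ℝ => rexp (-2 * x ^ 2)) := integrable_exp_neg_mul_sq two_pos
  have hI : ∫ x : ℝ, rexp (-1 * x ^ 2) = √(π / 1) := integral_gaussian 1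
  have hIp : 0 < √(π / 1) := by rw [div_one]; exact Real.sqrt_pos.2 Real.pi_pos
  set c := (√(√(π / 1)))⁻¹ with hc
  have hcp : 0 < c := inv_pos.2 (Real.sqrt_pos.2 hIp)
  have hc2 : c ^ 2 * √(π / 1) = 1 := by
    rw [hc, inv_pow, Real.sq_sqrt hIp.le, inv_mul_cancel₀ hIp.ne']
  have hd : ∀ x, HasDerivAt (fun x : ℝ => c * rexp (-(1 / 2) * x ^ 2))
      (c * (rexp (-(1 / 2) * x ^ 2) * -x)) x := by
    intro x
    have := (((hasDerivAt_pow 2 x).const_mul (-(1 / 2 : ℝ))).exp).const_mul c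
    refine this.congr_deriv ?_
    push_cast; ring
  have hD : Differentiable ℝ (fun x : ℝ => c * rexp (-(1 / 2) * x ^ 2)) :=
    fun x => (hd x).differentiableAt
  have es : ∀ x : ℝ, (c * rexp (-(1 / 2) * x ^ 2)) ^ 2 = c ^ 2 * rexp (-1 * x ^ 2) := by
    intro x; rw [mul_pow, ← Real.exp_nat_mul]; congr 2; push_cast; ring
  refine ⟨fun x => c * rexp (-(1 / 2) * x ^ 2), hD, fun x => by positivity, ?_, ?_⟩
  · rw [inX_ofReal hD]
    have hcont := hD.continuous
    refine ⟨?_, ?_, ?_, ?_⟩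
    · rw [memLp_two_iff_integrable_sq hcont.aestronglyMeasurable]
      simp only [es]
      exact g0.const_mul _
    · rw [memLp_two_iff_integrable_sq (measurable_deriv _).aestronglyMeasurable]
      refine (g2.const_mul (c ^ 2)).congr (ae_of_all _ fun x => ?_)
      simp only [(hd x).deriv]
      rw [mul_left_comm, ← es]; ring
    · rw [memLp_two_iff_integrable_sq (f := fun x : ℝ => x * (c * rexp (-(1 / 2) * x ^ 2))) (continuous_id.mul hcont).aestronglyMeasurable]
      refine (g2.const_mul (c ^ 2)).congr (ae_of_all _ fun x => ?_)
      simp only [mul_pow x, es]; ring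
    · rw [memLp_two_iff_integrable_sq (f := fun x : ℝ => (c * rexp (-(1 / 2) * x ^ 2)) ^ 2) (hcont.pow 2).aestronglyMeasurable]
      refine (g4.const_mul (c ^ 4)).congr (ae_of_all _ fun x => ?_)
      simp only [es]
      rw [mul_pow, ← Real.exp_nat_mul, ← pow_mul]; congr 2; push_cast; ring
  · rw [mass_ofReal (fun x => c * rexp (-(1 / 2) * x ^ 2))]
    simp only [MM, es]
    rw [integral_const_mul, hI, hc2]

/-! ### Compactness -/

lemma holder_half {f : ℝ → ℝ} (hf : Differentiable ℝ f) (hd : MemLp (deriv f) 2) {K : ℝ}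
    (hK : ∫ x, deriv f x ^ 2 ≤ K) (x y : ℝ) : (f x - f y) ^ 2 ≤ K * |x - y| := by
  wlog hxy : x ≤ y generalizing x y
  · have := this y x (le_of_not_ge hxy)
    rw [abs_sub_comm]; linarith [sq_nonneg (f x - f y), (by ring : (f x - f y) ^ 2 = (f y - f x) ^ 2)]
  have hli : LocallyIntegrable (deriv f) volume :=
    hd.locallyIntegrable (by norm_num)
  have hii : IntervalIntegrable (deriv f) volume x y :=
    (hli.integrableOn_isCompact isCompact_uIcc).intervalIntegrable
  have h1 := intervalIntegral.integral_eq_sub_of_hasDerivAt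
    (fun z _ => (hf z).hasDerivAt) hii
  rw [intervalIntegral.integral_of_le hxy, ← integral_indicator measurableSet_Ioc] at h1
  have hI : MemLp ((Set.Ioc x y).indicator (fun _ => (1 : ℝ))) 2 :=
    memLp_indicator_const 2 measurableSet_Ioc 1 (Or.inr (by simp))
  have h2 := l2_cs hd hI
  have e1 : (fun z => deriv f z * (Set.Ioc x y).indicator (fun _ => (1 : ℝ)) z) =
      (Set.Ioc x y).indicator (fun z => deriv f z) := by
    funext z; by_cases hz : z ∈ Set.Ioc x y <;> simp [hz]
  have e2 : (fun z => (Set.Ioc x y).indicator (fun _ => (1 : ℝ)) z ^ 2) =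
      (Set.Ioc x y).indicator (fun _ => (1 : ℝ)) := by
    funext z; by_cases hz : z ∈ Set.Ioc x y <;> simp [hz]
  rw [e1, h1, e2, integral_indicator measurableSet_Ioc] at h2
  have e3 : ∫ _ in Set.Ioc x y, (1 : ℝ) = y - x := by
    simp [hxy]
  rw [e3] at h2
  rw [abs_sub_comm, abs_of_nonneg (by linarith : 0 ≤ y - x)]
  calc (f x - f y) ^ 2 = (f y - f x) ^ 2 := by ring
    _ ≤ _ := h2
    _ ≤ _ := mul_le_mul_of_nonneg_right hK (by linarith)

lemma sup_bound {f : ℝ → ℝ} (hm : MemLp f 2) {K : ℝ} (hK0 : 0 ≤ K)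
    (hH : ∀ x y, (f x - f y) ^ 2 ≤ K * |x - y|) (hM : MM f ≤ 1) (x : ℝ) :
    f x ^ 2 ≤ 2 + 2 * K := by
  have hi := hm.integrable_sq
  have h1 : ∫ _ in Set.Ioc x (x + 1), f x ^ 2 ≤ ∫ y in Set.Ioc x (x + 1), (2 * f y ^ 2 + 2 * K) := by
    refine setIntegral_mono_on ?_ ?_ measurableSet_Ioc ?_
    · exact integrableOn_const (by simp)
    · exact (hi.integrableOn.const_mul 2).add (integrableOn_const (by simp))
    · intro y hy
      have := hH x y
      have h3 : |x - y| ≤ 1 := by rw [abs_le]; constructor <;> linarith [hy.1, hy.2]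
      have h4 : K * |x - y| ≤ K := mul_le_of_le_one_right hK0 h3
      nlinarith [sq_nonneg (f x - 2 * f y)]
  rw [integral_add (hi.integrableOn.const_mul 2) (integrableOn_const (by simp)),
    integral_const_mul] at h1
  have h2 : ∫ y in Set.Ioc x (x + 1), f y ^ 2 ≤ MM f :=
    setIntegral_le_integral hi (ae_of_all _ fun y => sq_nonneg _)
  simp at h1
  linarith

lemma ptwise_subseq {φ : ℕ → ℝ → ℝ} {C K : ℝ} (hC : ∀ n x, |φ n x| ≤ C)
    (hH : ∀ n x y, (φ n x - φ n y) ^ 2 ≤ K * |x - y|) (hK0 : 0 ≤ K) :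
    ∃ (ns : ℕ → ℕ) (u : ℝ → ℝ), StrictMono ns ∧
      ∀ x, Tendsto (fun i => φ (ns i) x) atTop (𝓝 (u x)) := by
  have hcomp : IsCompact (Set.univ.pi fun _ : ℚ => Set.Icc (-C) C) :=
    isCompact_univ_pi fun _ => isCompact_Icc
  obtain ⟨a, -, ns, hns, hlim⟩ := hcomp.tendsto_subseq (x := fun n (q : ℚ) => φ n (q : ℝ))
    (fun n => by
      rw [Set.mem_univ_pi]
      exact fun q => abs_le.1 (hC n q))
  rw [tendsto_pi_nhds] at hlim
  have hcs : ∀ x, CauchySeq (fun i => φ (ns i) x) := by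
    intro x
    rw [Metric.cauchySeq_iff]
    intro ε hε
    have hδ : 0 < (ε / 3) ^ 2 / (K + 1) := by positivity
    obtain ⟨q, hq1, hq2⟩ := exists_rat_btwn (lt_add_of_pos_right x hδ)
    have hclose : ∀ n, |φ n x - φ n q| < ε / 3 := by
      intro n
      refine abs_lt_of_sq_lt_sq ?_ (by positivity)
      refine (hH n x q).trans_lt ?_
      rw [abs_sub_comm, abs_of_pos (by linarith)]
      have h1 : (q : ℝ) - x < (ε / 3) ^ 2 / (K + 1) := by linarith
      rw [lt_div_iff₀ (by linarith)] at h1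
      nlinarith
    obtain ⟨N, hN⟩ := Metric.cauchySeq_iff.1 (hlim q).cauchySeq (ε / 3) (by positivity)
    refine ⟨N, fun i hi j hj => ?_⟩
    have h1 := hN i hi j hj
    simp only [Function.comp, Real.dist_eq] at h1 ⊢
    have h2 := hclose (ns i)
    have h3 := hclose (ns j)
    rw [abs_lt] at *
    constructor <;> linarith [h1.1, h1.2, h2.1, h2.2, h3.1, h3.2]
  choose u hu using fun x => cauchySeq_tendsto_of_complete (hcs x)
  exact ⟨ns, u, hns, hu⟩

lemma l2_cauchy {φ : ℕ → ℝ → ℝ} {u : ℝ → ℝ} {C K : ℝ} (hC : ∀ n x, |φ n x| ≤ C)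
    (hφ : ∀ n, MemLp (φ n) 2) (hx : ∀ n, MemLp (fun x => x * φ n x) 2)
    (hK : ∀ n, ∫ x, (x * φ n x) ^ 2 ≤ K) (hcont : ∀ n, Continuous (φ n))
    (hu : ∀ x, Tendsto (fun i => φ i x) atTop (𝓝 (u x))) :
    ∀ ε > 0, ∃ N, ∀ n ≥ N, ∀ m ≥ N, ∫ x, (φ n x - φ m x) ^ 2 < ε := by
  intro ε hε
  have hK0 : 0 ≤ K := le_trans (integral_nonneg fun x => sq_nonneg _) (hK 0)
  have hum : Measurable u := measurable_of_tendsto_metrizable (fun n => (hcont n).measurable)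
    (tendsto_pi_nhds.2 hu)
  have huC : ∀ x, |u x| ≤ C := fun x =>
    le_of_tendsto ((hu x).abs) (Eventually.of_forall fun n => hC n x)
  have hC0 : 0 ≤ C := (abs_nonneg _).trans (huC 0)
  -- choose R
  obtain ⟨R, hR0, hR⟩ : ∃ R : ℝ, 0 < R ∧ 4 * K / R ^ 2 ≤ ε / 2 := by
    refine ⟨√(8 * (K + 1) / ε), by positivity, ?_⟩
    rw [Real.sq_sqrt (by positivity), div_div_eq_mul_div, div_le_iff₀ (by positivity)]
    nlinarith
  set S := Set.Icc (-R) R with hS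
  have hbound : ∀ n x, (φ n x - u x) ^ 2 ≤ 4 * C ^ 2 := by
    intro n x
    have h1 := abs_le.1 (hC n x)
    have h2 := abs_le.1 (huC x)
    nlinarith
  have hmeas : ∀ n, AEStronglyMeasurable (fun x => (φ n x - u x) ^ 2) (volume.restrict S) :=
    fun n => (((hcont n).measurable.sub hum).pow_const 2).aestronglyMeasurable
  have hIntg : ∀ n, IntegrableOn (fun x => (φ n x - u x) ^ 2) S := by
    intro n
    refine Integrable.mono' (g := fun _ => 4 * C ^ 2) (integrableOn_const (by simp [hS])) (hmeas n) ?_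
    refine ae_of_all _ fun x => ?_
    rw [Real.norm_eq_abs, abs_of_nonneg (sq_nonneg _)]
    exact hbound n x
  have hlim : Tendsto (fun n => ∫ x in S, (φ n x - u x) ^ 2) atTop (𝓝 0) := by
    have := tendsto_integral_of_dominated_convergence (μ := volume.restrict S)
      (F := fun n x => (φ n x - u x) ^ 2) (f := fun _ => 0) (fun _ => 4 * C ^ 2)
      hmeas (integrableOn_const (by simp [hS]))
      (fun n => ae_of_all _ fun x => by
        rw [Real.norm_eq_abs, abs_of_nonneg (sq_nonneg _)]
        exact hbound n x)
      (ae_of_all _ fun x => by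
        have := ((hu x).sub_const (u x)).pow 2
        simpa using this)
    simpa using this
  obtain ⟨N, hN⟩ := eventually_atTop.1 (hlim.eventually (gt_mem_nhds (by positivity : 0 < ε / 8)))
  refine ⟨N, fun n hn m hm => ?_⟩
  have h1 := hN n hn
  have h2 := hN m hm
  have hind : ∀ n, Integrable (S.indicator (fun x => (φ n x - u x) ^ 2)) := fun n =>
    (integrable_indicator_iff measurableSet_Icc).2 (hIntg n)
  have hpt : ∀ x, (φ n x - φ m x) ^ 2 ≤
      (2 * S.indicator (fun x => (φ n x - u x) ^ 2) x + 2 * S.indicator (fun x => (φ m x - u x) ^ 2) x)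
      + (2 / R ^ 2 * (x * φ n x) ^ 2 + 2 / R ^ 2 * (x * φ m x) ^ 2) := by
    intro x
    by_cases hxS : x ∈ S
    · simp only [Set.indicator_of_mem hxS]
      have : 0 ≤ 2 / R ^ 2 * (x * φ n x) ^ 2 + 2 / R ^ 2 * (x * φ m x) ^ 2 := by positivity
      nlinarith [sq_nonneg ((φ n x - u x) + (φ m x - u x))]
    · simp only [Set.indicator_of_notMem hxS]
      have hx2 : R ^ 2 ≤ x ^ 2 := by
        have : ¬ |x| ≤ R := fun h => hxS (abs_le.1 h)
        rw [← sq_abs x]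
        exact pow_le_pow_left₀ hR0.le (le_of_not_ge this) 2
      have e : 2 / R ^ 2 * (x * φ n x) ^ 2 + 2 / R ^ 2 * (x * φ m x) ^ 2
          = (x ^ 2 / R ^ 2) * (2 * φ n x ^ 2 + 2 * φ m x ^ 2) := by
        field_simp
      rw [e]
      have h1 : 1 ≤ x ^ 2 / R ^ 2 := by rw [one_le_div (by positivity)]; exact hx2
      nlinarith [sq_nonneg (φ n x + φ m x), mul_le_mul_of_nonneg_right h1
        (by positivity : 0 ≤ 2 * φ n x ^ 2 + 2 * φ m x ^ 2)]
  have ia : Integrable (fun x => 2 * S.indicator (fun x => (φ n x - u x) ^ 2) x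
      + 2 * S.indicator (fun x => (φ m x - u x) ^ 2) x) :=
    ((hind n).const_mul 2).add ((hind m).const_mul 2)
  have ib : Integrable (fun x => 2 / R ^ 2 * (x * φ n x) ^ 2 + 2 / R ^ 2 * (x * φ m x) ^ 2) :=
    ((hx n).integrable_sq.const_mul _).add ((hx m).integrable_sq.const_mul _)
  have hle := integral_mono ((hφ n).sub (hφ m)).integrable_sq (ia.add ib) hpt
  simp only [Pi.add_apply, Pi.sub_apply] at hle
  rw [integral_add ia ib, integral_add ((hind n).const_mul 2) ((hind m).const_mul 2),
    integral_add ((hx n).integrable_sq.const_mul _) ((hx m).integrable_sq.const_mul _)] at hle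
  have hSm : MeasurableSet S := measurableSet_Icc
  simp only [integral_const_mul] at hle
  rw [integral_indicator hSm, integral_indicator hSm] at hle
  have h3 : 2 / R ^ 2 * (∫ x, (x * φ n x) ^ 2) + 2 / R ^ 2 * (∫ x, (x * φ m x) ^ 2) ≤ 4 * K / R ^ 2 := by
    have e : 4 * K / R ^ 2 = 2 / R ^ 2 * K + 2 / R ^ 2 * K := by ring
    rw [e]
    have := hK n
    have := hK m
    gcongr
  linarith

lemma quad_est {m V lam En Em Nn Nm Qn Qm Qh Qd Nh δ : ℝ} (hlam : 0 ≤ lam)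
    (hEn : En = Qn + lam / 2 * Nn) (hEm : Em = Qm + lam / 2 * Nm)
    (hQ : Qh = 2 * Qn + 2 * Qm - Qd) (hN : Nh ≤ 8 * (Nn + Nm)) (h0 : 0 ≤ δ) (h4 : δ ≤ 4)
    (hP : m * (4 - δ) ^ 2 ≤ Qh * (4 - δ) + lam / 2 * Nh) (hQh : -(|V| * (4 - δ)) ≤ Qh) :
    4 * Qd ≤ 8 * (En - m) + 8 * (Em - m) + (12 * |m| + 4 * |V|) * δ := by
  have a1 : lam / 2 * Nh ≤ lam / 2 * (8 * (Nn + Nm)) := mul_le_mul_of_nonneg_left hN (by linarith)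
  have a2 : m * (8 * δ - δ ^ 2) ≤ |m| * (8 * δ) := by
    have : m * (8 * δ - δ ^ 2) ≤ |m| * (8 * δ - δ ^ 2) :=
      mul_le_mul_of_nonneg_right (le_abs_self m) (by nlinarith)
    nlinarith [abs_nonneg m, mul_nonneg (abs_nonneg m) (sq_nonneg δ)]
  have a3 : -(δ * Qh) ≤ 4 * |V| * δ := by
    have := mul_le_mul_of_nonneg_left hQh h0
    nlinarith [abs_nonneg V, mul_nonneg (mul_nonneg h0 h0) (abs_nonneg V)]
  have a4 := mul_nonneg (abs_nonneg m) h0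
  subst hEn hEm hQ
  nlinarith

/-! ### Strong limit of a minimizing sequence -/

structure StrongConv (f f' : ℕ → ℝ → ℝ) (u g : ℝ → ℝ) : Prop where
  hf : ∀ n, HP (f n) (f' n)
  hu : HP u g
  bd : ∃ C, (∀ n x, |f n x| ≤ C) ∧ ∀ x, |u x| ≤ C
  c0 : Tendsto (fun n => ∫ x, (f n x - u x) ^ 2) atTop (𝓝 0)
  c1 : Tendsto (fun n => ∫ x, (f' n x - g x) ^ 2) atTop (𝓝 0)
  cx : Tendsto (fun n => ∫ x, (x * f n x - x * u x) ^ 2) atTop (𝓝 0)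

lemma StrongConv.tendsto_MM {f f' : ℕ → ℝ → ℝ} {u g : ℝ → ℝ} (H : StrongConv f f' u g) :
    Tendsto (fun n => MM (f n)) atTop (𝓝 (MM u)) :=
  l2_tendsto (fun n => (H.hf n).m) H.hu.m H.c0

lemma StrongConv.tendsto_QQ {f f' : ℕ → ℝ → ℝ} {u g : ℝ → ℝ} (H : StrongConv f f' u g) (V α : ℝ) :
    Tendsto (fun n => QQ V α (f n) (f' n)) atTop (𝓝 (QQ V α u g)) := by
  unfold QQ
  refine ((l2_tendsto (fun n => (H.hf n).d) H.hu.d H.c1).add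
    (l2_tendsto (fun n => (H.hf n).x) H.hu.x H.cx)).sub (Tendsto.const_mul V ?_)
  refine l2_tendsto (fun n => memLp_cos_mul α (H.hf n).m) (memLp_cos_mul α H.hu.m) ?_
  refine squeeze_zero (fun n => integral_nonneg fun _ => sq_nonneg _) (fun n => ?_) H.c0
  have := cos_le_MM α ((H.hf n).m.sub H.hu.m)
  simp only [Pi.sub_apply, MM, mul_sub] at this
  exact this

lemma StrongConv.tendsto_NN {f f' : ℕ → ℝ → ℝ} {u g : ℝ → ℝ} (H : StrongConv f f' u g) :
    Tendsto (fun n => NN (f n)) atTop (𝓝 (NN u)) := by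
  unfold NN
  obtain ⟨C, hC, hCu⟩ := H.bd
  refine l2_tendsto (fun n => (H.hf n).q) H.hu.q ?_
  have h4 : Tendsto (fun n => 4 * C ^ 2 * ∫ x, (f n x - u x) ^ 2) atTop (𝓝 0) := by
    simpa using H.c0.const_mul (4 * C ^ 2)
  refine squeeze_zero (fun n => integral_nonneg fun _ => sq_nonneg _) (fun n => ?_) h4
  rw [← integral_const_mul]
  refine integral_mono ((H.hf n).q.sub H.hu.q).integrable_sq
    (((H.hf n).m.sub H.hu.m).integrable_sq.const_mul _) fun x => ?_
  have h1 := abs_le.1 (hC n x)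
  have h2 := abs_le.1 (hCu x)
  have h3 : (f n x + u x) ^ 2 ≤ 4 * C ^ 2 := by nlinarith
  calc (f n x ^ 2 - u x ^ 2) ^ 2 = (f n x + u x) ^ 2 * (f n x - u x) ^ 2 := by ring
    _ ≤ _ := mul_le_mul_of_nonneg_right h3 (sq_nonneg _)

lemma StrongConv.add_smul {f f' : ℕ → ℝ → ℝ} {u g h k : ℝ → ℝ} (H : StrongConv f f' u g)
    (H' : HP h k) {B : ℝ} (hB : ∀ x, |h x| ≤ B) (s : ℝ) :
    StrongConv (fun n x => f n x + s * h x) (fun n x => f' n x + s * k x)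
      (fun x => u x + s * h x) (fun x => g x + s * k x) := by
  obtain ⟨C, hC, hCu⟩ := H.bd
  have hs : ∀ x, |s * h x| ≤ |s| * B := fun x => by
    rw [abs_mul]; exact mul_le_mul_of_nonneg_left (hB x) (abs_nonneg s)
  refine ⟨fun n => (H.hf n).add_smul H' s, H.hu.add_smul H' s, ⟨C + |s| * B, fun n x => ?_,
    fun x => ?_⟩, ?_, ?_, ?_⟩
  · exact (abs_add_le _ _).trans (add_le_add (hC n x) (hs x))
  · exact (abs_add_le _ _).trans (add_le_add (hCu x) (hs x))
  · simpa only [add_sub_add_right_eq_sub] using H.c0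
  · simpa only [add_sub_add_right_eq_sub] using H.c1
  · simpa only [mul_add, add_sub_add_right_eq_sub] using H.cx

lemma exists_limit {lam V α m : ℝ} (hlam : 0 ≤ lam)
    (hm : ∀ φ : ℝ → ℂ, InSigma1 φ → m ≤ energy lam V α φ)
    (hseq : ∀ ε > 0, ∃ φ : ℝ → ℝ, Differentiable ℝ φ ∧ (∀ x, 0 < φ x) ∧
      InSigma1 (fun ξ => (φ ξ : ℂ)) ∧ energy lam V α (fun ξ => (φ ξ : ℂ)) < m + ε) :
    ∃ (φ : ℕ → ℝ → ℝ) (u g : ℝ → ℝ), (∀ n, Differentiable ℝ (φ n)) ∧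
      StrongConv φ (fun n => deriv (φ n)) u g ∧ (∀ x, 0 ≤ u x) ∧ Continuous u ∧
      (∀ x, u x = u 0 + ∫ y in (0 : ℝ)..x, g y) ∧ MM u = 1 ∧
      QQ V α u g + lam / 2 * NN u = m := by
  choose φ0 hd0 hp0 hS0 hE0 using fun n : ℕ => hseq (1 / ((n : ℝ) + 1)) (by positivity)
  have hE1 : Tendsto (fun n => energy lam V α (fun ξ => (φ0 n ξ : ℂ))) atTop (𝓝 m) := by
    have h1 : Tendsto (fun n : ℕ => m + 1 / ((n : ℝ) + 1)) atTop (𝓝 m) := by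
      simpa using tendsto_one_div_add_atTop_nhds_zero_nat.const_add m
    exact tendsto_of_tendsto_of_tendsto_of_le_of_le tendsto_const_nhds h1
      (fun n => hm _ (hS0 n)) (fun n => (hE0 n).le)
  have hH0 : ∀ n, HP (φ0 n) (deriv (φ0 n)) := fun n => (inX_ofReal (hd0 n)).1 (hS0 n).1
  have hM0 : ∀ n, MM (φ0 n) = 1 := fun n => by rw [← mass_ofReal]; exact (hS0 n).2
  set K := m + 1 + |V| with hKdef
  have hAB : ∀ n, (∫ x, deriv (φ0 n) x ^ 2) + (∫ x, (x * φ0 n x) ^ 2) ≤ K := by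
    intro n
    have h1 := AB_le V α (g := deriv (φ0 n)) (hH0 n).m
    have h2 := (hE0 n).le
    rw [energy_ofReal _ _ _ (hd0 n)] at h2
    have h3 : 1 / ((n : ℝ) + 1) ≤ 1 := by
      rw [div_le_one (by positivity)]; linarith [(Nat.cast_nonneg n : (0 : ℝ) ≤ n)]
    have h4 : 0 ≤ lam / 2 * NN (φ0 n) := mul_nonneg (by linarith) (NN_nonneg _)
    rw [hM0 n] at h1
    linarith
  have hA : ∀ n, ∫ x, deriv (φ0 n) x ^ 2 ≤ K := fun n => by
    have : 0 ≤ ∫ x, (x * φ0 n x) ^ 2 := integral_nonneg fun _ => sq_nonneg _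
    linarith [hAB n]
  have hB : ∀ n, ∫ x, (x * φ0 n x) ^ 2 ≤ K := fun n => by
    have : 0 ≤ ∫ x, (deriv (φ0 n) x) ^ 2 := integral_nonneg fun _ => sq_nonneg _
    linarith [hAB n]
  have hK0 : 0 ≤ K := (integral_nonneg fun _ => sq_nonneg _ : (0 : ℝ) ≤ _).trans (hB 0)
  have hHol : ∀ n x y, (φ0 n x - φ0 n y) ^ 2 ≤ K * |x - y| := fun n =>
    holder_half (hd0 n) (hH0 n).d (hA n)
  set C := √(2 + 2 * K) with hCdef
  have hC : ∀ n x, |φ0 n x| ≤ C := fun n x =>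
    Real.abs_le_sqrt (sup_bound (hH0 n).m hK0 (hHol n) (hM0 n).le x)
  obtain ⟨ns, u, hns, hu⟩ := ptwise_subseq hC hHol hK0
  set φ : ℕ → ℝ → ℝ := fun i => φ0 (ns i) with hφ
  have hd : ∀ n, Differentiable ℝ (φ n) := fun n => hd0 _
  have hH : ∀ n, HP (φ n) (deriv (φ n)) := fun n => hH0 _
  have hM : ∀ n, MM (φ n) = 1 := fun n => hM0 _
  have hE : Tendsto (fun n => QQ V α (φ n) (deriv (φ n)) + lam / 2 * NN (φ n)) atTop (𝓝 m) := by
    have := hE1.comp hns.tendsto_atTop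
    refine this.congr fun n => ?_
    exact energy_ofReal _ _ _ (hd n)
  have hL2 := l2_cauchy (fun n x => hC (ns n) x) (fun n => (hH n).m) (fun n => (hH n).x)
    (fun n => hB (ns n)) (fun n => (hd n).continuous) hu
  -- the key estimate
  have hkey : ∀ n k, (∫ x, (deriv (φ n) x - deriv (φ k) x) ^ 2) + (∫ x, (x * φ n x - x * φ k x) ^ 2)
      ≤ 2 * (QQ V α (φ n) (deriv (φ n)) + lam / 2 * NN (φ n) - m)
        + 2 * (QQ V α (φ k) (deriv (φ k)) + lam / 2 * NN (φ k) - m)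
        + (3 * |m| + 2 * |V|) * ∫ x, (φ n x - φ k x) ^ 2 := by
    intro n k
    have hp := (hH n).add_smul (hH k) 1
    have hq := (hH n).add_smul (hH k) (-1)
    have eM := l2_parallelogram (hH n).m (hH k).m
    have m1 : ∫ x, φ n x ^ 2 = 1 := hM n
    have m2 : ∫ x, φ k x ^ 2 = 1 := hM k
    rw [m1, m2] at eM
    have hdh : Differentiable ℝ (fun x => φ n x + 1 * φ k x) := (hd n).add ((hd k).const_mul 1)
    have hdd : deriv (fun x => φ n x + 1 * φ k x) = fun x => deriv (φ n) x + 1 * deriv (φ k) x := by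
      funext x
      exact ((hd n x).hasDerivAt.add ((hd k x).hasDerivAt.const_mul 1)).deriv
    have hP := homog hlam hm hdh (by rw [hdd]; exact hp)
    rw [hdd] at hP
    have q1 := QQ_expand V α (hH n) (hH k) 1
    have q2 := QQ_expand V α (hH n) (hH k) (-1)
    have hMh : MM (fun x => φ n x + 1 * φ k x) = 4 - ∫ x, (φ n x - φ k x) ^ 2 := by
      simp only [MM, one_mul]; rw [eM]; ring
    have hMd : MM (fun x => φ n x + -1 * φ k x) = ∫ x, (φ n x - φ k x) ^ 2 := by
      simp only [MM, neg_one_mul, ← sub_eq_add_neg]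
    have hQh := QQ_ge V α (g := fun x => deriv (φ n) x + 1 * deriv (φ k) x) hp.m
    rw [hMh] at hP hQh
    have hN : NN (fun x => φ n x + 1 * φ k x) ≤ 8 * (NN (φ n) + NN (φ k)) := by
      unfold NN
      rw [← integral_add (hH n).q.integrable_sq (hH k).q.integrable_sq, ← integral_const_mul]
      refine integral_mono hp.q.integrable_sq
        (((hH n).q.integrable_sq.add (hH k).q.integrable_sq).const_mul _) fun x => ?_
      have a1 : (φ n x + 1 * φ k x) ^ 2 ≤ 2 * (φ n x ^ 2 + φ k x ^ 2) := by
        nlinarith [sq_nonneg (φ n x - φ k x)]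
      have a2 := pow_le_pow_left₀ (sq_nonneg _) a1 2
      simp only
      nlinarith [sq_nonneg (φ n x ^ 2 - φ k x ^ 2)]
    have δ0 : 0 ≤ ∫ x, (φ n x - φ k x) ^ 2 := integral_nonneg fun _ => sq_nonneg _
    have δ4 : ∫ x, (φ n x - φ k x) ^ 2 ≤ 4 := by
      have := MM_nonneg (fun x => φ n x + 1 * φ k x)
      rw [hMh] at this; linarith
    have hfin := quad_est (V := V) (Qn := QQ V α (φ n) (deriv (φ n)))
      (Qm := QQ V α (φ k) (deriv (φ k))) (Nn := NN (φ n)) (Nm := NN (φ k)) hlam rfl rfl (Qd := QQ V α (fun x => φ n x + -1 * φ k x)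
      (fun x => deriv (φ n) x + -1 * deriv (φ k) x)) (by rw [q1, q2]; ring) hN δ0 δ4 hP hQh
    have hab := AB_le V α (g := fun x => deriv (φ n) x + -1 * deriv (φ k) x) hq.m
    rw [hMd] at hab
    simp only [neg_one_mul, ← sub_eq_add_neg, mul_sub] at hab hfin
    linarith
  have hcauchy : ∀ ε > 0, ∃ N, ∀ n ≥ N, ∀ k ≥ N,
      (∫ x, (deriv (φ n) x - deriv (φ k) x) ^ 2) + (∫ x, (x * φ n x - x * φ k x) ^ 2) < ε := by
    intro ε hε
    obtain ⟨N1, hN1⟩ := eventually_atTop.1 (hE.eventually (gt_mem_nhds (by linarith : m < m + ε / 8)))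
    have hc : 0 < 3 * |m| + 2 * |V| + 1 := by positivity
    obtain ⟨N2, hN2⟩ := hL2 (ε / 2 / (3 * |m| + 2 * |V| + 1)) (by positivity)
    refine ⟨max N1 N2, fun n hn k hk => ?_⟩
    have h1 := hN1 n (le_trans (le_max_left _ _) hn)
    have h2 := hN1 k (le_trans (le_max_left _ _) hk)
    have h3 := hN2 n (le_trans (le_max_right _ _) hn) k (le_trans (le_max_right _ _) hk)
    have δ0 : 0 ≤ ∫ x, (φ n x - φ k x) ^ 2 := integral_nonneg fun _ => sq_nonneg _
    have h4 := hkey n k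
    rw [lt_div_iff₀ hc] at h3
    nlinarith
  have hcd : ∀ ε > 0, ∃ N, ∀ n ≥ N, ∀ k ≥ N, ∫ x, (deriv (φ n) x - deriv (φ k) x) ^ 2 < ε := by
    intro ε hε
    obtain ⟨N, hN⟩ := hcauchy ε hε
    refine ⟨N, fun n hn k hk => ?_⟩
    have : 0 ≤ ∫ x, (x * φ n x - x * φ k x) ^ 2 := integral_nonneg fun _ => sq_nonneg _
    linarith [hN n hn k hk]
  have hcx : ∀ ε > 0, ∃ N, ∀ n ≥ N, ∀ k ≥ N, ∫ x, (x * φ n x - x * φ k x) ^ 2 < ε := by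
    intro ε hε
    obtain ⟨N, hN⟩ := hcauchy ε hε
    refine ⟨N, fun n hn k hk => ?_⟩
    have : 0 ≤ ∫ x, (deriv (φ n) x - deriv (φ k) x) ^ 2 := integral_nonneg fun _ => sq_nonneg _
    linarith [hN n hn k hk]
  obtain ⟨hu2, c0⟩ := l2_complete_ptwise (fun n => (hH n).m) hL2 hu
  obtain ⟨hux, cx⟩ := l2_complete_ptwise (f := fun n x => x * φ n x) (u := fun x => x * u x)
    (fun n => (hH n).x) hcx (fun x => (hu x).const_mul x)
  obtain ⟨g, hg, c1, -⟩ := l2_complete (fun n => (hH n).d) hcd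
  have huC : ∀ x, |u x| ≤ C := fun x =>
    le_of_tendsto ((hu x).abs) (Eventually.of_forall fun n => hC _ x)
  have hu4 : MemLp (fun x => u x ^ 2) 2 := by
    refine hu2.of_le_mul (c := C) (hu2.1.pow 2) (ae_of_all _ fun x => ?_)
    rw [norm_pow, sq]
    exact mul_le_mul_of_nonneg_right (huC x) (norm_nonneg _)
  have hSC : StrongConv φ (fun n => deriv (φ n)) u g :=
    ⟨hH, ⟨hu2, hg, hux, hu4⟩, ⟨C, fun n x => hC _ x, huC⟩, c0, c1, cx⟩
  have hIntg : ∀ x, u x = u 0 + ∫ y in (0 : ℝ)..x, g y := by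
    intro x
    have hloc : ∀ {h : ℝ → ℝ}, MemLp h 2 → IntervalIntegrable h volume 0 x := fun {h} hh =>
      ((hh.locallyIntegrable (by norm_num)).integrableOn_isCompact isCompact_uIcc).intervalIntegrable
    have h1 : ∀ n, ∫ y in (0 : ℝ)..x, deriv (φ n) y = φ n x - φ n 0 := fun n =>
      intervalIntegral.integral_eq_sub_of_hasDerivAt (fun z _ => (hd n z).hasDerivAt) (hloc (hH n).d)
    have h2 : Tendsto (fun n => ∫ y in (0 : ℝ)..x, deriv (φ n) y) atTop
        (𝓝 (∫ y in (0 : ℝ)..x, g y)) := by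
      rw [tendsto_iff_norm_sub_tendsto_zero]
      have hb : ∀ n, ‖(∫ y in (0 : ℝ)..x, deriv (φ n) y) - ∫ y in (0 : ℝ)..x, g y‖ ≤
          √((∫ y, (deriv (φ n) y - g y) ^ 2) *
            ∫ y, ((Set.uIoc 0 x).indicator (fun _ => (1 : ℝ)) y) ^ 2) := by
        intro n
        rw [← intervalIntegral.integral_sub (hloc (hH n).d) (hloc hg),
          intervalIntegral.norm_integral_eq_norm_integral_uIoc, ← integral_indicator measurableSet_uIoc]
        have hI : MemLp ((Set.uIoc 0 x).indicator (fun _ => (1 : ℝ))) 2 :=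
          memLp_indicator_const 2 measurableSet_uIoc 1 (Or.inr (by simp [Set.uIoc]))
        have h2 := l2_cs ((hH n).d.sub hg) hI
        have e1 : (fun z => (deriv (φ n) - g) z * (Set.uIoc 0 x).indicator (fun _ => (1 : ℝ)) z) =
            (Set.uIoc 0 x).indicator (fun z => deriv (φ n) z - g z) := by
          funext z; by_cases hz : z ∈ Set.uIoc 0 x <;> simp [hz]
        rw [e1] at h2
        exact Real.abs_le_sqrt h2
      refine squeeze_zero (fun n => norm_nonneg _) hb ?_
      have := (c1.mul_const (∫ y, ((Set.uIoc 0 x).indicator (fun _ => (1 : ℝ)) y) ^ 2)).sqrt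
      simpa using this
    simp only [h1] at h2
    have h3 := tendsto_nhds_unique h2 ((hu x).sub (hu 0))
    rw [h3]; ring
  refine ⟨φ, u, g, hd, hSC, fun x => ?_, ?_, hIntg, ?_, ?_⟩
  · exact ge_of_tendsto (hu x) (Eventually.of_forall fun n => (hp0 _ x).le)
  · have : u = fun x => u 0 + ∫ y in (0 : ℝ)..x, g y := funext hIntg
    rw [this]
    refine continuous_const.add (intervalIntegral.continuous_primitive (fun a b => ?_) 0)
    exact ((hg.locallyIntegrable (by norm_num)).integrableOn_isCompact
      isCompact_uIcc).intervalIntegrable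
  · refine tendsto_nhds_unique hSC.tendsto_MM ?_
    simp only [hM]; exact tendsto_const_nhds
  · exact tendsto_nhds_unique ((hSC.tendsto_QQ V α).add (hSC.tendsto_NN.const_mul _)) hE
open Filter Topology

lemma poly_lin_zero {a b c d : ℝ} (h : ∀ s : ℝ, 0 ≤ a * s + b * s ^ 2 + c * s ^ 3 + d * s ^ 4) :
    a = 0 := by
  have hd : HasDerivAt (fun s : ℝ => a * s + b * s ^ 2 + c * s ^ 3 + d * s ^ 4) a 0 := by
    have h1 := (hasDerivAt_id' (0 : ℝ)).const_mul a
    have h2 := (hasDerivAt_pow 2 (0 : ℝ)).const_mul b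
    have h3 := (hasDerivAt_pow 3 (0 : ℝ)).const_mul c
    have h4 := (hasDerivAt_pow 4 (0 : ℝ)).const_mul d
    exact (((h1.add h2).add h3).add h4).congr_deriv (by norm_num)
  refine IsLocalMin.hasDerivAt_eq_zero (Filter.Eventually.of_forall fun s => ?_) hd
  simpa using h s

lemma hp_test {η : ℝ → ℝ} (h1 : ContDiff ℝ 1 η) (hc : HasCompactSupport η) : HP η (deriv η) := by
  have c0 := h1.continuous
  refine ⟨c0.memLp_of_hasCompactSupport hc,
    (h1.continuous_deriv le_rfl).memLp_of_hasCompactSupport hc.deriv,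
    ?_, ?_⟩
  · have h2 : HasCompactSupport (fun x => x * η x) := hc.mul_left
    exact (continuous_id.mul c0 : Continuous fun x => x * η x).memLp_of_hasCompactSupport h2
  · have h2 : HasCompactSupport (fun x => η x * η x) := hc.mul_left
    have h3 : (fun x => η x ^ 2) = fun x => η x * η x := by funext x; ring
    rw [h3]
    exact (c0.mul c0 : Continuous fun x => η x * η x).memLp_of_hasCompactSupport h2

lemma NN_expand {u η : ℝ → ℝ} (hu : Continuous u) (hq : MemLp (fun x => u x ^ 2) 2)
    (hη : Continuous η) (hc : HasCompactSupport η) : ∃ b c d : ℝ, ∀ s : ℝ,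
    NN (fun x => u x + s * η x) =
      NN u + (4 * ∫ x, u x ^ 3 * η x) * s + b * s ^ 2 + c * s ^ 3 + d * s ^ 4 := by
  have I1 : Integrable (fun x => u x ^ 3 * η x) :=
    ((hu.pow 3).mul hη).integrable_of_hasCompactSupport hc.mul_left
  have I2 : Integrable (fun x => (u x ^ 2 * η x) * η x) :=
    (((hu.pow 2).mul hη).mul hη).integrable_of_hasCompactSupport hc.mul_left
  have I3 : Integrable (fun x => (u x * η x ^ 2) * η x) :=
    ((hu.mul (hη.pow 2)).mul hη).integrable_of_hasCompactSupport hc.mul_left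
  have I4 : Integrable (fun x => (η x ^ 3) * η x) :=
    ((hη.pow 3).mul hη).integrable_of_hasCompactSupport hc.mul_left
  have I0 : Integrable (fun x => (u x ^ 2) ^ 2) := hq.integrable_sq
  refine ⟨6 * ∫ x, (u x ^ 2 * η x) * η x, 4 * ∫ x, (u x * η x ^ 2) * η x,
    ∫ x, (η x ^ 3) * η x, fun s => ?_⟩
  have e : ∀ x, ((u x + s * η x) ^ 2) ^ 2 = (u x ^ 2) ^ 2 + (4 * s) * (u x ^ 3 * η x)
      + (6 * s ^ 2) * ((u x ^ 2 * η x) * η x) + (4 * s ^ 3) * ((u x * η x ^ 2) * η x)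
      + s ^ 4 * ((η x ^ 3) * η x) := fun x => by ring
  unfold NN
  simp only [e]
  have J1 : Integrable (fun x => (u x ^ 2) ^ 2 + (4 * s) * (u x ^ 3 * η x)) :=
    I0.add (I1.const_mul _)
  have J2 : Integrable (fun x => (u x ^ 2) ^ 2 + (4 * s) * (u x ^ 3 * η x)
      + (6 * s ^ 2) * ((u x ^ 2 * η x) * η x)) := J1.add (I2.const_mul _)
  have J3 : Integrable (fun x => (u x ^ 2) ^ 2 + (4 * s) * (u x ^ 3 * η x)
      + (6 * s ^ 2) * ((u x ^ 2 * η x) * η x) + (4 * s ^ 3) * ((u x * η x ^ 2) * η x)) :=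
    J2.add (I3.const_mul _)
  rw [integral_add J3 (I4.const_mul _), integral_add J2 (I3.const_mul _),
    integral_add J1 (I2.const_mul _), integral_add I0 (I1.const_mul _)]
  simp only [integral_const_mul]
  ring

lemma euler_lagrange {lam V α m : ℝ} (hlam : 0 ≤ lam)
    (hm : ∀ φ : ℝ → ℂ, InSigma1 φ → m ≤ energy lam V α φ)
    {φ : ℕ → ℝ → ℝ} {u g : ℝ → ℝ} (hφ : ∀ n, Differentiable ℝ (φ n))
    (H : StrongConv φ (fun n => deriv (φ n)) u g) (hu : Continuous u) (hM : MM u = 1)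
    (hQ : QQ V α u g + lam / 2 * NN u = m)
    {η : ℝ → ℝ} (h1 : ContDiff ℝ 1 η) (hc : HasCompactSupport η) :
    BB V α u g η (deriv η) + lam * (∫ x, u x ^ 3 * η x) + (QQ V α u g - 2 * m) * (∫ x, u x * η x)
      = 0 := by
  have Hη := hp_test h1 hc
  obtain ⟨B, hB⟩ := hc.exists_bound_of_continuous h1.continuous
  obtain ⟨b, c, d, hN⟩ := NN_expand hu H.hu.q h1.continuous hc
  have key : ∀ s : ℝ, m * MM (fun x => u x + s * η x) ^ 2 ≤
      QQ V α (fun x => u x + s * η x) (fun x => g x + s * deriv η x) * MM (fun x => u x + s * η x)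
        + lam / 2 * NN (fun x => u x + s * η x) := by
    intro s
    have HS := H.add_smul Hη (fun x => hB x) s
    refine le_of_tendsto_of_tendsto' ((HS.tendsto_MM.pow 2).const_mul m)
      (((HS.tendsto_QQ V α).mul HS.tendsto_MM).add (HS.tendsto_NN.const_mul (lam / 2))) fun n => ?_
    have hdη : Differentiable ℝ η := h1.differentiable (by norm_num)
    have hd : deriv (fun x => φ n x + s * η x) = fun x => deriv (φ n) x + s * deriv η x := by
      funext x
      exact ((hφ n x).hasDerivAt.add ((hdη x).hasDerivAt.const_mul s)).deriv
    have := homog (V := V) (α := α) hlam hm (f := fun x => φ n x + s * η x)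
      ((hφ n).add (hdη.const_mul s)) (by rw [hd]; exact HS.hf n)
    rw [hd] at this
    exact this
  have hMs : ∀ s : ℝ, MM (fun x => u x + s * η x) = 1 + 2 * s * (∫ x, u x * η x) + s ^ 2 * MM η := by
    intro s
    have := l2_expand H.hu.m Hη.m s
    rw [← hM]; exact this
  have hQs := QQ_expand V α H.hu Hη
  generalize hBB : BB V α u g η (deriv η) = β at *
  generalize (∫ x, u x ^ 3 * η x) = p at *
  generalize (∫ x, u x * η x) = q at *
  generalize QQ V α η (deriv η) = Q1 at *
  generalize MM η = M1 at *
  generalize NN u = N0 at *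
  generalize QQ V α u g = Q0 at *
  have := poly_lin_zero (a := 2 * β + 2 * Q0 * q + 2 * lam * p - 4 * m * q)
    (b := Q1 + Q0 * M1 + 4 * β * q + lam / 2 * b - m * (2 * M1 + 4 * q ^ 2))
    (c := 2 * q * Q1 + 2 * β * M1 + lam / 2 * c - 4 * m * q * M1)
    (d := Q1 * M1 + lam / 2 * d - m * M1 ^ 2) (fun s => by
      have := key s
      rw [hMs, hQs, hN] at this
      subst hQ
      nlinarith [this])
  linarith
open Filter Topology

lemma exists_compact_primitive {σ : ℝ → ℝ} (hσ : Continuous σ) (hc : HasCompactSupport σ)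
    (h0 : ∫ x, σ x = 0) : ∃ ζ : ℝ → ℝ, ContDiff ℝ 1 ζ ∧ HasCompactSupport ζ ∧ deriv ζ = σ := by
  obtain ⟨R0, hR0⟩ := hc.isCompact.isBounded.subset_closedBall 0
  obtain ⟨R, hRpos, hRR⟩ : ∃ R : ℝ, 0 < R ∧ R0 < R :=
    ⟨|R0| + 1, by positivity, by linarith [le_abs_self R0]⟩
  have hz : ∀ x, R ≤ |x| → σ x = 0 := fun x hx => by
    by_contra hne
    have := hR0 (subset_tsupport _ hne)
    rw [Metric.mem_closedBall, dist_zero_right, Real.norm_eq_abs] at this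
    linarith
  have hIntg : Integrable σ := hσ.integrable_of_hasCompactSupport hc
  have hd : ∀ x, HasDerivAt (fun x => ∫ y in (-R)..x, σ y) (σ x) x := fun x =>
    intervalIntegral.integral_hasDerivAt_right (hσ.intervalIntegrable _ _)
      (hσ.stronglyMeasurableAtFilter _ _) hσ.continuousAt
  have hde : deriv (fun x => ∫ y in (-R)..x, σ y) = σ := funext fun x => (hd x).deriv
  refine ⟨fun x => ∫ y in (-R)..x, σ y, ?_, ?_, hde⟩
  · rw [contDiff_one_iff_deriv, hde]
    exact ⟨fun x => (hd x).differentiableAt, hσ⟩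
  · refine HasCompactSupport.intro (isCompact_Icc (a := -R) (b := R)) fun x hx => ?_
    have hx2 : R < |x| := by
      by_contra hcon
      exact hx (abs_le.1 (not_lt.1 hcon))
    rcases le_total x 0 with h | h
    · rw [abs_of_nonpos h] at hx2
      have : ∫ y in (-R)..x, σ y = ∫ y in (-R)..x, (0 : ℝ) := by
        refine intervalIntegral.integral_congr_ae (ae_of_all _ fun y hy => ?_)
        rw [Set.uIoc_of_ge (by linarith)] at hy
        exact hz y (by linarith [neg_le_abs y, hy.2])
      simpa using this
    · rw [abs_of_nonneg h] at hx2
      rw [intervalIntegral.integral_eq_integral_of_support_subset, h0]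
      intro y hy
      have hyR : |y| < R := by
        by_contra hcon; exact hy (hz y (not_lt.1 hcon))
      exact ⟨(abs_lt.1 hyR).1, by linarith [(abs_lt.1 hyR).2]⟩

lemma du_bois {g w : ℝ → ℝ} (hg : LocallyIntegrable g) (hw : Continuous w)
    (h : ∀ η : ℝ → ℝ, ContDiff ℝ 1 η → HasCompactSupport η →
      ∫ x, g x * deriv η x = - ∫ x, w x * η x) :
    ∃ c, ∀ᵐ x, g x = c + ∫ y in (0 : ℝ)..x, w y := by
  set F : ℝ → ℝ := fun x => ∫ y in (0 : ℝ)..x, w y with hF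
  have hFd : ∀ x, HasDerivAt F (w x) x := fun x =>
    intervalIntegral.integral_hasDerivAt_right (hw.intervalIntegrable _ _)
      (hw.stronglyMeasurableAtFilter _ _) hw.continuousAt
  have hFc : Continuous F := continuous_iff_continuousAt.2 fun x => (hFd x).continuousAt
  have hG : LocallyIntegrable (fun x => g x - F x) := hg.sub hFc.locallyIntegrable
  have hGi : ∀ η : ℝ → ℝ, Continuous η → HasCompactSupport η →
      Integrable (fun x => (g x - F x) * η x) := fun η hη hc => by
    have := hG.integrable_smul_right_of_hasCompactSupport hη hc
    simpa [smul_eq_mul] using this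
  have hgi : ∀ η : ℝ → ℝ, Continuous η → HasCompactSupport η →
      Integrable (fun x => g x * η x) := fun η hη hc => by
    have := hg.integrable_smul_right_of_hasCompactSupport hη hc
    simpa [smul_eq_mul] using this
  have hz : ∀ η : ℝ → ℝ, ContDiff ℝ 1 η → HasCompactSupport η →
      ∫ x, (g x - F x) * deriv η x = 0 := by
    intro η h1 hc
    have cη := h1.continuous
    have cd := h1.continuous_deriv le_rfl
    have i1 : Integrable (fun x => F x * deriv η x) :=
      (hFc.mul cd).integrable_of_hasCompactSupport hc.deriv.mul_left
    have i2 : Integrable (fun x => w x * η x) :=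
      (hw.mul cη).integrable_of_hasCompactSupport hc.mul_left
    have i3 : Integrable (fun x => F x * η x) :=
      (hFc.mul cη).integrable_of_hasCompactSupport hc.mul_left
    have ibp := integral_mul_deriv_eq_deriv_mul_of_integrable (u := F) (v := η) (u' := w)
      (v' := deriv η) (fun x _ => hFd x)
      (fun x _ => ((h1.differentiable (by norm_num)) x).hasDerivAt) i1 i2 i3
    simp only [sub_mul]
    rw [integral_sub (hgi _ cd hc.deriv) i1, h η h1 hc, ibp]
    ring
  let b : ContDiffBump (0 : ℝ) := default
  set ρ := b.normed volume with hρ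
  have cρ : Continuous ρ := b.continuous_normed
  have sρ : HasCompactSupport ρ := b.hasCompactSupport_normed
  have iρ : ∫ x, ρ x = 1 := b.integral_normed
  set c := ∫ x, (g x - F x) * ρ x with hcdef
  refine ⟨c, ?_⟩
  have hae : ∀ᵐ x, (g x - F x) - c = 0 := by
    refine ae_eq_zero_of_integral_contDiff_smul_eq_zero (hG.sub (locallyIntegrable_const c)) ?_
    intro η hη hc
    have cη : Continuous η := hη.continuous
    have iη : Integrable η := cη.integrable_of_hasCompactSupport hc
    have iρ' : Integrable ρ := cρ.integrable_of_hasCompactSupport sρ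
    obtain ⟨ζ, z1, z2, z3⟩ := exists_compact_primitive (σ := fun x => η x - (∫ y, η y) * ρ x)
      (cη.sub (continuous_const.mul cρ)) (hc.sub sρ.mul_left) (by
        rw [integral_sub iη (iρ'.const_mul _), integral_const_mul, iρ]; ring)
    have := hz ζ z1 z2
    rw [z3] at this
    have e1 : ∀ x, (g x - F x) * (η x - (∫ y, η y) * ρ x)
      = (g x - F x) * η x - (∫ y, η y) * ((g x - F x) * ρ x) := fun x => by ring
    simp only [e1] at this
    rw [integral_sub (hGi η cη hc) ((hGi ρ cρ sρ).const_mul _), integral_const_mul, ← hcdef] at this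
    have e2 : ∀ x, η x • ((g x - F x) - c) = (g x - F x) * η x - c * η x := fun x => by
      simp only [smul_eq_mul]; ring
    simp only [e2]
    rw [integral_sub (hGi η cη hc) (iη.const_mul _), integral_const_mul]
    linarith
  filter_upwards [hae] with x hx
  linarith
open Filter Topology

lemma ode_forward {u v W : ℝ → ℝ} (hW : Continuous W) (hu : ∀ x, HasDerivAt u (v x) x)
    (hv : ∀ x, HasDerivAt v (W x * u x) x) {a : ℝ} (h0 : u a = 0) (h1 : v a = 0) :
    ∀ x, a ≤ x → u x = 0 := by
  intro b hb
  obtain ⟨K, hK⟩ := (isCompact_Icc (a := a) (b := b)).exists_bound_of_continuousOn hW.continuousOn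
  have hd : ∀ x, HasDerivAt (fun x => (u x, v x)) (v x, W x * u x) x := fun x =>
    (hu x).prodMk (hv x)
  have := eq_zero_of_abs_deriv_le_mul_abs_self_of_eq_zero_right (K := max 1 K) (a := a) (b := b)
    (f := fun x => (u x, v x)) (f' := fun x => (v x, W x * u x))
    (fun x _ => (hd x).continuousAt.continuousWithinAt) (fun x _ => (hd x).hasDerivWithinAt)
    (by simp [h0, h1]) (fun x hx => by
      have hKx := hK x ⟨hx.1, hx.2.le⟩
      rw [Prod.norm_def, Prod.norm_def]
      simp only [norm_mul]
      have hM : 0 ≤ max ‖u x‖ ‖v x‖ := le_max_of_le_left (norm_nonneg _)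
      refine max_le ?_ ?_
      · calc ‖v x‖ ≤ 1 * max ‖u x‖ ‖v x‖ := by rw [one_mul]; exact le_max_right _ _
          _ ≤ _ := mul_le_mul_of_nonneg_right (le_max_left _ _) hM
      · exact mul_le_mul (hKx.trans (le_max_right _ _)) (le_max_left _ _) (norm_nonneg _)
          (le_max_of_le_left zero_le_one)) b ⟨hb, le_rfl⟩
  exact (Prod.mk.inj this).1

lemma ode_zero {u v W : ℝ → ℝ} (hW : Continuous W) (hu : ∀ x, HasDerivAt u (v x) x)
    (hv : ∀ x, HasDerivAt v (W x * u x) x) {a : ℝ} (h0 : u a = 0) (h1 : v a = 0) :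
    ∀ x, u x = 0 := by
  intro x
  rcases le_total a x with h | h
  · exact ode_forward hW hu hv h0 h1 x h
  · have := ode_forward (u := fun x => u (-x)) (v := fun x => -v (-x)) (W := fun x => W (-x))
      (a := -a) (hW.comp continuous_neg)
      (fun y => ((hu (-y)).comp y (hasDerivAt_neg y)).congr_deriv (by ring))
      (fun y => ((hv (-y)).comp y (hasDerivAt_neg y)).neg.congr_deriv (by ring))
      (by simpa using h0) (by simpa using h1) (-x) (by linarith)
    simpa using this

lemma exists_ground {lam V α m : ℝ} (hlam : 0 ≤ lam)
    (hm : ∀ φ : ℝ → ℂ, InSigma1 φ → m ≤ energy lam V α φ)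
    (hseq : ∀ ε > 0, ∃ φ : ℝ → ℝ, Differentiable ℝ φ ∧ (∀ x, 0 < φ x) ∧
      InSigma1 (fun ξ => (φ ξ : ℂ)) ∧ energy lam V α (fun ξ => (φ ξ : ℂ)) < m + ε) :
    ∃ u : ℝ → ℝ, Differentiable ℝ u ∧ (∀ x, 0 < u x) ∧ InSigma1 (fun ξ => (u ξ : ℂ)) ∧
      energy lam V α (fun ξ => (u ξ : ℂ)) = m := by
  obtain ⟨φ, u, g, hφ, H, hu0, huc, hui, hM, hQ⟩ := exists_limit hlam hm hseq
  set K := QQ V α u g - 2 * m with hK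
  set W : ℝ → ℝ := fun x => x ^ 2 + lam * u x ^ 2 - V * Real.cos (α * x) ^ 2 + K with hW
  have hWc : Continuous W := by fun_prop
  have hgl : LocallyIntegrable g := H.hu.d.locallyIntegrable (by norm_num)
  obtain ⟨c, hc⟩ := du_bois (g := g) (w := fun x => W x * u x) hgl (hWc.mul huc) (by
    intro η h1 hcs
    have EL := euler_lagrange (V := V) (α := α) hlam hm hφ H huc hM hQ h1 hcs
    have cη := h1.continuous
    have i1 : Integrable (fun x => (x * u x) * (x * η x)) :=
      ((continuous_id.mul huc).mul (continuous_id.mul cη)).integrable_of_hasCompactSupport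
        (hcs.mul_left.mul_left)
    have i2 : Integrable (fun x => (Real.cos (α * x) * u x) * (Real.cos (α * x) * η x)) := by
      have hcc : Continuous fun x : ℝ => Real.cos (α * x) := by fun_prop
      exact ((hcc.mul huc).mul (hcc.mul cη)).integrable_of_hasCompactSupport
        (hcs.mul_left.mul_left)
    have i3 : Integrable (fun x => u x ^ 3 * η x) :=
      ((huc.pow 3).mul cη).integrable_of_hasCompactSupport hcs.mul_left
    have i4 : Integrable (fun x => u x * η x) :=
      (huc.mul cη).integrable_of_hasCompactSupport hcs.mul_left
    have e : ∀ x, W x * u x * η x = (((x * u x) * (x * η x) + lam * (u x ^ 3 * η x))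
        - V * ((Real.cos (α * x) * u x) * (Real.cos (α * x) * η x))) + K * (u x * η x) := by
      intro x; simp only [hW]; ring
    simp only [e]
    have j1 : Integrable (fun x => (x * u x) * (x * η x) + lam * (u x ^ 3 * η x)) :=
      i1.add (i3.const_mul _)
    have j2 : Integrable (fun x => ((x * u x) * (x * η x) + lam * (u x ^ 3 * η x))
        - V * ((Real.cos (α * x) * u x) * (Real.cos (α * x) * η x))) := j1.sub (i2.const_mul _)
    rw [integral_add j2 (i4.const_mul _), integral_sub j1 (i2.const_mul _),
      integral_add i1 (i3.const_mul _)]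
    simp only [integral_const_mul]
    unfold BB at EL
    linarith)
  set v : ℝ → ℝ := fun x => c + ∫ y in (0 : ℝ)..x, W y * u y with hv
  have hwc : Continuous fun x => W x * u x := hWc.mul huc
  have hvd : ∀ x, HasDerivAt v (W x * u x) x := fun x =>
    (intervalIntegral.integral_hasDerivAt_right (hwc.intervalIntegrable _ _)
      (hwc.stronglyMeasurableAtFilter _ _) hwc.continuousAt).const_add c
  have hvc : Continuous v := continuous_iff_continuousAt.2 fun x => (hvd x).continuousAt
  have hue : u = fun x => u 0 + ∫ y in (0 : ℝ)..x, v y := by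
    funext x
    rw [hui x]
    congr 1
    exact intervalIntegral.integral_congr_ae (hc.mono fun y hy _ => hy)
  have hud : ∀ x, HasDerivAt u (v x) x := by
    intro x
    rw [hue]
    exact (intervalIntegral.integral_hasDerivAt_right (hvc.intervalIntegrable _ _)
      (hvc.stronglyMeasurableAtFilter _ _) hvc.continuousAt).const_add (u 0)
  have hdu : deriv u = v := funext fun x => (hud x).deriv
  have hdiff : Differentiable ℝ u := fun x => (hud x).differentiableAt
  have hgv : g =ᵐ[volume] v := hc
  have HPu : HP u (deriv u) := by
    rw [hdu]
    exact ⟨H.hu.m, (memLp_congr_ae hgv).1 H.hu.d, H.hu.x, H.hu.q⟩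
  have hQQ : QQ V α u (deriv u) = QQ V α u g := by
    unfold QQ
    rw [hdu]
    have : ∫ x, v x ^ 2 = ∫ x, g x ^ 2 := integral_congr_ae (hgv.mono fun x hx => by
      simp only [hx])
    rw [this]
  have hpos : ∀ x, 0 < u x := by
    intro x
    rcases (hu0 x).eq_or_lt with h | h
    · exfalso
      have h1 : v x = 0 := by
        refine IsLocalMin.hasDerivAt_eq_zero (f := u) (a := x) (Eventually.of_forall fun y => ?_)
          (hud x)
        rw [← h]; exact hu0 y
      have hz := ode_zero hWc hud hvd h.symm h1
      have : MM u = 0 := by simp [MM, hz]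
      rw [this] at hM
      exact zero_ne_one hM
    · exact h
  refine ⟨u, hdiff, hpos, ⟨(inX_ofReal hdiff).2 HPu, ?_⟩, ?_⟩
  · rw [mass_ofReal, hM]
  · rw [energy_ofReal _ _ _ hdiff, hQQ, hQ]

lemma energy_lower {lam V α : ℝ} (hlam : 0 ≤ lam) {ψ : ℝ → ℂ} (hψ : InSigma1 ψ) :
    -|V| ≤ energy lam V α ψ := by
  obtain ⟨⟨-, i0, -, -, -⟩, h1⟩ := hψ
  have a1 : 0 ≤ ∫ ξ : ℝ, ‖deriv ψ ξ‖ ^ 2 := integral_nonneg fun _ => by positivity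
  have a2 : 0 ≤ ∫ ξ : ℝ, ξ ^ 2 * ‖ψ ξ‖ ^ 2 := integral_nonneg fun _ => by positivity
  have a3 : 0 ≤ lam / 2 * ∫ ξ : ℝ, ‖ψ ξ‖ ^ 4 :=
    mul_nonneg (by linarith) (integral_nonneg fun _ => by positivity)
  have a4 : 0 ≤ ∫ ξ : ℝ, Real.cos (α * ξ) ^ 2 * ‖ψ ξ‖ ^ 2 :=
    integral_nonneg fun _ => by positivity
  have a5 : ∫ ξ : ℝ, Real.cos (α * ξ) ^ 2 * ‖ψ ξ‖ ^ 2 ≤ 1 := by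
    rw [← h1]
    refine integral_mono (cos_integrable α i0) i0 fun x => ?_
    exact mul_le_of_le_one_left (by positivity) (Real.cos_sq_le_one _)
  have a6 : V * ∫ ξ : ℝ, Real.cos (α * ξ) ^ 2 * ‖ψ ξ‖ ^ 2 ≤ |V| :=
    (mul_le_mul_of_nonneg_right (le_abs_self V) a4).trans
      (mul_le_of_le_one_right (abs_nonneg V) a5)
  unfold energy
  linarith

lemma phase_inv (lam V α : ℝ) {ψ : ℝ → ℂ} (hψ : InSigma1 ψ) {c : ℂ} (hc : ‖c‖ = 1) :
    InSigma1 (fun x => c * ψ x) ∧ energy lam V α (fun x => c * ψ x) = energy lam V α ψ := by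
  obtain ⟨⟨hd, h0, h1, h2, h3⟩, h4⟩ := hψ
  have hde : ∀ x, deriv (fun x => c * ψ x) x = c * deriv ψ x := fun x =>
    ((hd x).hasDerivAt.const_mul c).deriv
  unfold InSigma1 InX energy
  simp only [hde, norm_mul, hc, one_mul]
  exact ⟨⟨⟨hd.const_mul c, h0, h1, h2, h3⟩, h4⟩, trivial⟩

lemma refl_inv (lam V α : ℝ) {ψ : ℝ → ℂ} (hψ : InSigma1 ψ) :
    InSigma1 (fun x => ψ (-x)) ∧ energy lam V α (fun x => ψ (-x)) = energy lam V α ψ := by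
  obtain ⟨⟨hd, h0, h1, h2, h3⟩, h4⟩ := hψ
  have hde : ∀ x, ‖deriv (fun x => ψ (-x)) x‖ ^ 2 = ‖deriv ψ (-x)‖ ^ 2 := fun x => by
    rw [deriv_comp_neg, norm_neg]
  have e1 := integral_neg_eq_self (fun x : ℝ => ‖ψ x‖ ^ 2) volume
  have e2 := integral_neg_eq_self (fun x : ℝ => ‖deriv ψ x‖ ^ 2) volume
  have e3 := integral_neg_eq_self (fun x : ℝ => x ^ 2 * ‖ψ x‖ ^ 2) volume
  have e4 := integral_neg_eq_self (fun x : ℝ => ‖ψ x‖ ^ 4) volume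
  have e5 := integral_neg_eq_self (fun x : ℝ => Real.cos (α * x) ^ 2 * ‖ψ x‖ ^ 2) volume
  simp only [mul_neg, Real.cos_neg, even_two, Even.neg_pow] at e1 e2 e3 e4 e5
  unfold InSigma1 InX energy
  simp only [hde, e1, e2, e3, e4, e5]
  refine ⟨⟨⟨hd.comp differentiable_neg, h0.comp_neg, h1.comp_neg, ?_, h3.comp_neg⟩, h4⟩, trivial⟩
  have := h2.comp_neg
  simpa using this

lemma exists_minimizer (lam V α : ℝ) (hlam : 0 ≤ lam) :
    ∃ u : ℝ → ℝ, Differentiable ℝ u ∧ (∀ x, 0 < u x) ∧ InSigma1 (fun ξ => (u ξ : ℂ)) ∧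
      ∀ φ : ℝ → ℂ, InSigma1 φ → energy lam V α (fun ξ => (u ξ : ℂ)) ≤ energy lam V α φ := by
  obtain ⟨w, hw, hwp, hwS⟩ := exists_trial
  set S : Set ℝ := {e | ∃ ψ : ℝ → ℂ, InSigma1 ψ ∧ energy lam V α ψ = e} with hS
  have hne : S.Nonempty := ⟨_, _, hwS, rfl⟩
  have hbd : BddBelow S := ⟨-|V|, by rintro e ⟨ψ, hψ, rfl⟩; exact energy_lower hlam hψ⟩
  have hm : ∀ φ : ℝ → ℂ, InSigma1 φ → sInf S ≤ energy lam V α φ := fun φ hφ =>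
    csInf_le hbd ⟨φ, hφ, rfl⟩
  obtain ⟨u, h1, h2, h3, h4⟩ := exists_ground (m := sInf S) hlam hm (by
    intro ε hε
    obtain ⟨e, ⟨ψ, hψ, rfl⟩, hlt⟩ := exists_lt_of_csInf_lt hne
      (show sInf S < sInf S + ε / 2 by linarith)
    set d := |energy lam V α (fun ξ => (w ξ : ℂ)) - energy lam V α ψ| with hd
    have hd0 : 0 ≤ d := abs_nonneg _
    set t := min (1 / 2) (ε / 2 / (d + 1)) with ht
    have ht0 : 0 < t := by positivity
    have ht1 : t < 1 := (min_le_left _ _).trans_lt (by norm_num)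
    have htd : t * d ≤ ε / 2 := by
      have h : t ≤ ε / 2 / (d + 1) := min_le_right _ _
      rw [le_div_iff₀ (by positivity)] at h
      nlinarith
    obtain ⟨φ, p1, p2, p3, D, -, p5, -, p7⟩ :=
      convex_mix (V := V) (α := α) hlam ht0 ht1 hψ hw hwS hwp
    refine ⟨φ, p1, p2, p3, ?_⟩
    have hD : 0 ≤ ∫ x, D x := integral_nonneg p5
    have hle : t * (energy lam V α (fun ξ => (w ξ : ℂ)) - energy lam V α ψ) ≤ t * d :=
      mul_le_mul_of_nonneg_left (le_abs_self _) ht0.le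
    nlinarith)
  exact ⟨u, h1, h2, h3, fun φ hφ => by rw [h4]; exact hm φ hφ⟩

/-- a unimodular constant relating two positive functions is one -/
lemma unimod_pos {c : ℂ} (hc : ‖c‖ = 1) {a b : ℝ} (ha : 0 < a) (hb : 0 < b)
    (h : (a : ℂ) = c * b) : a = b := by
  have := congrArg norm h
  rw [norm_mul, hc, one_mul, Complex.norm_real, Complex.norm_real, Real.norm_eq_abs,
    Real.norm_eq_abs, abs_of_pos ha, abs_of_pos hb] at this
  exact this

theorem ground_state_unique_up_to_phase (lam V₀ α : ℝ) (hlam : 0 ≤ lam) :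
    ∃! ψmin : ℝ → ℝ,
      (∀ ξ : ℝ, 0 < ψmin ξ) ∧ (∀ ξ : ℝ, ψmin (-ξ) = ψmin ξ) ∧
      InSigma1 (fun ξ => (ψmin ξ : ℂ)) ∧
      groundStates lam V₀ α =
        {ψ | ∃ θ : ℝ, ψ = fun ξ => Complex.exp (Complex.I * θ) * (ψmin ξ : ℂ)} := by
  obtain ⟨u, hu, hpos, hS, hmin⟩ := exists_minimizer lam V₀ α hlam
  have hnorm : ∀ θ : ℝ, ‖Complex.exp (Complex.I * θ)‖ = 1 := fun θ => by
    rw [mul_comm]; exact Complex.norm_exp_ofReal_mul_I θ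
  refine ⟨u, ⟨hpos, ?_, hS, ?_⟩, ?_⟩
  · intro ξ
    obtain ⟨hS2, hE2⟩ := refl_inv lam V₀ α hS
    obtain ⟨c, hc, hcu⟩ := unique_phase hlam hu hS hpos hmin hS2 hE2.le
    exact unimod_pos hc (hpos _) (hpos _) (congrFun hcu ξ)
  · ext ψ
    constructor
    · rintro ⟨hψ, hE⟩
      obtain ⟨c, hc, hcu⟩ := unique_phase hlam hu hS hpos hmin hψ (hE _ hS)
      refine ⟨Complex.arg c, ?_⟩
      have h := Complex.norm_mul_exp_arg_mul_I c
      rw [hc, Complex.ofReal_one, one_mul, mul_comm] at h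
      rw [h]
      exact hcu
    · rintro ⟨θ, rfl⟩
      obtain ⟨h1, h2⟩ := phase_inv lam V₀ α hS (hnorm θ)
      exact ⟨h1, fun φ hφ => by rw [h2]; exact hmin φ hφ⟩
  · rintro w ⟨hwp, -, hwS, hwG⟩
    have hmem : (fun ξ => (w ξ : ℂ)) ∈ groundStates lam V₀ α := by
      rw [hwG]
      exact ⟨0, by simp⟩
    obtain ⟨c, hc, hcu⟩ := unique_phase hlam hu hS hpos hmin hwS (hmem.2 _ hS)
    funext ξ
    exact unimod_pos hc (hwp ξ) (hpos ξ) (congrFun hcu ξ)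
end
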